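/- Let V be a PVAS of dimension d with edge set E, let →_V* be its reachability relation, and let S ⊆ ℕ^d × ℕ^d be a semilinear relation. Then →_V* ∩ S is a finite union of relations b_i + P_i, where each b_i ∈ ℕ^d × ℕ^d and each P_i ⊆ ℕ^d × ℕ^d is a smooth periodic relation such that for every linear relation L ⊆ b_i + P_i there exists p ∈ P_i such that p + L is flattable with respect to V. -/

import Mathlib

/-- Vectors of naturals of dimension `d`. -/
abbrev NVec (d : ℕ) := Fin d → ℕ

/-- A priority vector addition system (PVAS) of dimension `d`: a finite set of edges,
each edge having an update vector in `ℤ^d` and a test level `g(e) ∈ {0,…,d}`. -/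
structure PVAS (d : ℕ) where
  E : Type
  fintypeE : Fintype E
  upd : E → Fin d → ℤ
  test : E → ℕ
  test_le : ∀ e, test e ≤ d

namespace PVAS

variable {d : ℕ} (V : PVAS d)

/-- The step relation induced by an edge `e`: `x →_e x'` iff the first `test e`
counters of `x` are `0` and `x' = x + upd e` (which must stay in `ℕ^d`). -/
def StepE (e : V.E) (x x' : NVec d) : Prop :=
  (∀ j : Fin d, (j : ℕ) < V.test e → x j = 0) ∧
    ∀ i : Fin d, (x' i : ℤ) = (x i : ℤ) + V.upd e i

/-- The one-step relation: union of the `→_e`. -/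
def Step (x x' : NVec d) : Prop := ∃ e : V.E, V.StepE e x x'

/-- The reachability relation `→_V*`. -/
def Reach : NVec d → NVec d → Prop := Relation.ReflTransGen V.Step

/-- For a word `w = e₁ … e_k` of edges, `→_w := →_{e₁} ∘ … ∘ →_{e_k}`. -/
def StepWord : List V.E → NVec d → NVec d → Prop
  | [] => Eq
  | e :: w => fun x z => ∃ y, V.StepE e x y ∧ StepWord w y z

end PVAS

/-- Composition of a finite list of relations. -/
def compList {α : Type*} : List (α → α → Prop) → α → α → Prop
  | [] => Eq
  | R :: Rs => fun x z => ∃ y, R x y ∧ compList Rs y z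

/-- A set in a commutative monoid is linear if it is of the form
`b + ℕ·p₁ + … + ℕ·p_r`. -/
def IsLinSet {M : Type*} [AddCommMonoid M] (L : Set M) : Prop :=
  ∃ (b : M) (r : ℕ) (p : Fin r → M),
    L = {x | ∃ c : Fin r → ℕ, x = b + ∑ i, c i • p i}

/-- A set is semilinear if it is a finite union of linear sets. -/
def IsSemilinSet {M : Type*} [AddCommMonoid M] (S : Set M) : Prop :=
  ∃ (n : ℕ) (L : Fin n → Set M), (∀ i, IsLinSet (L i)) ∧ S = ⋃ i, L i

/-- Pairs of natural vectors: relations on `ℕ^d`, viewed as subsets of `ℕ^{2d}`. -/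
abbrev PairN (d : ℕ) := NVec d × NVec d

/-- Pairs of rational vectors: `ℚ^d × ℚ^d ≅ ℚ^{2d}`. -/
abbrev PairQ (d : ℕ) := (Fin d → ℚ) × (Fin d → ℚ)

/-- Coordinatewise cast of a pair of natural vectors into rational vectors. -/
def castPQ {d : ℕ} (x : PairN d) : PairQ d :=
  (fun i => (x.1 i : ℚ), fun i => (x.2 i : ℚ))

/-- A set in a commutative monoid is periodic if it contains `0` and is closed
under addition. -/
def IsPeriodic {M : Type*} [AddCommMonoid M] (P : Set M) : Prop :=
  0 ∈ P ∧ ∀ p ∈ P, ∀ q ∈ P, p + q ∈ P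

/-- `v ∈ ℚ^{2d}` is a direction of `P ⊆ ℕ^{2d}`: some full line `x + ℕ·(n v)` with
`n > 0` is contained in `P`. -/
def IsDirection {d : ℕ} (P : Set (PairN d)) (v : PairQ d) : Prop :=
  ∃ n : ℕ, 0 < n ∧ ∃ x : PairN d, ∀ k : ℕ, ∃ p ∈ P,
    castPQ p = castPQ x + ((k * n : ℕ) : ℚ) • v

/-- The set of directions of `P`. -/
def dirSet {d : ℕ} (P : Set (PairN d)) : Set (PairQ d) := {v | IsDirection P v}

/-- A cone in `ℚ^{2d}`: contains `0`, closed under addition and under multiplication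
by positive rationals. -/
def IsCone {d : ℕ} (C : Set (PairQ d)) : Prop :=
  0 ∈ C ∧ (∀ u ∈ C, ∀ v ∈ C, u + v ∈ C) ∧ ∀ u ∈ C, ∀ l : ℚ, 0 < l → l • u ∈ C

/-- Definable subsets of `ℚ^{2d}`: finite Boolean combinations of half-spaces
(equivalently, first-order definable over `(ℚ,+,≥)`). -/
inductive IsQDef {d : ℕ} : Set (PairQ d) → Prop
  | halfspace (a : PairQ d) (b : ℚ) :
      IsQDef {x | b ≤ (∑ i, a.1 i * x.1 i) + ∑ i, a.2 i * x.2 i}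
  | compl {S : Set (PairQ d)} : IsQDef S → IsQDef Sᶜ
  | inter {S T : Set (PairQ d)} : IsQDef S → IsQDef T → IsQDef (S ∩ T)

/-- `P` is asymptotically definable if its set of directions is a definable cone. -/
def AsymptoticallyDefinable {d : ℕ} (P : Set (PairN d)) : Prop :=
  IsCone (dirSet P) ∧ IsQDef (dirSet P)

/-- `P` is well-directed: every sequence of elements of `P` has an infinite
subsequence `(p_{m_k})` such that `p_{m_j} + ℕ·(p_{m_k} − p_{m_j}) ⊆ P` for `j ≤ k`. -/
def WellDirected {d : ℕ} (P : Set (PairN d)) : Prop :=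
  ∀ p : ℕ → PairN d, (∀ m, p m ∈ P) →
    ∃ φ : ℕ → ℕ, StrictMono φ ∧
      ∀ j k : ℕ, j ≤ k → ∀ t : ℕ, ∃ q ∈ P,
        castPQ q = castPQ (p (φ j)) + (t : ℚ) • (castPQ (p (φ k)) - castPQ (p (φ j)))

/-- `P` is smooth if it is asymptotically definable and well-directed. -/
def IsSmooth {d : ℕ} (P : Set (PairN d)) : Prop :=
  AsymptoticallyDefinable P ∧ WellDirected P

/-- A relation `R ⊆ ℕ^d × ℕ^d` is flattable with respect to the PVAS `V`: it is
contained in `→_{w₁}* ∘ … ∘ →_{w_r}*` for finitely many words of edges. -/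
def Flattable {d : ℕ} (V : PVAS d) (R : Set (PairN d)) : Prop :=
  ∃ ws : List (List V.E),
    ∀ p ∈ R, compList (ws.map fun w => Relation.ReflTransGen (V.StepWord w)) p.1 p.2

open Submodule
set_option linter.unusedSectionVars false
set_option linter.unusedSimpArgs false
set_option linter.unusedVariables false
set_option linter.deprecated false


section Cones
variable {E F : Type} [AddCommGroup E] [Module ℚ E] [AddCommGroup F] [Module ℚ F]

theorem pc_smul {U : PointedCone ℚ E} {x : E} {c : ℚ} (hc : 0 ≤ c) (hx : x ∈ U) : c • x ∈ U :=
  PointedCone.smul_mem U hc hx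

theorem mem_infW {U : PointedCone ℚ E} {W : Submodule ℚ E} {x : E} :
    x ∈ U ⊓ (W : PointedCone ℚ E) ↔ x ∈ U ∧ x ∈ W := Iff.rfl

/-- build a cone -/
def mkCone (S : Set E) (h0 : (0:E) ∈ S) (ha : ∀ a ∈ S, ∀ b ∈ S, a + b ∈ S)
    (hs : ∀ c : ℚ, 0 < c → ∀ a ∈ S, c • a ∈ S) : PointedCone ℚ E where
  carrier := S
  zero_mem' := h0
  add_mem' := fun {a b} h1 h2 => ha a h1 b h2
  smul_mem' := by
    rintro ⟨c, hc⟩ a h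
    rcases eq_or_lt_of_le hc with h' | h'
    · subst h'
      change (0:ℚ) • a ∈ S
      simpa using h0
    · exact hs c h' a h

theorem mem_mkCone {S : Set E} {h0 ha hs} {x : E} : x ∈ mkCone S h0 ha hs ↔ x ∈ S := Iff.rfl

/-- algebraic closure of a cone -/
def clC (U : PointedCone ℚ E) : PointedCone ℚ E :=
  mkCone {v | ∃ m ∈ U, ∀ ε : ℚ, 0 < ε → v + ε • m ∈ U}
    ⟨0, U.zero_mem, fun ε _ => by simp⟩
    (by
      rintro a ⟨m, hm, h⟩ b ⟨m', hm', h'⟩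
      refine ⟨m + m', U.add_mem hm hm', fun ε he => ?_⟩
      have := U.add_mem (h ε he) (h' ε he)
      convert this using 1
      module)
    (by
      rintro c hc a ⟨m, hm, h⟩
      refine ⟨m, hm, fun ε he => ?_⟩
      have := pc_smul hc.le (h (ε / c) (by positivity))
      convert this using 1
      rw [smul_add, smul_smul]
      congr 2
      field_simp)

theorem mem_clC {U : PointedCone ℚ E} {v : E} :
    v ∈ clC U ↔ ∃ m ∈ U, ∀ ε : ℚ, 0 < ε → v + ε • m ∈ U := Iff.rfl

theorem le_clC (U : PointedCone ℚ E) : U ≤ clC U := fun v hv =>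
  ⟨0, U.zero_mem, fun ε _ => by simpa using hv⟩

theorem clC_mono {U D : PointedCone ℚ E} (h : U ≤ D) : clC U ≤ clC D := by
  rintro v ⟨m, hm, hh⟩
  exact ⟨m, h hm, fun ε he => h (hh ε he)⟩

variable [FiniteDimensional ℚ E] [FiniteDimensional ℚ F]

theorem exists_interior (U : PointedCone ℚ E) :
    ∃ m ∈ U, ∀ u ∈ U, ∃ N : ℚ, 0 < N ∧ N • m - u ∈ U := by
  have hfg : (span ℚ (U : Set E)).FG := IsNoetherian.noetherian _
  obtain ⟨s, hs, hsp⟩ := Submodule.fg_span_iff_fg_span_finset_subset (U : Set E) |>.1 hfg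
  refine ⟨∑ b ∈ s, b, U.sum_mem fun b hb => hs hb, fun u hu => ?_⟩
  have hu' : u ∈ span ℚ (s : Set E) := hsp ▸ subset_span hu
  obtain ⟨c, -, hc⟩ := Submodule.mem_span_finset.1 hu'
  refine ⟨1 + ∑ b ∈ s, |c b|, by positivity, ?_⟩
  rw [← hc, Finset.smul_sum, ← Finset.sum_sub_distrib]
  refine U.sum_mem fun b hb => ?_
  rw [← sub_smul]
  refine pc_smul ?_ (hs hb)
  have := Finset.single_le_sum (f := fun b => |c b|) (fun i _ => abs_nonneg _) hb
  have := le_abs_self (c b)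
  simp at *
  linarith

theorem clC_interior {U : PointedCone ℚ E} {m : E}
    (hm : ∀ u ∈ U, ∃ N : ℚ, 0 < N ∧ N • m - u ∈ U) {v : E} (hv : v ∈ clC U)
    {ε : ℚ} (he : 0 < ε) : v + ε • m ∈ U := by
  obtain ⟨m', hm', h⟩ := hv
  obtain ⟨N, hN, h2⟩ := hm m' hm'
  have h3 := U.add_mem (h (ε / N) (by positivity)) (pc_smul (c := ε / N) (by positivity) h2)
  convert h3 using 1
  rw [smul_sub, smul_smul, div_mul_cancel₀ _ hN.ne']
  abel

theorem clC_clC (U : PointedCone ℚ E) : clC (clC U) ≤ clC U := by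
  rintro v ⟨m, hm, h⟩
  obtain ⟨m1, hm1, hi⟩ := exists_interior U
  have h1 : m + m1 ∈ U := by
    have := clC_interior hi hm (ε := 1) one_pos
    simpa using this
  refine ⟨m + m1, h1, fun ε he => ?_⟩
  have := clC_interior hi (h ε he) he
  rwa [add_assoc, ← smul_add] at this

def FGcl (U : PointedCone ℚ E) : Prop :=
  ∃ K : PointedCone ℚ E, K.FG ∧ U ≤ K ∧ K ≤ clC U

theorem FGcl.between {U D : PointedCone ℚ E} (h : FGcl D) (h1 : U ≤ D) (h2 : D ≤ clC U) :
    FGcl U := by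
  obtain ⟨K, hK, h3, h4⟩ := h
  exact ⟨K, hK, h1.trans h3, h4.trans ((clC_mono h2).trans (clC_clC U))⟩

def HF (U : PointedCone ℚ E) : Prop := ∀ W : Submodule ℚ E, FGcl (U ⊓ (W : PointedCone ℚ E))

theorem FG_inf_sub {K : PointedCone ℚ E} (hK : K.FG) (W : Submodule ℚ E) :
    (K ⊓ (W : PointedCone ℚ E)).FG := by
  classical
  obtain ⟨n, g, hg⟩ := Submodule.fg_iff_exists_fin_generating_family.1 hK
  let φ : (Fin n → ℕ) →+ E :=
    { toFun := fun c => ∑ i, c i • g i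
      map_zero' := by simp
      map_add' := fun a b => by simp [add_smul, Finset.sum_add_distrib] }
  let N : AddSubmonoid (Fin n → ℕ) := W.toAddSubmonoid.comap φ
  have hN : N.FG := by
    apply AddSubmonoid.fg_of_subtractive
    intro x hx y hy
    have h1 : φ x ∈ W := hx
    have h2 : φ (x + y) ∈ W := hy
    change φ y ∈ W
    have := W.sub_mem h2 h1
    rwa [map_add, add_sub_cancel_left] at this
  obtain ⟨s, hs⟩ := hN
  refine ⟨s.image φ, le_antisymm ?_ ?_⟩
  · rw [span_le]
    intro x hx
    simp only [Finset.coe_image, Set.mem_image] at hx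
    obtain ⟨c, hc, rfl⟩ := hx
    have hcN : c ∈ N := hs ▸ AddSubmonoid.subset_closure hc
    refine ⟨?_, hcN⟩
    change (∑ i, c i • g i) ∈ K
    refine K.sum_mem fun i _ => K.nsmul_mem ?_ _
    rw [← hg]
    exact subset_span ⟨i, rfl⟩
  · rintro x ⟨hxK, hxW⟩
    have hxK : x ∈ K := hxK
    rw [← hg, mem_span_range_iff_exists_fun] at hxK
    obtain ⟨c, rfl⟩ := hxK
    -- common denominators
    let q : ℕ := ∏ i, (c i : ℚ).den
    have hq : 0 < q := Finset.prod_pos fun i _ => (c i : ℚ).den_pos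
    have hint : ∀ i, ∃ k : ℕ, (k : ℚ) = q * (c i : ℚ) := by
      intro i
      refine ⟨(∏ j ∈ Finset.univ.erase i, (c j : ℚ).den) * (c i : ℚ).num.toNat, ?_⟩
      have h1 : q = (∏ j ∈ Finset.univ.erase i, (c j : ℚ).den) * (c i : ℚ).den :=
        (Finset.prod_erase_mul _ _ (Finset.mem_univ i)).symm
      have h2 : (((c i : ℚ).num.toNat : ℕ) : ℚ) = (c i : ℚ).num := by
        have : ((c i : ℚ).num.toNat : ℤ) = (c i : ℚ).num :=
          Int.toNat_of_nonneg (Rat.num_nonneg.2 (c i).2)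
        exact_mod_cast this
      rw [h1]
      push_cast
      rw [h2, mul_assoc, Rat.den_mul_eq_num]
    choose k hk using hint
    have e1 : φ k = (q : ℚ) • ∑ i, c i • g i := by
      change ∑ i, k i • g i = _
      rw [Finset.smul_sum]
      refine Finset.sum_congr rfl fun i _ => ?_
      rw [← Nat.cast_smul_eq_nsmul ℚ, hk, mul_smul]
      rfl
    have hkN : k ∈ N := by
      change φ k ∈ W
      rw [e1]
      exact W.smul_mem _ hxW
    have h3 : φ k ∈ span {c : ℚ // 0 ≤ c} ((s.image φ : Finset E) : Set E) := by
      rw [← hs] at hkN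
      clear hk e1
      induction hkN using AddSubmonoid.closure_induction with
      | mem y hy => exact subset_span (by simpa using ⟨y, hy, rfl⟩)
      | zero => simp
      | add a b _ _ ha hb => rw [map_add]; exact add_mem ha hb
    rw [e1] at h3
    have h4 := pc_smul (U := span {c : ℚ // 0 ≤ c} ((s.image φ : Finset E) : Set E))
      (c := (q : ℚ)⁻¹) (by positivity) h3
    rwa [smul_smul, inv_mul_cancel₀ (by positivity), one_smul] at h4

theorem HF_of_FG {K : PointedCone ℚ E} (hK : K.FG) : HF K := fun W =>
  ⟨_, FG_inf_sub hK W, le_rfl, le_clC _⟩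

theorem HF.fgcl {U : PointedCone ℚ E} (h : HF U) : FGcl U := by
  have := h ⊤
  convert this
  ext x
  simp

theorem HF.infW {U : PointedCone ℚ E} (h : HF U) (W : Submodule ℚ E) :
    HF (U ⊓ (W : PointedCone ℚ E)) := by
  intro W'
  have := h (W ⊓ W')
  rwa [PointedCone.ofSubmodule_inf, ← inf_assoc] at this

theorem HF.map {U : PointedCone ℚ E} (h : HF U) (f : E →ₗ[ℚ] F) : HF (U.map f) := by
  intro W
  obtain ⟨K, hK, h1, h2⟩ := h (W.comap f)
  refine ⟨K.map f, hK.map _, ?_, ?_⟩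
  · rintro y ⟨hy, hyW⟩
    obtain ⟨x, hx, rfl⟩ := PointedCone.mem_map.1 hy
    exact PointedCone.mem_map.2 ⟨x, h1 ⟨hx, hyW⟩, rfl⟩
  · rintro y hy
    obtain ⟨x, hx, rfl⟩ := PointedCone.mem_map.1 hy
    obtain ⟨m, hm, hh⟩ := h2 hx
    refine ⟨f m, ⟨PointedCone.mem_map.2 ⟨m, hm.1, rfl⟩, hm.2⟩, fun ε he => ?_⟩
    have h3 := hh ε he
    rw [← map_smul, ← map_add]
    exact ⟨PointedCone.mem_map.2 ⟨_, h3.1, rfl⟩, h3.2⟩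

theorem span_cone {U : PointedCone ℚ E} {x : E} (hx : x ∈ span ℚ (U : Set E)) :
    ∃ a ∈ U, ∃ b ∈ U, x = a - b := by
  induction hx using span_induction with
  | mem x h => exact ⟨x, h, 0, U.zero_mem, by simp⟩
  | zero => exact ⟨0, U.zero_mem, 0, U.zero_mem, by simp⟩
  | add x y _ _ hx hy =>
    obtain ⟨a, ha, b, hb, rfl⟩ := hx
    obtain ⟨a', ha', b', hb', rfl⟩ := hy
    exact ⟨a + a', U.add_mem ha ha', b + b', U.add_mem hb hb', by abel⟩
  | smul c x _ hx =>
    obtain ⟨a, ha, b, hb, rfl⟩ := hx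
    rcases le_total 0 c with h | h
    · exact ⟨c • a, pc_smul h ha, c • b, pc_smul h hb, by rw [smul_sub]⟩
    · exact ⟨(-c) • b, pc_smul (by linarith) hb, (-c) • a, pc_smul (by linarith) ha, by module⟩

theorem HF.fgcl_aux {U T : PointedCone ℚ E} (h : HF U) :
    ∃ K : PointedCone ℚ E, K.FG ∧ (∀ t ∈ T, t ∈ U → t ∈ K) ∧
      ∀ x ∈ K, ∃ t ∈ T, ∀ ε : ℚ, 0 < ε → x + ε • t ∈ U := by
  let U1 : PointedCone ℚ E := mkCone {u | u ∈ U ∧ ∃ w ∈ U, u + w ∈ T}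
    ⟨U.zero_mem, 0, U.zero_mem, by simp⟩
    (by
      rintro a ⟨ha, w, hw, ht⟩ b ⟨hb, w', hw', ht'⟩
      refine ⟨U.add_mem ha hb, w + w', U.add_mem hw hw', ?_⟩
      convert T.add_mem ht ht' using 1
      abel)
    (by
      rintro c hc a ⟨ha, w, hw, ht⟩
      refine ⟨pc_smul hc.le ha, c • w, pc_smul hc.le hw, ?_⟩
      rw [← smul_add]
      exact pc_smul hc.le ht)
  have hU1 : U ⊓ ((span ℚ (U1 : Set E) : Submodule ℚ E) : PointedCone ℚ E) = U1 := by
    apply le_antisymm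
    · rintro x ⟨hx, hx2⟩
      obtain ⟨a, ⟨ha, w, hw, ht⟩, b, ⟨hb, -⟩, rfl⟩ := span_cone hx2
      refine ⟨hx, b + w, U.add_mem hb hw, ?_⟩
      convert ht using 1
      abel
    · intro x hx
      exact ⟨hx.1, subset_span hx⟩
  have h1 := h (span ℚ (U1 : Set E))
  rw [hU1] at h1
  obtain ⟨K, hK, h2, h3⟩ := h1
  refine ⟨K, hK, fun t ht htU => h2 ⟨htU, 0, U.zero_mem, by simpa⟩, fun x hx => ?_⟩
  obtain ⟨m, ⟨hm, w, hw, ht⟩, hh⟩ := h3 hx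
  refine ⟨_, ht, fun ε he => ?_⟩
  rw [smul_add, ← add_assoc]
  exact U.add_mem (hh ε he).1 (pc_smul he.le hw)

theorem HF.prod {U : PointedCone ℚ E} {U' : PointedCone ℚ F} (h : HF U) (h' : HF U') :
    HF (Submodule.prod U U' : PointedCone ℚ (E × F)) := by
  intro W
  set T : PointedCone ℚ (E × F) := (Submodule.prod U U' : PointedCone ℚ (E × F)) ⊓ (W : PointedCone ℚ (E × F)) with hT
  obtain ⟨K, hK, h1, h2⟩ := h.fgcl_aux (T := T.map (LinearMap.fst ℚ E F))
  obtain ⟨K', hK', h1', h2'⟩ := h'.fgcl_aux (T := T.map (LinearMap.snd ℚ E F))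
  refine ⟨_, FG_inf_sub (hK.prod hK') W, ?_, ?_⟩
  · rintro ⟨x, y⟩ ⟨⟨hx, hy⟩, hW⟩
    refine ⟨⟨h1 _ ?_ hx, h1' _ ?_ hy⟩, hW⟩
    · exact PointedCone.mem_map.2 ⟨(x, y), ⟨⟨hx, hy⟩, hW⟩, rfl⟩
    · exact PointedCone.mem_map.2 ⟨(x, y), ⟨⟨hx, hy⟩, hW⟩, rfl⟩
  · rintro ⟨x, y⟩ ⟨⟨hx, hy⟩, hW⟩
    obtain ⟨t, ht, hh⟩ := h2 _ hx
    obtain ⟨t', ht', hh'⟩ := h2' _ hy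
    obtain ⟨t, htT, rfl⟩ := PointedCone.mem_map.1 ht
    obtain ⟨t', htT', rfl⟩ := PointedCone.mem_map.1 ht'
    refine ⟨t + t', T.add_mem htT htT', fun ε he => ⟨⟨?_, ?_⟩, ?_⟩⟩
    · change x + ε • (t.1 + t'.1) ∈ U
      have := U.add_mem (hh ε he) (pc_smul he.le htT'.1.1)
      convert this using 1
      simp [smul_add, add_assoc]
    · change y + ε • (t.2 + t'.2) ∈ U'
      have := U'.add_mem (hh' ε he) (pc_smul he.le htT.1.2)
      convert this using 1
      simp [smul_add]
      abel
    · exact W.add_mem hW (W.smul_mem _ (W.add_mem htT.2 htT'.2))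

theorem HF.sup {U U' : PointedCone ℚ E} (h : HF U) (h' : HF U') : HF (U ⊔ U') := by
  have := (h.prod h').map (LinearMap.coprod LinearMap.id LinearMap.id)
  convert this using 1
  ext x
  rw [PointedCone.mem_map, Submodule.mem_sup]
  constructor
  · rintro ⟨a, ha, b, hb, rfl⟩
    exact ⟨(a, b), ⟨ha, hb⟩, by simp⟩
  · rintro ⟨⟨a, b⟩, ⟨ha, hb⟩, rfl⟩
    exact ⟨a, ha, b, hb, by simp⟩

theorem HF_bot : HF (⊥ : PointedCone ℚ E) := HF_of_FG Submodule.fg_bot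

theorem HF_iSup {ι : Type*} [Finite ι] {U : ι → PointedCone ℚ E} (h : ∀ i, HF (U i)) :
    HF (⨆ i, U i) := by
  classical
  cases nonempty_fintype ι
  have : ∀ s : Finset ι, HF (⨆ i ∈ s, U i) := by
    intro s
    induction s using Finset.induction_on with
    | empty => simpa using HF_bot
    | insert a s ha ih => rw [Finset.iSup_insert]; exact (h a).sup ih
  simpa using this Finset.univ

theorem HF.inf {U U' : PointedCone ℚ E} (h : HF U) (h' : HF U') : HF (U ⊓ U') := by
  have := ((h.prod h').infW (LinearMap.ker (LinearMap.fst ℚ E E - LinearMap.snd ℚ E E))).map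
    (LinearMap.fst ℚ E E)
  convert this using 1
  ext x
  rw [PointedCone.mem_map]
  constructor
  · rintro ⟨ha, hb⟩
    exact ⟨(x, x), ⟨⟨ha, hb⟩, by simp [PointedCone.mem_ofSubmodule_iff]⟩, by simp⟩
  · rintro ⟨⟨a, b⟩, ⟨⟨ha, hb⟩, hab⟩, rfl⟩
    have : a = b := by
      simpa [PointedCone.mem_ofSubmodule_iff, sub_eq_zero] using hab
    subst this
    exact ⟨ha, hb⟩

theorem HF_top : HF (⊤ : PointedCone ℚ E) := by
  apply HF_of_FG
  exact Module.Finite.fg_top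

theorem HF.comap {U : PointedCone ℚ F} (h : HF U) (f : E →ₗ[ℚ] F) : HF (U.comap f) := by
  have := (((HF_top (E := E)).prod h).infW
    (LinearMap.ker (f ∘ₗ LinearMap.fst ℚ E F - LinearMap.snd ℚ E F))).map
    (LinearMap.fst ℚ E F)
  convert this using 1
  ext x
  rw [PointedCone.mem_map]
  constructor
  · intro hx
    exact ⟨(x, f x), ⟨⟨trivial, hx⟩, by simp [PointedCone.mem_ofSubmodule_iff]⟩, by simp⟩
  · rintro ⟨⟨a, b⟩, ⟨⟨ha, hb⟩, hab⟩, rfl⟩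
    have : f a = b := by
      simpa [PointedCone.mem_ofSubmodule_iff, sub_eq_zero] using hab
    subst this
    exact hb

end Cones


section HDesc
variable {E : Type} [AddCommGroup E] [Module ℚ E] [FiniteDimensional ℚ E]

theorem fourier_motzkin (s : Finset (E →ₗ[ℚ] ℚ)) (g : E) :
    ∃ s' : Finset (E →ₗ[ℚ] ℚ), ∀ x, (∀ l ∈ s', 0 ≤ l x) ↔
      ∃ t : ℚ, 0 ≤ t ∧ ∀ l ∈ s, 0 ≤ l (x - t • g) := by
  classical
  let s1 := s.filter (fun l => 0 ≤ l g)
  let s2 := ((s ×ˢ s).filter (fun p => 0 < p.1 g ∧ p.2 g < 0)).image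
    (fun p => p.1 g • p.2 - p.2 g • p.1)
  refine ⟨s1 ∪ s2, fun x => ⟨fun h => ?_, ?_⟩⟩
  · have h1 : ∀ l ∈ s, 0 ≤ l g → 0 ≤ l x := fun l hl hg =>
      h l (Finset.mem_union_left _ (by simp [s1, hl, hg]))
    have h2 : ∀ l ∈ s, ∀ l' ∈ s, 0 < l g → l' g < 0 → 0 ≤ l g * l' x - l' g * l x := by
      intro l hl l' hl' hg hg'
      have := h (l g • l' - l' g • l) (Finset.mem_union_right _
        (Finset.mem_image.2 ⟨(l, l'), by simp [hl, hl', hg, hg'], rfl⟩))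
      simpa using this
    let B : Finset ℚ := insert 0 ((s.filter (fun l => l g < 0)).image (fun l => l x / l g))
    have hB : B.Nonempty := ⟨0, by simp [B]⟩
    have hle : ∀ b ∈ B, b ≤ B.max' hB := fun b hb => Finset.le_max' _ _ hb
    have hmem := B.max'_mem hB
    set t := B.max' hB
    refine ⟨t, hle 0 (by simp [B]), fun l hl => ?_⟩
    rw [map_sub, map_smul, smul_eq_mul]
    rcases lt_trichotomy (l g) 0 with hg | hg | hg
    · have := hle (l x / l g) (Finset.mem_insert_of_mem (Finset.mem_image.2 ⟨l, by simp [hl, hg], rfl⟩))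
      rw [div_le_iff_of_neg hg] at this
      linarith
    · rw [hg]
      have := h1 l hl hg.ge
      linarith
    · rcases Finset.mem_insert.1 hmem with ht | ht
      · rw [ht]
        have := h1 l hl hg.le
        linarith
      · obtain ⟨l', hl', ht⟩ := Finset.mem_image.1 ht
        simp only [Finset.mem_filter] at hl'
        have := h2 l hl l' hl'.1 hg hl'.2
        rw [← ht, div_mul_eq_mul_div, sub_nonneg, div_le_iff_of_neg hl'.2]
        linarith
  · rintro ⟨t, ht, h⟩ l hl
    rcases Finset.mem_union.1 hl with hl | hl
    · simp only [s1, Finset.mem_filter] at hl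
      have := h l hl.1
      rw [map_sub, map_smul, smul_eq_mul] at this
      nlinarith [mul_nonneg ht hl.2]
    · obtain ⟨⟨l1, l2⟩, hp, rfl⟩ := Finset.mem_image.1 hl
      simp only [Finset.mem_filter, Finset.mem_product] at hp
      have e1 := h l1 hp.1.1
      have e2 := h l2 hp.1.2
      rw [map_sub, map_smul, smul_eq_mul] at e1 e2
      simp only [LinearMap.sub_apply, LinearMap.smul_apply, smul_eq_mul]
      nlinarith [mul_nonneg hp.2.1.le e2, mul_nonneg (neg_nonneg.2 hp.2.2.le) e1]

theorem hdesc {K : PointedCone ℚ E} (hK : K.FG) :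
    ∃ s : Finset (E →ₗ[ℚ] ℚ), ∀ x, x ∈ K ↔ ∀ l ∈ s, 0 ≤ l x := by
  classical
  obtain ⟨G, rfl⟩ := hK
  induction G using Finset.induction_on with
  | empty =>
    let b := Module.finBasis ℚ E
    refine ⟨Finset.univ.image (fun i => b.coord i) ∪ Finset.univ.image (fun i => -b.coord i), fun x => ?_⟩
    simp only [Finset.coe_empty, span_empty, mem_bot]
    constructor
    · rintro rfl
      simp
    · intro h
      apply b.ext_elem
      intro i
      have h1 := h (b.coord i) (by simp)
      have h2 := h (-b.coord i) (by simp)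
      simp at h1 h2 ⊢
      linarith
  | insert g G hg ih =>
    obtain ⟨s, hs⟩ := ih
    obtain ⟨s', hs'⟩ := fourier_motzkin s g
    refine ⟨s', fun x => ?_⟩
    rw [hs', Finset.coe_insert, mem_span_insert]
    constructor
    · rintro ⟨⟨t, ht⟩, z, hz, rfl⟩
      refine ⟨t, ht, (hs _).1 ?_⟩
      convert hz using 1
      change t • g + z - t • g = z
      abel
    · rintro ⟨t, ht, h⟩
      refine ⟨⟨t, ht⟩, _, (hs _).2 h, ?_⟩
      change x = t • g + (x - t • g)
      abel
end HDesc

section QDef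
variable {d : ℕ}

theorem IsQDef.union {S T : Set (PairQ d)} (h : IsQDef S) (h' : IsQDef T) : IsQDef (S ∪ T) := by
  have := (h.compl.inter h'.compl).compl
  rwa [Set.compl_inter, compl_compl, compl_compl] at this

theorem IsQDef.univ : IsQDef (Set.univ : Set (PairQ d)) := by
  have := IsQDef.halfspace (d := d) 0 0
  convert this
  ext x
  simp

theorem IsQDef.empty : IsQDef (∅ : Set (PairQ d)) := by
  simpa using (IsQDef.univ (d := d)).compl

theorem IsQDef.biInter {ι : Type} (s : Finset ι) {S : ι → Set (PairQ d)}
    (h : ∀ i ∈ s, IsQDef (S i)) : IsQDef {x | ∀ i ∈ s, x ∈ S i} := by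
  classical
  induction s using Finset.induction_on with
  | empty => simpa using IsQDef.univ
  | insert a s ha ih =>
    have := (h a (by simp)).inter (ih fun i hi => h i (by simp [hi]))
    convert this using 1
    ext x
    simp

theorem IsQDef.biUnion {ι : Type} (s : Finset ι) {S : ι → Set (PairQ d)}
    (h : ∀ i ∈ s, IsQDef (S i)) : IsQDef {x | ∃ i ∈ s, x ∈ S i} := by
  have := (IsQDef.biInter s (fun i hi => (h i hi).compl)).compl
  convert this using 1
  ext x
  simp

theorem IsQDef.lin (l : PairQ d →ₗ[ℚ] ℚ) : IsQDef {x | 0 ≤ l x} := by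
  classical
  have := IsQDef.halfspace (d := d)
    (fun i => l (Pi.single i 1, 0), fun i => l (0, Pi.single i 1)) 0
  convert this using 1
  ext x
  have hx : l x = (∑ i, l (Pi.single i 1, 0) * x.1 i) + ∑ i, l (0, Pi.single i 1) * x.2 i := by
    have e1 := LinearMap.pi_apply_eq_sum_univ (l ∘ₗ LinearMap.inl ℚ _ _) x.1
    have e2 := LinearMap.pi_apply_eq_sum_univ (l ∘ₗ LinearMap.inr ℚ _ _) x.2
    have e3 : x = LinearMap.inl ℚ _ _ x.1 + LinearMap.inr ℚ _ _ x.2 := by simp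
    conv_lhs => rw [e3, map_add]
    have f1 : ∀ i : Fin d, (fun j => if i = j then (1:ℚ) else 0) = Pi.single i 1 := by
      intro i; ext j; simp [Pi.single_apply, eq_comm]
    simp only [LinearMap.comp_apply, f1, smul_eq_mul] at e1 e2
    rw [e1, e2]
    simp [mul_comm]
  simp [hx]

theorem IsQDef.linpos (l : PairQ d →ₗ[ℚ] ℚ) : IsQDef {x | 0 < l x} := by
  have := (IsQDef.lin (-l)).compl
  convert this using 1
  ext x
  simp

theorem HF.qdef {T : PointedCone ℚ (PairQ d)} (h : HF T) : IsQDef (T : Set (PairQ d)) := by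
  classical
  generalize hX : span ℚ (T : Set (PairQ d)) = X
  induction X using WellFoundedLT.induction generalizing T with
  | ind X ih =>
  subst hX
  obtain ⟨K, hK, h1, h2⟩ := h.fgcl
  obtain ⟨s, hs⟩ := hdesc hK
  let s' := s.filter (fun l => ∃ t ∈ T, l t ≠ 0)
  have key : (T : Set (PairQ d)) =
      ({x | ∀ l ∈ s, x ∈ {x | 0 ≤ l x}} ∩ {x | ∀ l ∈ s', x ∈ {x | 0 < l x}}) ∪
        {x | ∃ l ∈ s', x ∈ ((T ⊓ ((LinearMap.ker l : Submodule ℚ (PairQ d)) : PointedCone ℚ (PairQ d)) :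
          PointedCone ℚ (PairQ d)) : Set (PairQ d))} := by
    ext v
    constructor
    · intro hv
      by_cases hz : ∃ l ∈ s', l v = 0
      · obtain ⟨l, hl, hz⟩ := hz
        exact Or.inr ⟨l, hl, hv, hz⟩
      · push Not at hz
        have := (hs v).1 (h1 hv)
        refine Or.inl ⟨this, fun l hl => ?_⟩
        exact lt_of_le_of_ne (this l (Finset.mem_filter.1 hl).1) (hz l hl).symm
    · rintro (⟨hv1, hv2⟩ | ⟨l, hl, hv, -⟩)
      · obtain ⟨m, hm, hi⟩ := exists_interior T
        have hδ : ∃ δ : ℚ, 0 < δ ∧ ∀ l ∈ s', 0 ≤ l (v - δ • m) := by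
          clear_value s'
          clear hv1
          induction s' using Finset.induction_on with
          | empty => exact ⟨1, one_pos, by simp⟩
          | insert l s' hl ih2 =>
            obtain ⟨δ, hδ, h3⟩ := ih2 (fun l hl => hv2 l (by simp [hl]))
            have hlv : 0 < l v := hv2 l (by simp)
            have : ∃ δ' : ℚ, 0 < δ' ∧ 0 ≤ l v - δ' * l m := by
              rcases le_or_gt (l m) 0 with hh | hh
              · exact ⟨1, one_pos, by linarith⟩
              · exact ⟨l v / l m, by positivity, by rw [div_mul_cancel₀ _ hh.ne']; simp⟩
            obtain ⟨δ', hδ', h4⟩ := this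
            refine ⟨min δ δ', by positivity, fun l' hl' => ?_⟩
            have mono : ∀ (l' : PairQ d →ₗ[ℚ] ℚ) (a b : ℚ), 0 < a → a ≤ b → 0 < l' v →
                0 ≤ l' v - b * l' m → 0 ≤ l' v - a * l' m := by
              intro l' a b ha hab h5 h6
              rcases le_or_gt (l' m) 0 with hh | hh
              · nlinarith
              · nlinarith
            rw [map_sub, map_smul, smul_eq_mul]
            rcases Finset.mem_insert.1 hl' with rfl | hl'
            · exact mono _ _ _ (by positivity) (min_le_right _ _) hlv h4
            · have := h3 l' hl'
              rw [map_sub, map_smul, smul_eq_mul] at this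
              exact mono _ _ _ (by positivity) (min_le_left _ _) (hv2 l' (by simp [hl'])) this
        obtain ⟨δ, hδ, h3⟩ := hδ
        have h4 : v - δ • m ∈ K := by
          rw [hs]
          intro l hl
          by_cases hl' : l ∈ s'
          · exact h3 l hl'
          · have : l m = 0 := by
              by_contra hne
              exact hl' (Finset.mem_filter.2 ⟨hl, m, hm, hne⟩)
            rw [map_sub, map_smul, this]
            simpa using hv1 l hl
        have := clC_interior hi (h2 h4) hδ
        simpa using this
      · exact hv
  rw [key]
  refine ((IsQDef.biInter _ fun l _ => IsQDef.lin l).inter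
    (IsQDef.biInter _ fun l _ => IsQDef.linpos l)).union (IsQDef.biUnion _ fun l hl => ?_)
  obtain ⟨-, t, ht, hne⟩ := Finset.mem_filter.1 hl
  refine ih _ ?_ (h.infW _) rfl
  refine lt_of_le_of_ne (span_mono fun x hx => hx.1) fun heq => hne ?_
  have h5 : t ∈ span ℚ (T : Set (PairQ d)) := subset_span ht
  rw [← heq] at h5
  have h6 : span ℚ (((T ⊓ ((LinearMap.ker l : Submodule ℚ (PairQ d)) : PointedCone ℚ (PairQ d)) :
          PointedCone ℚ (PairQ d)) : Set (PairQ d))) ≤ LinearMap.ker l := by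
    rw [span_le]
    intro x hx
    exact hx.2
  exact h6 h5

end QDef


section Mon
variable {E F : Type} [AddCommGroup E] [Module ℚ E] [AddCommGroup F] [Module ℚ F]

def dirC (P : AddSubmonoid E) : PointedCone ℚ E :=
  mkCone {v | ∃ n : ℕ, 0 < n ∧ ∃ x : E, ∀ k : ℕ, x + ((k * n : ℕ) : ℚ) • v ∈ P}
    ⟨1, one_pos, 0, fun k => by simp⟩
    (by
      rintro a ⟨n, hn, x, h⟩ b ⟨n', hn', x', h'⟩
      refine ⟨n * n', by positivity, x + x', fun k => ?_⟩
      convert P.add_mem (h (k * n')) (h' (k * n)) using 1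
      push_cast
      module)
    (by
      rintro c hc a ⟨n, hn, x, h⟩
      refine ⟨n * c.den, by positivity, x, fun k => ?_⟩
      convert h (k * c.num.toNat) using 2
      rw [smul_smul]
      congr 1
      have h2 : ((c.num.toNat : ℕ) : ℚ) = c.num := by
        have : (c.num.toNat : ℤ) = c.num :=
          Int.toNat_of_nonneg (Rat.num_nonneg.2 hc.le)
        exact_mod_cast this
      push_cast
      rw [h2, ← Rat.den_mul_eq_num]
      ring)

theorem mem_dirC {P : AddSubmonoid E} {v : E} :
    v ∈ dirC P ↔ ∃ n : ℕ, 0 < n ∧ ∃ x : E, ∀ k : ℕ, x + ((k * n : ℕ) : ℚ) • v ∈ P := Iff.rfl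

def coneC (P : AddSubmonoid E) : PointedCone ℚ E :=
  mkCone {v | ∃ n : ℕ, 0 < n ∧ (n : ℚ) • v ∈ P}
    ⟨1, one_pos, by simp⟩
    (by
      rintro a ⟨n, hn, h⟩ b ⟨n', hn', h'⟩
      refine ⟨n * n', by positivity, ?_⟩
      convert P.add_mem (P.nsmul_mem h n') (P.nsmul_mem h' n) using 1
      rw [← Nat.cast_smul_eq_nsmul ℚ, ← Nat.cast_smul_eq_nsmul ℚ]
      push_cast
      module)
    (by
      rintro c hc a ⟨n, hn, h⟩
      refine ⟨n * c.den, by positivity, ?_⟩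
      convert P.nsmul_mem h c.num.toNat using 1
      rw [← Nat.cast_smul_eq_nsmul ℚ, smul_smul, smul_smul]
      congr 1
      have h2 : ((c.num.toNat : ℕ) : ℚ) = c.num := by
        have : (c.num.toNat : ℤ) = c.num :=
          Int.toNat_of_nonneg (Rat.num_nonneg.2 hc.le)
        exact_mod_cast this
      push_cast
      rw [h2, ← Rat.den_mul_eq_num]
      ring)

theorem mem_coneC {P : AddSubmonoid E} {v : E} :
    v ∈ coneC P ↔ ∃ n : ℕ, 0 < n ∧ (n : ℚ) • v ∈ P := Iff.rfl

theorem subset_coneC {P : AddSubmonoid E} {v : E} (h : v ∈ P) : v ∈ coneC P :=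
  ⟨1, one_pos, by simpa⟩

theorem coneC_le_dirC (P : AddSubmonoid E) : coneC P ≤ dirC P := by
  rintro v ⟨n, hn, h⟩
  refine ⟨n, hn, 0, fun k => ?_⟩
  convert P.nsmul_mem h k using 1
  rw [← Nat.cast_smul_eq_nsmul ℚ]
  push_cast
  module

theorem dirC_le_cl (P : AddSubmonoid E) : dirC P ≤ clC (coneC P) := by
  rintro v ⟨n, hn, x, h⟩
  have hx : x ∈ P := by simpa using h 0
  refine ⟨x, subset_coneC hx, fun ε he => ?_⟩
  obtain ⟨k, hk⟩ := exists_nat_gt (1 / ε)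
  have hk0 : (0:ℚ) < k := lt_trans (by positivity) hk
  have hn1 : (1:ℚ) ≤ n := by exact_mod_cast hn
  have h1 : v + (1 / (k * n : ℚ)) • x ∈ coneC P := by
    have := pc_smul (c := 1 / (k * n : ℚ)) (by positivity) (subset_coneC (h k))
    convert this using 1
    rw [smul_add, smul_smul]
    push_cast
    rw [one_div_mul_cancel (by positivity), one_smul, add_comm]
  have h2 : (0:ℚ) ≤ ε - 1 / (k * n : ℚ) := by
    rw [sub_nonneg, div_le_iff₀ (by positivity)]
    rw [div_lt_iff₀ he] at hk
    nlinarith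
  have := (coneC P).add_mem h1 (pc_smul h2 (subset_coneC hx))
  convert this using 1
  module

def infW (P : AddSubmonoid E) (W : Submodule ℚ E) : AddSubmonoid E := P ⊓ W.toAddSubmonoid

theorem mem_infW' {P : AddSubmonoid E} {W : Submodule ℚ E} {x : E} :
    x ∈ infW P W ↔ x ∈ P ∧ x ∈ W := Iff.rfl

theorem infW_infW (P : AddSubmonoid E) (W W' : Submodule ℚ E) :
    infW (infW P W) W' = infW P (W ⊓ W') := by
  ext x
  simp [mem_infW', and_assoc]

theorem infW_top (P : AddSubmonoid E) : infW P ⊤ = P := by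
  ext x
  simp [mem_infW']

theorem coneC_infW (P : AddSubmonoid E) (W : Submodule ℚ E) :
    coneC (infW P W) = coneC P ⊓ (W : PointedCone ℚ E) := by
  ext x
  constructor
  · rintro ⟨n, hn, h, h'⟩
    refine ⟨⟨n, hn, h⟩, ?_⟩
    have := W.smul_mem (n : ℚ)⁻¹ h'
    rwa [smul_smul, inv_mul_cancel₀ (by positivity), one_smul] at this
  · rintro ⟨⟨n, hn, h⟩, h'⟩
    exact ⟨n, hn, h, W.smul_mem _ h'⟩

theorem dirC_mono {P Q : AddSubmonoid E} (h : P ≤ Q) : dirC P ≤ dirC Q := by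
  rintro v ⟨n, hn, x, hx⟩
  exact ⟨n, hn, x, fun k => h (hx k)⟩

theorem dirC_mem_W {P : AddSubmonoid E} {W : Submodule ℚ E} {v : E} (h : v ∈ dirC (infW P W)) :
    v ∈ W := by
  obtain ⟨n, hn, x, hx⟩ := h
  have h0 := (hx 0).2
  have h1 := (hx 1).2
  simp only [zero_mul, Nat.cast_zero, zero_smul, add_zero, one_mul] at h0 h1
  have h2 := W.sub_mem h1 h0
  rw [add_sub_cancel_left] at h2
  have := W.smul_mem (n : ℚ)⁻¹ h2
  rwa [smul_smul, inv_mul_cancel₀ (by positivity), one_smul] at this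

theorem coneC_of_smul {P : AddSubmonoid E} {v : E} {n : ℕ} (hn : 0 < n) (h : (n:ℚ) • v ∈ P) :
    v ∈ coneC P := ⟨n, hn, h⟩

def HH (P : AddSubmonoid E) : Prop := ∀ W : Submodule ℚ E, HF (dirC (infW P W))

def WD (P : AddSubmonoid E) : Prop :=
  ∀ p : ℕ → E, (∀ m, p m ∈ P) → ∃ φ : ℕ → ℕ, StrictMono φ ∧
    ∀ j k, j ≤ k → ∀ t : ℕ, p (φ j) + (t : ℚ) • (p (φ k) - p (φ j)) ∈ P

theorem HH.infW {P : AddSubmonoid E} (h : HH P) (W : Submodule ℚ E) : HH (infW P W) := by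
  intro W'
  rw [infW_infW]
  exact h _

theorem HH.hfdir {P : AddSubmonoid E} (h : HH P) : HF (dirC P) := by
  have := h ⊤
  rwa [infW_top] at this

theorem WD.infW {P : AddSubmonoid E} (h : WD P) (W : Submodule ℚ E) : WD (infW P W) := by
  intro p hp
  obtain ⟨φ, hφ, h1⟩ := h p (fun m => (hp m).1)
  exact ⟨φ, hφ, fun j k hjk t => ⟨h1 j k hjk t,
    W.add_mem (hp _).2 (W.smul_mem _ (W.sub_mem (hp _).2 (hp _).2))⟩⟩

theorem WD.map {P : AddSubmonoid E} (h : WD P) (f : E →ₗ[ℚ] F) :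
    WD (P.map f.toAddMonoidHom) := by
  intro p hp
  choose q hq hqp using hp
  obtain ⟨φ, hφ, h1⟩ := h q hq
  refine ⟨φ, hφ, fun j k hjk t => ⟨_, h1 j k hjk t, ?_⟩⟩
  change f _ = _
  rw [map_add, map_smul, map_sub]
  simp only [← hqp]
  rfl

theorem WD.prod {P : AddSubmonoid E} {P' : AddSubmonoid F} (h : WD P) (h' : WD P') :
    WD (P.prod P') := by
  intro p hp
  obtain ⟨φ, hφ, h1⟩ := h (fun m => (p m).1) (fun m => (hp m).1)
  obtain ⟨ψ, hψ, h2⟩ := h' (fun m => (p (φ m)).2) (fun m => (hp _).2)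
  refine ⟨φ ∘ ψ, hφ.comp hψ, fun j k hjk t => ⟨h1 _ _ (hψ.monotone hjk) t, h2 j k hjk t⟩⟩

variable [FiniteDimensional ℚ E] [FiniteDimensional ℚ F]

theorem HH.hfcone {P : AddSubmonoid E} (h : HH P) : HF (coneC P) := by
  intro W
  rw [← coneC_infW]
  exact ((h W).fgcl).between (coneC_le_dirC _) (dirC_le_cl _)

theorem span_mon {P : AddSubmonoid E} {x : E} (hx : x ∈ span ℚ (P : Set E)) :
    ∃ n : ℕ, 0 < n ∧ ∃ a ∈ P, ∃ b ∈ P, (n : ℚ) • x = a - b := by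
  have hx' : x ∈ span ℚ ((coneC P : PointedCone ℚ E) : Set E) :=
    span_mono (fun y hy => subset_coneC hy) hx
  obtain ⟨a, ⟨n, hn, ha⟩, b, ⟨n', hn', hb⟩, rfl⟩ := span_cone hx'
  refine ⟨n * n', by positivity, _, P.nsmul_mem ha n', _, P.nsmul_mem hb n, ?_⟩
  rw [← Nat.cast_smul_eq_nsmul ℚ, ← Nat.cast_smul_eq_nsmul ℚ]
  push_cast
  module

theorem HH.aux {P T : AddSubmonoid E} (h : HH P) :
    ∃ P1 : AddSubmonoid E, HF (dirC P1) ∧ (∀ x ∈ P1, x ∈ P) ∧ (∀ t ∈ T, t ∈ P → t ∈ P1) ∧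
      ∀ x ∈ P1, ∃ w ∈ P, x + w ∈ T := by
  let P1 : AddSubmonoid E :=
    { carrier := {u | u ∈ P ∧ ∃ w ∈ P, u + w ∈ T}
      zero_mem' := ⟨P.zero_mem, 0, P.zero_mem, by simp⟩
      add_mem' := by
        rintro a b ⟨ha, w, hw, ht⟩ ⟨hb, w', hw', ht'⟩
        refine ⟨P.add_mem ha hb, w + w', P.add_mem hw hw', ?_⟩
        convert T.add_mem ht ht' using 1
        abel }
  have hP1 : _root_.infW P (span ℚ (P1 : Set E)) = P1 := by
    ext x
    constructor
    · rintro ⟨hx, hx2⟩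
      obtain ⟨n, hn, a, ⟨ha, w, hw, ht⟩, b, ⟨hb, -⟩, hab⟩ := span_mon hx2
      refine ⟨hx, (n - 1) • x + b + w, P.add_mem (P.add_mem (P.nsmul_mem hx _) hb) hw, ?_⟩
      convert ht using 1
      rw [← add_assoc, ← add_assoc, ← succ_nsmul', Nat.sub_add_cancel hn,
        ← Nat.cast_smul_eq_nsmul ℚ, hab]
      abel
    · intro hx
      exact ⟨hx.1, subset_span hx⟩
  have h1 := h (span ℚ (P1 : Set E))
  rw [hP1] at h1
  exact ⟨P1, h1, fun x hx => hx.1, fun t ht htP => ⟨htP, 0, P.zero_mem, by simpa⟩, fun x hx => hx.2⟩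

theorem HH.prod {P : AddSubmonoid E} {P' : AddSubmonoid F} (h : HH P) (h' : HH P') :
    HH (P.prod P') := by
  intro W
  set M := _root_.infW (P.prod P') W
  obtain ⟨P1, hf, h1, h2, h3⟩ := h.aux (T := M.map (AddMonoidHom.fst E F))
  obtain ⟨P1', hf', h1', h2', h3'⟩ := h'.aux (T := M.map (AddMonoidHom.snd E F))
  convert (hf.prod hf').infW W using 1
  apply le_antisymm
  · intro v hv
    refine ⟨?_, dirC_mem_W hv⟩
    obtain ⟨n, hn, x, hx⟩ := hv
    exact ⟨⟨n, hn, x.1, fun k => h2 _ ⟨_, hx k, rfl⟩ (hx k).1.1⟩,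
      ⟨n, hn, x.2, fun k => h2' _ ⟨_, hx k, rfl⟩ (hx k).1.2⟩⟩
  · rintro ⟨v, v'⟩ ⟨⟨⟨n, hn, x, hx⟩, ⟨n', hn', x', hx'⟩⟩, hW⟩
    obtain ⟨w, hw, m, hm, hmx⟩ := h3 x (by simpa using hx 0)
    obtain ⟨w', hw', m', hm', hmx'⟩ := h3' x' (by simpa using hx' 0)
    have e1 : m.1 = x + w := hmx
    have e2 : m'.2 = x' + w' := hmx'
    refine ⟨n * n', by positivity, m + m', fun k => ⟨⟨?_, ?_⟩, ?_⟩⟩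
    · change (m.1 + m'.1) + ((k * (n * n') : ℕ) : ℚ) • v ∈ P
      have := P.add_mem (P.add_mem (h1 _ (hx (k * n'))) hw) hm'.1.1
      convert this using 1
      rw [e1]
      push_cast
      module
    · change (m.2 + m'.2) + ((k * (n * n') : ℕ) : ℚ) • v' ∈ P'
      have := P'.add_mem (P'.add_mem (h1' _ (hx' (k * n))) hw') hm.1.2
      convert this using 1
      rw [e2]
      push_cast
      module
    · exact W.add_mem (W.add_mem hm.2 hm'.2) (W.smul_mem _ hW)

theorem HH.map {P : AddSubmonoid E} (h : HH P) (hw : WD P) (f : E →ₗ[ℚ] F) :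
    HH (P.map f.toAddMonoidHom) := by
  intro W
  convert (h (W.comap f)).map f using 1
  apply le_antisymm
  · rintro v ⟨n, hn, x, hx⟩
    have := fun k => (hx k).1
    choose q hq hqp using this
    have hqW : ∀ k, q k ∈ W.comap f := fun k => by
      have := (hx k).2
      rw [← hqp] at this
      exact this
    obtain ⟨φ, hφ, h1⟩ := hw.infW (W.comap f) q (fun m => ⟨hq m, hqW m⟩)
    have h01 : φ 0 < φ 1 := hφ one_pos
    set u := q (φ 1) - q (φ 0)
    have hu : f u = ((φ 1 - φ 0 : ℚ) * n) • v := by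
      have e0 : f (q (φ 0)) = _ := hqp (φ 0)
      have e1 : f (q (φ 1)) = _ := hqp (φ 1)
      rw [map_sub, e0, e1]
      push_cast
      module
    have hud : u ∈ dirC (_root_.infW P (W.comap f)) :=
      ⟨1, one_pos, q (φ 0), fun k => by simpa using h1 0 1 zero_le_one k⟩
    have hpos : (0:ℚ) < (φ 1 - φ 0 : ℚ) * n := by
      have : (φ 0 : ℚ) < φ 1 := by exact_mod_cast h01
      have h2 : (0:ℚ) < φ 1 - φ 0 := by linarith
      positivity
    refine PointedCone.mem_map.2 ⟨_, pc_smul (inv_pos.2 hpos).le hud, ?_⟩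
    rw [map_smul, hu, smul_smul, inv_mul_cancel₀ hpos.ne', one_smul]
  · intro v hv
    obtain ⟨u, ⟨n, hn, x, hx⟩, rfl⟩ := PointedCone.mem_map.1 hv
    refine ⟨n, hn, f x, fun k => ?_⟩
    have := hx k
    rw [← map_smul, ← map_add]
    exact ⟨⟨_, this.1, rfl⟩, this.2⟩

theorem HH.inf {P Q : AddSubmonoid E} (h : HH P) (h' : HH Q) (hw : WD P) (hw' : WD Q) :
    HH (P ⊓ Q) ∧ WD (P ⊓ Q) := by
  have e : P ⊓ Q = (_root_.infW (P.prod Q) (LinearMap.ker (LinearMap.fst ℚ E E - LinearMap.snd ℚ E E))).map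
      (LinearMap.fst ℚ E E).toAddMonoidHom := by
    ext x
    constructor
    · rintro ⟨ha, hb⟩
      exact ⟨(x, x), ⟨⟨ha, hb⟩, by simp⟩, by simp⟩
    · rintro ⟨⟨a, b⟩, ⟨⟨ha, hb⟩, hab⟩, rfl⟩
      have : a = b := by simpa [sub_eq_zero] using hab
      subst this
      exact ⟨ha, hb⟩
  rw [e]
  exact ⟨((h.prod h').infW _).map ((hw.prod hw').infW _) _, ((hw.prod hw').infW _).map _⟩

theorem HH.sup {P Q : AddSubmonoid E} (h : HH P) (h' : HH Q) (hw : WD P) (hw' : WD Q) :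
    HH (P ⊔ Q) ∧ WD (P ⊔ Q) := by
  have e : P ⊔ Q = (P.prod Q).map
      (LinearMap.coprod (LinearMap.id : E →ₗ[ℚ] E) (LinearMap.id : E →ₗ[ℚ] E)).toAddMonoidHom := by
    ext x
    rw [AddSubmonoid.mem_sup]
    constructor
    · rintro ⟨a, ha, b, hb, rfl⟩
      exact ⟨(a, b), ⟨ha, hb⟩, by simp⟩
    · rintro ⟨⟨a, b⟩, ⟨ha, hb⟩, rfl⟩
      exact ⟨a, ha, b, hb, by simp⟩
  rw [e]
  exact ⟨(h.prod h').map (hw.prod hw') _, (hw.prod hw').map _⟩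

def relComp {X Y Z : Type} [AddCommGroup X] [AddCommGroup Y] [AddCommGroup Z]
    (P : AddSubmonoid (X × Y)) (Q : AddSubmonoid (Y × Z)) : AddSubmonoid (X × Z) where
  carrier := {p | ∃ y, (p.1, y) ∈ P ∧ (y, p.2) ∈ Q}
  zero_mem' := ⟨0, P.zero_mem, Q.zero_mem⟩
  add_mem' := by
    rintro a b ⟨y, h1, h2⟩ ⟨y', h1', h2'⟩
    exact ⟨y + y', P.add_mem h1 h1', Q.add_mem h2 h2'⟩

theorem HH.relComp {P Q : AddSubmonoid (E × E)} (h : HH P) (h' : HH Q) (hw : WD P) (hw' : WD Q) :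
    HH (relComp P Q) ∧ WD (relComp P Q) := by
  let f : (E × E) × (E × E) →ₗ[ℚ] E :=
    (LinearMap.snd ℚ E E) ∘ₗ (LinearMap.fst ℚ _ _) - (LinearMap.fst ℚ E E) ∘ₗ (LinearMap.snd ℚ _ _)
  let g : (E × E) × (E × E) →ₗ[ℚ] E × E :=
    ((LinearMap.fst ℚ E E) ∘ₗ (LinearMap.fst ℚ _ _)).prod
      ((LinearMap.snd ℚ E E) ∘ₗ (LinearMap.snd ℚ _ _))
  have e : _root_.relComp P Q = (_root_.infW (P.prod Q) (LinearMap.ker f)).map g.toAddMonoidHom := by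
    ext ⟨x, z⟩
    constructor
    · rintro ⟨y, ha, hb⟩
      exact ⟨((x, y), (y, z)), ⟨⟨ha, hb⟩, by simp [f]⟩, rfl⟩
    · rintro ⟨⟨⟨a, b⟩, ⟨b', c⟩⟩, ⟨⟨ha, hb⟩, hab⟩, hh⟩
      have : b = b' := by simpa [sub_eq_zero, f] using hab
      subst this
      have h1 : a = x := congrArg Prod.fst hh
      have h2 : c = z := congrArg Prod.snd hh
      subst h1 h2
      exact ⟨b, ha, hb⟩
  rw [e]
  exact ⟨((h.prod h').infW _).map ((hw.prod hw').infW _) _, ((hw.prod hw').infW _).map _⟩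

end Mon

section Orth
variable {ι : Type} [Fintype ι]

theorem common_den (v : ι → ℚ) (hv : ∀ i, 0 ≤ v i) :
    ∃ n : ℕ, 0 < n ∧ ∃ k : ι → ℕ, ∀ i, (k i : ℚ) = n * v i := by
  classical
  refine ⟨∏ i, (v i).den, Finset.prod_pos fun i _ => (v i).den_pos,
    fun i => (∏ j ∈ Finset.univ.erase i, (v j).den) * (v i).num.toNat, fun i => ?_⟩
  have h1 : ∏ i, (v i).den = (∏ j ∈ Finset.univ.erase i, (v j).den) * (v i).den :=
    (Finset.prod_erase_mul _ _ (Finset.mem_univ i)).symm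
  have h2 : (((v i).num.toNat : ℕ) : ℚ) = (v i).num := by
    have : ((v i).num.toNat : ℤ) = (v i).num := Int.toNat_of_nonneg (Rat.num_nonneg.2 (hv i))
    exact_mod_cast this
  rw [h1]
  push_cast
  rw [h2, mul_assoc, Rat.den_mul_eq_num]

variable (ι) in
def orth : AddSubmonoid (ι → ℚ) where
  carrier := {x | ∃ n : ι → ℕ, ∀ i, x i = n i}
  zero_mem' := ⟨0, by simp⟩
  add_mem' := by
    rintro a b ⟨n, h⟩ ⟨n', h'⟩
    exact ⟨n + n', fun i => by simp [h, h']⟩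

theorem WD_orth : WD (orth ι) := by
  intro p hp
  choose q hq using hp
  obtain ⟨g, hg⟩ := (wellQuasiOrdered_le (α := ι → ℕ)).exists_monotone_subseq q
  refine ⟨g, g.strictMono, fun j k hjk t => ⟨q (g j) + t • (q (g k) - q (g j)), fun i => ?_⟩⟩
  have := hg j k hjk i
  simp [hq, Nat.cast_sub this]

theorem FG_pos : (PointedCone.positive ℚ (ι → ℚ)).FG := by
  classical
  refine ⟨Finset.univ.image (fun i => Pi.single i (1:ℚ)), le_antisymm ?_ ?_⟩
  · rw [span_le]
    intro x hx
    simp only [Finset.coe_image, Finset.coe_univ, Set.image_univ, Set.mem_range] at hx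
    obtain ⟨i, rfl⟩ := hx
    change (0 : ι → ℚ) ≤ Pi.single i 1
    simp
  · intro x hx
    have hx : 0 ≤ x := hx
    have : x = ∑ i, x i • (Pi.single i (1:ℚ) : ι → ℚ) := by
      ext j
      simp [Finset.sum_apply, Pi.single_apply]
    rw [this]
    refine sum_mem fun i _ => pc_smul (hx i) (subset_span ?_)
    simp

theorem HH_orth : HH (orth ι) := by
  intro W
  convert (HF_of_FG (FG_pos (ι := ι))).infW W using 1
  apply le_antisymm
  · intro v hv
    refine ⟨?_, dirC_mem_W hv⟩
    obtain ⟨n, hn, x, hx⟩ := hv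
    change 0 ≤ v
    intro i
    by_contra hneg
    push Not at hneg
    obtain ⟨k, hk⟩ := exists_nat_gt (x i / (- v i))
    obtain ⟨⟨q, hq⟩, -⟩ := hx k
    have h1 := hq i
    have hv' : 0 < - v i := by simpa using hneg
    rw [div_lt_iff₀ hv'] at hk
    simp at h1
    have hn1 : (1:ℚ) ≤ n := by exact_mod_cast hn
    have hq0 : (0:ℚ) ≤ q i := by positivity
    have hk0 : (0:ℚ) ≤ k := by positivity
    nlinarith [mul_nonneg hk0 hv'.le, mul_nonneg (mul_nonneg hk0 hv'.le) (sub_nonneg.2 hn1)]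
  · rintro v ⟨hv, hW⟩
    obtain ⟨n, hn, k, hk⟩ := common_den v hv
    refine ⟨n, hn, 0, fun t => ⟨⟨t • k, fun i => ?_⟩, ?_⟩⟩
    · simp [hk, mul_assoc]
    · simpa using W.smul_mem _ hW

theorem HH_gen {E : Type} [AddCommGroup E] [Module ℚ E] [FiniteDimensional ℚ E] (g : ι → E)
    (Q : AddSubmonoid E) (hQ : ∀ x, x ∈ Q ↔ ∃ c : ι → ℕ, x = ∑ i, c i • g i) : HH Q ∧ WD Q := by
  classical
  let f : (ι → ℚ) →ₗ[ℚ] E := Fintype.linearCombination ℚ g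
  have : Q = (orth ι).map f.toAddMonoidHom := by
    ext x
    rw [hQ]
    constructor
    · rintro ⟨c, rfl⟩
      refine ⟨fun i => c i, ⟨c, fun i => rfl⟩, ?_⟩
      simp [f, Fintype.linearCombination_apply, Nat.cast_smul_eq_nsmul]
    · rintro ⟨y, ⟨c, hc⟩, rfl⟩
      refine ⟨c, ?_⟩
      simp [f, Fintype.linearCombination_apply, hc, Nat.cast_smul_eq_nsmul]
  rw [this]
  exact ⟨HH_orth.map WD_orth _, WD_orth.map _⟩

end Orth


abbrev QV (d : ℕ) := Fin d → ℚ

def qv {d : ℕ} (x : NVec d) : QV d := fun i => (x i : ℚ)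

theorem qv_inj {d : ℕ} {x y : NVec d} (h : qv x = qv y) : x = y := by
  ext i
  have := congrFun h i
  simpa [qv] using this

theorem qv_add {d : ℕ} (x y : NVec d) : qv (x + y) = qv x + qv y := by
  ext i; simp [qv]

theorem qv_orth {d : ℕ} (x : NVec d) : qv x ∈ orth (Fin d) := ⟨x, fun i => rfl⟩

theorem orth_qv {d : ℕ} {x : QV d} (h : x ∈ orth (Fin d)) : ∃ n : NVec d, x = qv n := by
  obtain ⟨n, hn⟩ := h
  exact ⟨n, funext hn⟩

theorem orth_nonneg {d : ℕ} {x : QV d} (h : x ∈ orth (Fin d)) (i : Fin d) : 0 ≤ x i := by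
  obtain ⟨n, hn⟩ := h
  rw [hn]; positivity

theorem orth_sub {d : ℕ} {x y : QV d} (hx : x ∈ orth (Fin d)) (hy : y ∈ orth (Fin d)) (h : x ≤ y) :
    y - x ∈ orth (Fin d) := by
  obtain ⟨n, hn⟩ := hx
  obtain ⟨m, hm⟩ := hy
  refine ⟨m - n, fun i => ?_⟩
  have h1 : x i ≤ y i := h i
  rw [hn, hm] at h1
  have h2 : n i ≤ m i := Nat.cast_le.1 h1
  simp [hn, hm, Nat.cast_sub h2]

theorem qv_le {d : ℕ} {x y : NVec d} : qv x ≤ qv y ↔ x ≤ y := by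
  constructor
  · intro h i
    have := h i
    simpa [qv] using this
  · intro h i
    have := h i
    simpa [qv] using this

/-! ### flat words -/
section Flat
variable {d : ℕ} (V : PVAS d)

def flatw (ws : List (List V.E)) (x y : NVec d) : Prop :=
  compList (ws.map fun w => Relation.ReflTransGen (V.StepWord w)) x y

variable {V}

theorem flatw_cons {w : List V.E} {ws : List (List V.E)} {x z : NVec d} :
    flatw V (w :: ws) x z ↔ ∃ y, Relation.ReflTransGen (V.StepWord w) x y ∧ flatw V ws y z := Iff.rfl

theorem flatw_nil {x z : NVec d} : flatw V [] x z ↔ x = z := Iff.rfl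

theorem flatw_append {ws ws' : List (List V.E)} {x y z : NVec d} (h : flatw V ws x y)
    (h' : flatw V ws' y z) : flatw V (ws ++ ws') x z := by
  induction ws generalizing x with
  | nil => cases h; exact h'
  | cons w ws ih =>
    obtain ⟨y', h1, h2⟩ := h
    exact ⟨y', h1, ih h2⟩

theorem flatw_refl (ws : List (List V.E)) (x : NVec d) : flatw V ws x x := by
  induction ws with
  | nil => rfl
  | cons w ws ih => exact ⟨x, Relation.ReflTransGen.refl, ih⟩

theorem stepWord_append {w w' : List V.E} {x y z : NVec d} (h : V.StepWord w x y)
    (h' : V.StepWord w' y z) : V.StepWord (w ++ w') x z := by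
  induction w generalizing x with
  | nil => cases h; exact h'
  | cons e w ih =>
    obtain ⟨y', h1, h2⟩ := h
    exact ⟨y', h1, ih h2⟩

theorem stepWord_shift {k : ℕ} {w : List V.E} (hw : ∀ e ∈ w, V.test e ≤ k) {x y δ : NVec d}
    (hδ : ∀ i : Fin d, (i : ℕ) < k → δ i = 0) (h : V.StepWord w x y) :
    V.StepWord w (x + δ) (y + δ) := by
  induction w generalizing x with
  | nil => cases h; rfl
  | cons e w ih =>
    obtain ⟨y', ⟨h1, h1'⟩, h2⟩ := h
    refine ⟨y' + δ, ⟨fun j hj => ?_, fun i => ?_⟩, ih (fun e he => hw e (by simp [he])) h2⟩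
    · have := hw e (by simp)
      simp [h1 j hj, hδ j (by omega)]
    · have := h1' i
      simp only [Pi.add_apply, Nat.cast_add]
      omega

theorem flatw_shift {k : ℕ} {ws : List (List V.E)} (hw : ∀ w ∈ ws, ∀ e ∈ w, V.test e ≤ k)
    {x y δ : NVec d} (hδ : ∀ i : Fin d, (i : ℕ) < k → δ i = 0) (h : flatw V ws x y) :
    flatw V ws (x + δ) (y + δ) := by
  induction ws generalizing x with
  | nil => cases h; rfl
  | cons w ws ih =>
    obtain ⟨y', h1, h2⟩ := h
    refine ⟨y' + δ, ?_, ih (fun w hw' => hw w (by simp [hw'])) h2⟩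
    clear h2 ih
    induction h1 with
    | refl => exact Relation.ReflTransGen.refl
    | tail _ h4 ih4 => exact ih4.tail (stepWord_shift (hw w (by simp)) hδ h4)

theorem star_word {k : ℕ} {w : List V.E} (hw : ∀ e ∈ w, V.test e ≤ k)
    {x y : NVec d} (h : Relation.ReflTransGen (V.StepWord w) x y) :
    ∃ w : List V.E, (∀ e ∈ w, V.test e ≤ k) ∧ V.StepWord w x y := by
  induction h with
  | refl => exact ⟨[], by simp, rfl⟩
  | tail _ h4 ih =>
    obtain ⟨w1, h1, h2⟩ := ih
    refine ⟨w1 ++ w, fun e he => ?_, stepWord_append h2 h4⟩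
    rcases List.mem_append.1 he with h | h
    · exact h1 e h
    · exact hw e h

theorem flatw_word {k : ℕ} {ws : List (List V.E)} (hw : ∀ w ∈ ws, ∀ e ∈ w, V.test e ≤ k)
    {x y : NVec d} (h : flatw V ws x y) :
    ∃ w : List V.E, (∀ e ∈ w, V.test e ≤ k) ∧ V.StepWord w x y := by
  induction ws generalizing x with
  | nil => cases h; exact ⟨[], by simp, rfl⟩
  | cons w ws ih =>
    obtain ⟨y', h1, h2⟩ := h
    obtain ⟨w2, hw2, h3⟩ := ih (fun w hw' => hw w (by simp [hw'])) h2
    obtain ⟨w1, hw1, h4⟩ := star_word (hw w (by simp)) h1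
    refine ⟨w1 ++ w2, fun e he => ?_, stepWord_append h4 h3⟩
    rcases List.mem_append.1 he with h | h
    · exact hw1 e h
    · exact hw2 e h
end Flat


def nat2 (d : ℕ) : AddSubmonoid (PairQ d) := (orth (Fin d)).prod (orth (Fin d))

structure Sys (d : ℕ) where
  Ω : Type
  le : Ω → Ω → Prop
  v : Ω → PairQ d
  refl : ∀ a, le a a
  trans : ∀ {a b c}, le a b → le b c → le a c
  nat : ∀ a, v a ∈ nat2 d
  wqo : WellQuasiOrdered le
  mono : ∀ {a b}, le a b → v a ≤ v b
  amalg : ∀ {a b c}, le a b → le a c → ∃ e, le b e ∧ le c e ∧ v e = v b + v c - v a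

theorem wqo_comap {α β : Type} {r : β → β → Prop} (h : WellQuasiOrdered r) (f : α → β) :
    WellQuasiOrdered (fun x y => r (f x) (f y)) := fun g => h (f ∘ g)

theorem wqo_mono {α : Type} {r r' : α → α → Prop} (h : WellQuasiOrdered r)
    (hr : ∀ a b, r a b → r' a b) : WellQuasiOrdered r' := fun g => by
  obtain ⟨m, n, h1, h2⟩ := h g
  exact ⟨m, n, h1, hr _ _ h2⟩

theorem wqo_subseq {α : Type} {r : α → α → Prop} (hr : ∀ a, r a a)
    (ht : ∀ {a b c}, r a b → r b c → r a c) (h : WellQuasiOrdered r) (f : ℕ → α) :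
    ∃ φ : ℕ → ℕ, StrictMono φ ∧ ∀ j k, j ≤ k → r (f (φ j)) (f (φ k)) := by
  let _ : IsPreorder α r := { refl := hr, trans := fun _ _ _ => ht }
  obtain ⟨g, hg⟩ := h.exists_monotone_subseq f
  exact ⟨g, g.strictMono, fun j k => hg j k⟩

theorem wqo_basis {α : Type} {r : α → α → Prop} (hr : ∀ a, r a a)
    (ht : ∀ {a b c}, r a b → r b c → r a c) (h : WellQuasiOrdered r) (A : Set α) :
    ∃ F : Finset α, (∀ a ∈ F, a ∈ A) ∧ ∀ a ∈ A, ∃ f ∈ F, r f a := by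
  classical
  by_contra hcon
  push Not at hcon
  have key : ∀ F : Finset α, (∀ a ∈ F, a ∈ A) → ∃ a, a ∈ A ∧ ∀ f ∈ F, ¬ r f a := hcon
  obtain ⟨f, hf, hf2⟩ := exists_seq_of_forall_finset_exists (fun a => a ∈ A) (fun x y => ¬ r x y) key
  obtain ⟨m, n, hmn, h3⟩ := h f
  exact hf2 m n hmn h3

namespace Sys
variable {d : ℕ} (S : Sys d)

def P (a : S.Ω) : AddSubmonoid (PairQ d) where
  carrier := {p | ∃ b, S.le a b ∧ S.v b = S.v a + p}
  zero_mem' := ⟨a, S.refl a, by simp⟩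
  add_mem' := by
    rintro p q ⟨b, hb, hb'⟩ ⟨c, hc, hc'⟩
    obtain ⟨e, h1, h2, h3⟩ := S.amalg hb hc
    exact ⟨e, S.trans hb h1, by rw [h3, hb', hc']; abel⟩

variable {S}

theorem mem_P {a : S.Ω} {p : PairQ d} : p ∈ S.P a ↔ ∃ b, S.le a b ∧ S.v b = S.v a + p := Iff.rfl

theorem sub_mem {a b : S.Ω} (h : S.le a b) : S.v b - S.v a ∈ S.P a := ⟨b, h, by abel⟩

theorem P_le {a b : S.Ω} (h : S.le a b) : S.P a ≤ S.P b := by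
  rintro p ⟨c, hc, hc'⟩
  obtain ⟨e, h1, h2, h3⟩ := S.amalg h hc
  exact ⟨e, h1, by rw [h3, hc']; abel⟩

theorem P_shift {a b : S.Ω} (h : S.le a b) {q : PairQ d} (hq : q ∈ S.P b) :
    S.v b - S.v a + q ∈ S.P a := by
  obtain ⟨c, hc, hc'⟩ := hq
  exact ⟨c, S.trans h hc, by rw [hc']; abel⟩

theorem P_nat {a : S.Ω} {p : PairQ d} (h : p ∈ S.P a) : p ∈ nat2 d := by
  obtain ⟨b, hb, hb'⟩ := h
  have e : p = S.v b - S.v a := by rw [hb']; abel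
  have hm := S.mono hb
  rw [e]
  exact ⟨orth_sub (S.nat a).1 (S.nat b).1 hm.1, orth_sub (S.nat a).2 (S.nat b).2 hm.2⟩

theorem wd (a : S.Ω) : WD (S.P a) := by
  intro p hp
  choose b hb hb' using hp
  obtain ⟨φ, h1, h2⟩ := wqo_subseq S.refl S.trans S.wqo b
  refine ⟨φ, h1, fun j k hjk t => ?_⟩
  have h3 := (S.P (b (φ j))).nsmul_mem (sub_mem (h2 j k hjk)) t
  have h4 := P_shift (hb (φ j)) h3
  convert h4 using 1
  rw [hb', hb', Nat.cast_smul_eq_nsmul]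
  congr 1
  · abel
  · congr 1; abel
end Sys

section Fl
variable {d : ℕ} (V : PVAS d) (k : ℕ)

def FlatRel (R : Set (PairQ d)) : Prop :=
  ∃ ws : List (List V.E), (∀ w ∈ ws, ∀ e ∈ w, V.test e ≤ k) ∧
    ∀ p ∈ R, ∃ x y : NVec d, p = (qv x, qv y) ∧ flatw V ws x y

def Fl (v : PairQ d) (P : AddSubmonoid (PairQ d)) : Prop :=
  ∀ (r : ℕ) (p : Fin r → PairQ d), (∀ i, p i ∈ P) → ∃ A : ℕ, ∀ q ∈ P,
    FlatRel V k {z | ∃ κ : Fin r → ℕ, z = v + A • ∑ i, p i + q + ∑ i, κ i • p i}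

variable {V k}

theorem Fl.mono {k' : ℕ} {v : PairQ d} {P P' : AddSubmonoid (PairQ d)} (h : Fl V k v P)
    (hP : P' ≤ P) (hk : k ≤ k') : Fl V k' v P' := by
  intro r p hp
  obtain ⟨A, hA⟩ := h r p (fun i => hP (hp i))
  refine ⟨A, fun q hq => ?_⟩
  obtain ⟨ws, h1, h2⟩ := hA q (hP hq)
  exact ⟨ws, fun w hw e he => (h1 w hw e he).trans hk, h2⟩

theorem FlatRel.comp {R1 R2 R : Set (PairQ d)} (h1 : FlatRel V k R1) (h2 : FlatRel V k R2)
    (h : ∀ p ∈ R, ∃ y, (p.1, y) ∈ R1 ∧ (y, p.2) ∈ R2) : FlatRel V k R := by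
  obtain ⟨w1, a1, b1⟩ := h1
  obtain ⟨w2, a2, b2⟩ := h2
  refine ⟨w1 ++ w2, fun w hw => ?_, fun p hp => ?_⟩
  · rcases List.mem_append.1 hw with h | h
    · exact a1 w h
    · exact a2 w h
  · obtain ⟨y, h3, h4⟩ := h p hp
    obtain ⟨x, y1, e1, f1⟩ := b1 _ h3
    obtain ⟨y2, z, e2, f2⟩ := b2 _ h4
    rw [Prod.mk.injEq] at e1 e2
    obtain rfl : y1 = y2 := qv_inj (e1.2.symm.trans e2.1)
    exact ⟨x, z, Prod.ext e1.1 e2.2, flatw_append f1 f2⟩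

theorem Fl.comp {x y z : QV d} {P Q : AddSubmonoid (PairQ d)} (h1 : Fl V k (x, y) P)
    (h2 : Fl V k (y, z) Q) : Fl V k (x, z) (relComp P Q) := by
  intro r p hp
  choose m hm1 hm2 using hp
  obtain ⟨A1, hA1⟩ := h1 r _ hm1
  obtain ⟨A2, hA2⟩ := h2 r _ hm2
  refine ⟨A1 + A2, ?_⟩
  rintro q ⟨n, hn1, hn2⟩
  have f1 := hA1 (A2 • ∑ i, ((p i).1, m i) + (q.1, n))
    (P.add_mem (P.nsmul_mem (P.sum_mem fun i _ => hm1 i) _) hn1)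
  have f2 := hA2 (A1 • ∑ i, (m i, (p i).2) + (n, q.2))
    (Q.add_mem (Q.nsmul_mem (Q.sum_mem fun i _ => hm2 i) _) hn2)
  refine f1.comp f2 ?_
  rintro w ⟨κ, rfl⟩
  refine ⟨y + (A1 + A2) • ∑ i, m i + n + ∑ i, κ i • m i, ⟨κ, ?_⟩, ⟨κ, ?_⟩⟩
  · ext1
    · simp [Prod.fst_sum, add_smul]; abel
    · simp [Prod.snd_sum, add_smul]; abel
  · ext1
    · simp [Prod.fst_sum, add_smul]; abel
    · simp [Prod.snd_sum, add_smul]; abel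

theorem Fl_mem {P : AddSubmonoid (PairQ d)} {r : ℕ} {p : Fin r → PairQ d} (hp : ∀ i, p i ∈ P)
    {q : PairQ d} (hq : q ∈ P) (A : ℕ) (κ : Fin r → ℕ) :
    A • ∑ i, p i + q + ∑ i, κ i • p i ∈ P :=
  P.add_mem (P.add_mem (P.nsmul_mem (P.sum_mem fun i _ => hp i) _) hq)
    (P.sum_mem fun i _ => P.nsmul_mem (hp i) _)

variable (V k) in
def Good (S : Sys d) : Prop := ∀ a, HH (S.P a) ∧ Fl V k (S.v a) (S.P a)

variable (k) in
def ShiftC (S : Sys d) : Prop :=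
  ∀ a, ∀ δ ∈ orth (Fin d), (∀ i : Fin d, (i:ℕ) < k → δ i = 0) → (δ, δ) ∈ S.P a

theorem Good.mono {S : Sys d} {k' : ℕ} (h : Good V k S) (hk : k ≤ k') : Good V k' S :=
  fun a => ⟨(h a).1, (h a).2.mono le_rfl hk⟩

theorem ShiftC.mono {S : Sys d} {k' : ℕ} (h : ShiftC k S) (hk : k ≤ k') : ShiftC k' S :=
  fun a δ h1 h2 => h a δ h1 (fun i hi => h2 i (by omega))

theorem Fl_const {S : Sys d} (ws : List (List V.E)) (hw : ∀ w ∈ ws, ∀ e ∈ w, V.test e ≤ k)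
    (h : ∀ b, ∃ x y : NVec d, S.v b = (qv x, qv y) ∧ flatw V ws x y) (a : S.Ω) :
    Fl V k (S.v a) (S.P a) := by
  intro r p hp
  refine ⟨0, fun q hq => ⟨ws, hw, ?_⟩⟩
  rintro z ⟨κ, rfl⟩
  obtain ⟨b, hb, hb'⟩ := Fl_mem hp hq 0 κ
  have := h b
  rw [hb'] at this
  simpa only [add_assoc] using this

/-- relation of a system -/
def Sys.rel (S : Sys d) (x y : NVec d) : Prop := ∃ a, S.v a = (qv x, qv y)
end Fl

section Constr
variable {d : ℕ}

def stepSys (D : Fin d → ℤ) (m : ℕ) : Sys d where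
  Ω := {p : PairN d // (∀ j : Fin d, (j : ℕ) < m → p.1 j = 0) ∧ ∀ i, (p.2 i : ℤ) = p.1 i + D i}
  le := fun p q => p.1.1 ≤ q.1.1
  v := fun p => (qv p.1.1, qv p.1.2)
  refl := fun a => le_rfl
  trans := fun h1 h2 => le_trans h1 h2
  nat := fun a => ⟨qv_orth _, qv_orth _⟩
  wqo := wqo_comap (wellQuasiOrdered_le (α := Fin d → ℕ)) (fun p : {p : PairN d // (∀ j : Fin d, (j : ℕ) < m → p.1 j = 0) ∧ ∀ i, (p.2 i : ℤ) = p.1 i + D i} => p.1.1)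
  mono := by
    rintro ⟨⟨a, a'⟩, ha, ha'⟩ ⟨⟨b, b'⟩, hb, hb'⟩ h
    refine ⟨qv_le.2 h, qv_le.2 fun i => ?_⟩
    have h1 := ha' i
    have h2 := hb' i
    have h3 : a i ≤ b i := h i
    simp only at *
    omega
  amalg := by
    rintro ⟨⟨a, a'⟩, ha, ha'⟩ ⟨⟨b, b'⟩, hb, hb'⟩ ⟨⟨c, c'⟩, hc, hc'⟩ h h'
    refine ⟨⟨(b + (c - a), b' + (c' - a')), fun j hj => ?_, fun i => ?_⟩, ?_, ?_, ?_⟩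
    · have := hb j hj
      have := hc j hj
      simp only [Pi.add_apply, Pi.sub_apply] at *; omega
    · have h1 := ha' i
      have h2 := hb' i
      have h4 := hc' i
      have h3 : a i ≤ b i := h i
      have h5 : a i ≤ c i := h' i
      simp only [Pi.add_apply, Pi.sub_apply] at *; omega
    · intro i; simp
    · intro i
      have h3 : a i ≤ b i := h i
      have h5 : a i ≤ c i := h' i
      simp only [Pi.add_apply, Pi.sub_apply] at *; omega
    · ext i
      · have h5 : a i ≤ c i := h' i
        simp [qv, Nat.cast_sub h5]; ring
      · have h1 := ha' i
        have h4 := hc' i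
        have h5 : a i ≤ c i := h' i
        have h6 : a' i ≤ c' i := by simp only at *; omega
        simp [qv, Nat.cast_sub h6]; ring

theorem stepSys_P (D : Fin d → ℤ) (m : ℕ) (a) (p : PairQ d) : p ∈ (stepSys D m).P a ↔
    ∃ u ∈ orth (Fin d), (∀ j : Fin d, (j:ℕ) < m → u j = 0) ∧ p = (u, u) := by
  obtain ⟨⟨a, a'⟩, ha, ha'⟩ := a
  constructor
  · intro hp
    have hn := Sys.P_nat hp
    obtain ⟨⟨⟨b, b'⟩, hb, hb'⟩, h, h2⟩ := hp
    refine ⟨p.1, hn.1, fun j hj => ?_, ?_⟩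
    · have h3 := congrFun (congrArg Prod.fst h2) j
      have h4 := hb j hj
      have h5 := ha j hj
      simp only [stepSys, qv, Prod.fst_add, Pi.add_apply] at h3 h4 h5
      rw [h4, h5] at h3
      push_cast at h3
      linarith
    · ext i
      · rfl
      have h3 := congrFun (congrArg Prod.fst h2) i
      have h4 := congrFun (congrArg Prod.snd h2) i
      have h5 : ((b' i : ℤ) : ℚ) = ((b i + D i : ℤ) : ℚ) := congrArg _ (hb' i)
      have h6 : ((a' i : ℤ) : ℚ) = ((a i + D i : ℤ) : ℚ) := congrArg _ (ha' i)
      simp [stepSys, qv] at *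
      linarith
  · rintro ⟨u, hu, h0, rfl⟩
    obtain ⟨n, rfl⟩ := orth_qv hu
    refine ⟨⟨(a + n, a' + n), fun j hj => ?_, fun i => ?_⟩, fun i => ?_, ?_⟩
    · have := h0 j hj
      have := ha j hj
      simp [qv] at *; omega
    · have := ha' i
      simp at *; omega
    · simp
    · simp [stepSys, qv_add]

theorem stepSys_HH (D : Fin d → ℤ) (m : ℕ) (a) : HH ((stepSys D m).P a) := by
  let f : QV d →ₗ[ℚ] PairQ d := LinearMap.prod LinearMap.id LinearMap.id
  let W : Submodule ℚ (QV d) :=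
    { carrier := {u | ∀ j : Fin d, (j:ℕ) < m → u j = 0}
      zero_mem' := fun j hj => rfl
      add_mem' := fun {a b} h1 h2 j hj => by simp [h1 j hj, h2 j hj]
      smul_mem' := fun c x h j hj => by simp [h j hj] }
  have e : (stepSys D m).P a = (infW (orth (Fin d)) W).map f.toAddMonoidHom := by
    ext p
    rw [stepSys_P, AddSubmonoid.mem_map]
    constructor
    · rintro ⟨u, h1, h2, h3⟩
      exact ⟨u, ⟨h1, h2⟩, h3.symm⟩
    · rintro ⟨u, ⟨h1, h2⟩, h3⟩
      exact ⟨u, h1, h2, h3.symm⟩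
  rw [e]
  exact (HH_orth.infW W).map (WD_orth.infW W) f

theorem stepSys_shift (D : Fin d → ℤ) (m k : ℕ) (h : m ≤ k) : ShiftC k (stepSys D m) := by
  intro a δ h1 h2
  rw [stepSys_P]
  exact ⟨δ, h1, fun j hj => h2 j (by omega), rfl⟩

/-- finite unions -/
def unionSys {ι : Type} [Finite ι] (S : ι → Sys d) : Sys d where
  Ω := Σ i, (S i).Ω
  le := fun x y => ∃ h : x.1 = y.1, (S y.1).le (h ▸ x.2) y.2
  v := fun x => (S x.1).v x.2
  refl := fun a => ⟨rfl, (S a.1).refl _⟩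
  trans := by
    rintro ⟨i, a⟩ ⟨j, b⟩ ⟨k, c⟩ ⟨h, h1⟩ ⟨h', h2⟩
    dsimp at h h'
    subst h; subst h'
    exact ⟨rfl, (S i).trans h1 h2⟩
  nat := fun a => (S a.1).nat _
  wqo := by
    intro f
    obtain ⟨i, hi⟩ := Finite.exists_infinite_fiber (fun n => (f n).1)
    have hinf : Set.Infinite ((fun n => (f n).1) ⁻¹' {i}) := Set.infinite_coe_iff.1 hi
    have := hi
    classical
    let g := Nat.orderEmbeddingOfSet ((fun n => (f n).1) ⁻¹' {i})
    have hg : ∀ n, (f (g n)).1 = i := fun n => by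
      have : g n ∈ ((fun n => (f n).1) ⁻¹' {i}) := (Nat.orderEmbeddingOfSet_apply (s := (fun n => (f n).1) ⁻¹' {i}) (n := n)) ▸ Subtype.coe_prop _
      exact this
    have hg2 : ∀ n, ∃ x : (S i).Ω, f (g n) = ⟨i, x⟩ := by
      intro n
      have := hg n
      rcases h : f (g n) with ⟨j, x⟩
      rw [h] at this
      dsimp at this
      subst this
      exact ⟨x, rfl⟩
    choose x hx using hg2
    obtain ⟨m, n, h1, h2⟩ := (S i).wqo x
    refine ⟨g m, g n, g.strictMono h1, ?_⟩
    rw [hx, hx]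
    exact ⟨rfl, h2⟩
  mono := by
    rintro ⟨i, a⟩ ⟨j, b⟩ ⟨h, h1⟩
    dsimp at h
    subst h
    exact (S i).mono h1
  amalg := by
    rintro ⟨i, a⟩ ⟨j, b⟩ ⟨k, c⟩ ⟨h, h1⟩ ⟨h', h2⟩
    dsimp at h h'
    subst h; subst h'
    obtain ⟨e, h3, h4, h5⟩ := (S i).amalg h1 h2
    exact ⟨⟨i, e⟩, ⟨rfl, h3⟩, ⟨rfl, h4⟩, h5⟩

theorem unionSys_P {ι : Type} [Finite ι] (S : ι → Sys d) (i : ι) (a : (S i).Ω) :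
    (unionSys S).P ⟨i, a⟩ = (S i).P a := by
  ext p
  constructor
  · rintro ⟨⟨j, b⟩, ⟨h, h1⟩, h2⟩
    dsimp at h
    subst h
    exact ⟨b, h1, h2⟩
  · rintro ⟨b, h1, h2⟩
    exact ⟨⟨i, b⟩, ⟨rfl, h1⟩, h2⟩

theorem unionSys_good {V : PVAS d} {k : ℕ} {ι : Type} [Finite ι] {S : ι → Sys d}
    (h : ∀ i, Good V k (S i)) : Good V k (unionSys S) := by
  rintro ⟨i, a⟩
  rw [unionSys_P]
  exact h i a

theorem unionSys_shift {k : ℕ} {ι : Type} [Finite ι] {S : ι → Sys d}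
    (h : ∀ i, ShiftC k (S i)) : ShiftC k (unionSys S) := by
  rintro ⟨i, a⟩
  rw [unionSys_P]
  exact h i a

theorem unionSys_rel {ι : Type} [Finite ι] {S : ι → Sys d} {x y : NVec d} :
    (unionSys S).rel x y ↔ ∃ i, (S i).rel x y :=
  ⟨fun ⟨⟨i, a⟩, h⟩ => ⟨i, a, h⟩, fun ⟨i, a, h⟩ => ⟨⟨i, a⟩, h⟩⟩

/-- composition -/
def compSys (S T : Sys d) : Sys d where
  Ω := {p : S.Ω × T.Ω // (S.v p.1).2 = (T.v p.2).1}
  le := fun p q => S.le p.1.1 q.1.1 ∧ T.le p.1.2 q.1.2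
  v := fun p => ((S.v p.1.1).1, (T.v p.1.2).2)
  refl := fun a => ⟨S.refl _, T.refl _⟩
  trans := fun h1 h2 => ⟨S.trans h1.1 h2.1, T.trans h1.2 h2.2⟩
  nat := fun a => ⟨(S.nat _).1, (T.nat _).2⟩
  wqo := by
    intro f
    obtain ⟨φ, h1, h2⟩ := wqo_subseq S.refl S.trans S.wqo (fun n => (f n).1.1)
    obtain ⟨m, n, h3, h4⟩ := T.wqo (fun n => (f (φ n)).1.2)
    exact ⟨φ m, φ n, h1 h3, h2 m n h3.le, h4⟩
  mono := fun h => ⟨(S.mono h.1).1, (T.mono h.2).2⟩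
  amalg := by
    rintro ⟨⟨a, a'⟩, ha⟩ ⟨⟨b, b'⟩, hb⟩ ⟨⟨c, c'⟩, hc⟩ h h'
    obtain ⟨e, h1, h2, h3⟩ := S.amalg h.1 h'.1
    obtain ⟨e', h1', h2', h3'⟩ := T.amalg h.2 h'.2
    refine ⟨⟨⟨e, e'⟩, ?_⟩, ⟨h1, h1'⟩, ⟨h2, h2'⟩, ?_⟩
    · dsimp at *
      rw [h3, h3']; simp [ha, hb, hc]
    · dsimp
      rw [h3, h3']; ext <;> simp

theorem compSys_P (S T : Sys d) (p) : (compSys S T).P p = relComp (S.P p.1.1) (T.P p.1.2) := by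
  obtain ⟨⟨a, a'⟩, ha⟩ := p
  ext p
  dsimp at ha
  constructor
  · rintro ⟨⟨⟨b, b'⟩, hb⟩, h, h2⟩
    dsimp at hb
    refine ⟨(S.v b).2 - (S.v a).2, ⟨b, h.1, ?_⟩, ⟨b', h.2, ?_⟩⟩
    · ext1
      · have := congrArg Prod.fst h2
        exact this
      · simp
    · ext1
      · simp [ha, hb]
      · have := congrArg Prod.snd h2
        exact this
  · rintro ⟨y, ⟨b, h1, h2⟩, ⟨b', h1', h2'⟩⟩
    refine ⟨⟨⟨b, b'⟩, ?_⟩, ⟨h1, h1'⟩, ?_⟩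
    · dsimp
      rw [h2, h2']; simp [ha]
    · dsimp [compSys]
      rw [h2, h2']; ext <;> simp

theorem compSys_good {V : PVAS d} {k : ℕ} {S T : Sys d}
    (h : Good V k S) (h' : Good V k T) : Good V k (compSys S T) := by
  intro p
  rw [compSys_P]
  refine ⟨((h _).1.relComp (h' _).1 (Sys.wd _) (Sys.wd _)).1, ?_⟩
  have h1 := (h p.1.1).2
  have h2 := (h' p.1.2).2
  exact Fl.comp (y := (S.v p.1.1).2) h1 (by rw [p.2]; exact h2)

theorem compSys_shift {k : ℕ} {S T : Sys d}
    (h : ShiftC k S) (h' : ShiftC k T) : ShiftC k (compSys S T) := by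
  intro p δ h1 h2
  rw [compSys_P]
  exact ⟨δ, h _ _ h1 h2, h' _ _ h1 h2⟩

theorem compSys_rel {S T : Sys d} {x z : NVec d} :
    (compSys S T).rel x z ↔ ∃ y, S.rel x y ∧ T.rel y z := by
  constructor
  · rintro ⟨⟨⟨a, a'⟩, ha⟩, h⟩
    obtain ⟨y, hy⟩ := orth_qv (S.nat a).2
    dsimp at ha
    have e1 := congrArg Prod.fst h
    have e2 := congrArg Prod.snd h
    refine ⟨y, ⟨a, Prod.ext e1 hy⟩, ⟨a', Prod.ext ?_ e2⟩⟩
    rw [← ha, hy]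
  · rintro ⟨y, ⟨a, h⟩, ⟨b, h'⟩⟩
    refine ⟨⟨⟨a, b⟩, ?_⟩, ?_⟩
    · dsimp; rw [h, h']
    · dsimp [compSys]; rw [h, h']

/-- restriction to a subspace -/
def resSys (S : Sys d) (W : Submodule ℚ (PairQ d)) : Sys d where
  Ω := {a : S.Ω // S.v a ∈ W}
  le := fun p q => S.le p.1 q.1
  v := fun p => S.v p.1
  refl := fun a => S.refl _
  trans := fun h1 h2 => S.trans h1 h2
  nat := fun a => S.nat _
  wqo := wqo_comap S.wqo _
  mono := fun h => S.mono h
  amalg := by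
    rintro ⟨a, ha⟩ ⟨b, hb⟩ ⟨c, hc⟩ h h'
    obtain ⟨e, h1, h2, h3⟩ := S.amalg h h'
    refine ⟨⟨e, ?_⟩, h1, h2, h3⟩
    rw [h3]
    exact W.sub_mem (W.add_mem hb hc) ha

theorem resSys_P (S : Sys d) (W : Submodule ℚ (PairQ d)) (a) :
    (resSys S W).P a = infW (S.P a.1) W := by
  obtain ⟨a, ha⟩ := a
  ext p
  constructor
  · rintro ⟨⟨b, hb⟩, h, h2⟩
    refine ⟨⟨b, h, h2⟩, ?_⟩
    have : p = S.v b - S.v a := by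
      have : S.v b = S.v a + p := h2
      rw [this]; abel
    rw [this]
    exact W.sub_mem hb ha
  · rintro ⟨⟨b, h, h2⟩, hp⟩
    refine ⟨⟨b, ?_⟩, h, h2⟩
    rw [h2]
    exact W.add_mem ha hp

theorem resSys_good {V : PVAS d} {k : ℕ} {S : Sys d} (W : Submodule ℚ (PairQ d))
    (h : Good V k S) : Good V k (resSys S W) := by
  intro a
  rw [resSys_P]
  exact ⟨(h _).1.infW _, (h a.1).2.mono (fun x hx => hx.1) le_rfl⟩

theorem resSys_rel {S : Sys d} {W : Submodule ℚ (PairQ d)} {x y : NVec d} :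
    (resSys S W).rel x y ↔ S.rel x y ∧ (qv x, qv y) ∈ W := by
  constructor
  · rintro ⟨⟨a, ha⟩, h⟩
    have h' : S.v a = _ := h
    exact ⟨⟨a, h⟩, h' ▸ ha⟩
  · rintro ⟨⟨a, h⟩, hW⟩
    exact ⟨⟨a, h ▸ hW⟩, h⟩

/-- intersection with a linear set -/
def linSys (S : Sys d) (β : PairQ d) {r : ℕ} (g : Fin r → PairQ d) : Sys d where
  Ω := {a : S.Ω × (Fin r → ℕ) // S.v a.1 = β + ∑ i, a.2 i • g i}
  le := fun p q => S.le p.1.1 q.1.1 ∧ p.1.2 ≤ q.1.2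
  v := fun p => S.v p.1.1
  refl := fun a => ⟨S.refl _, le_rfl⟩
  trans := fun h1 h2 => ⟨S.trans h1.1 h2.1, h1.2.trans h2.2⟩
  nat := fun a => S.nat _
  wqo := by
    intro f
    obtain ⟨φ, h1, h2⟩ := wqo_subseq S.refl S.trans S.wqo (fun n => (f n).1.1)
    obtain ⟨m, n, h3, h4⟩ := (wellQuasiOrdered_le (α := Fin r → ℕ)) (fun n => (f (φ n)).1.2)
    exact ⟨φ m, φ n, h1 h3, h2 m n h3.le, h4⟩
  mono := fun h => S.mono h.1
  amalg := by
    rintro ⟨⟨a, μ⟩, ha⟩ ⟨⟨b, ν⟩, hb⟩ ⟨⟨c, ρ⟩, hc⟩ h h'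
    obtain ⟨e, h1, h2, h3⟩ := S.amalg h.1 h'.1
    have hν : ∀ i, μ i ≤ ν i := h.2
    have hρ : ∀ i, μ i ≤ ρ i := h'.2
    refine ⟨⟨⟨e, ν + (ρ - μ)⟩, ?_⟩, ⟨h1, fun i => ?_⟩, ⟨h2, fun i => ?_⟩, h3⟩
    · dsimp at *
      rw [h3, ha, hb, hc]
      have : ∑ i, (ν i + (ρ i - μ i)) • g i = ∑ i, ν i • g i + ∑ i, ρ i • g i - ∑ i, μ i • g i := by
        rw [eq_sub_iff_add_eq, ← Finset.sum_add_distrib, ← Finset.sum_add_distrib]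
        refine Finset.sum_congr rfl fun i _ => ?_
        rw [← add_smul, ← add_smul]
        congr 1
        have := hρ i
        omega
      rw [this]; abel
    · simp
    · have := hν i
      have := hρ i
      simp only [Pi.add_apply, Pi.sub_apply]; omega

theorem linSys_good {V : PVAS d} {k : ℕ} {S : Sys d} (β : PairQ d) {r : ℕ} (g : Fin r → PairQ d)
    (h : Good V k S) : Good V k (linSys S β g) := by
  rintro ⟨⟨a, μ⟩, ha⟩
  dsimp at ha
  let Q : AddSubmonoid (PairQ d) :=
    { carrier := {x | ∃ c : Fin r → ℕ, x = ∑ i, c i • g i}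
      zero_mem' := ⟨0, by simp⟩
      add_mem' := by
        rintro _ _ ⟨c, rfl⟩ ⟨c', rfl⟩
        exact ⟨c + c', by simp [add_smul, Finset.sum_add_distrib]⟩ }
  have e : (linSys S β g).P ⟨⟨a, μ⟩, ha⟩ = S.P a ⊓ Q := by
    ext p
    constructor
    · rintro ⟨⟨⟨b, ν⟩, hb⟩, h1, h2⟩
      dsimp at hb
      have h2' : S.v b = S.v a + p := h2
      have hν : ∀ i, μ i ≤ ν i := h1.2
      refine ⟨⟨b, h1.1, h2⟩, ν - μ, ?_⟩
      have : p + ∑ i, μ i • g i = ∑ i, ν i • g i := by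
        rw [hb, ha, add_assoc] at h2'
        rw [add_comm, add_left_cancel h2']
      rw [← add_left_inj (∑ i, μ i • g i), this, ← Finset.sum_add_distrib]
      refine Finset.sum_congr rfl fun i _ => ?_
      rw [← add_smul]
      congr 1
      have := hν i
      simp only [Pi.sub_apply]; omega
    · rintro ⟨⟨b, h1, h2⟩, c, hc⟩
      refine ⟨⟨⟨b, μ + c⟩, ?_⟩, ⟨h1, ?_⟩, h2⟩
      · dsimp
        rw [h2, ha, hc]; simp [add_smul, Finset.sum_add_distrib, add_assoc]
      · intro i; simp
  rw [e]
  have hQ := HH_gen g Q (fun x => Iff.rfl)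
  exact ⟨((h a).1.inf hQ.1 (Sys.wd _) hQ.2).1, (h a).2.mono inf_le_left le_rfl⟩

theorem linSys_rel {S : Sys d} {β : PairQ d} {r : ℕ} {g : Fin r → PairQ d} {x y : NVec d} :
    (linSys S β g).rel x y ↔ S.rel x y ∧ ∃ c : Fin r → ℕ, (qv x, qv y) = β + ∑ i, c i • g i := by
  constructor
  · rintro ⟨⟨⟨a, μ⟩, ha⟩, h⟩
    have h' : S.v a = _ := h
    exact ⟨⟨a, h⟩, μ, h' ▸ ha⟩
  · rintro ⟨⟨a, h⟩, μ, hμ⟩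
    exact ⟨⟨⟨a, μ⟩, h.trans hμ⟩, h⟩
end Constr


def NJ (d k : ℕ) : AddSubmonoid (QV d) where
  carrier := {x | x ∈ orth (Fin d) ∧ ∀ i : Fin d, (i:ℕ) < k → x i = 0}
  zero_mem' := ⟨zero_mem _, fun i _ => rfl⟩
  add_mem' := fun h1 h2 => ⟨add_mem h1.1 h2.1, fun i hi => by simp [h1.2 i hi, h2.2 i hi]⟩

theorem NJ.sub {d k : ℕ} {x y : QV d} (hx : x ∈ NJ d k) (hy : y ∈ NJ d k) (h : x ≤ y) :
    y - x ∈ NJ d k :=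
  ⟨orth_sub hx.1 hy.1 h, fun i hi => by simp [hx.2 i hi, hy.2 i hi]⟩

theorem NJ.nonneg {d k : ℕ} {x : QV d} (hx : x ∈ NJ d k) : 0 ≤ x := fun i => orth_nonneg hx.1 i

structure Lab {d : ℕ} (L : Sys d) (k : ℕ) : Prop where
  supp : ∀ a, (L.v a).1 ∈ NJ d k ∧ (L.v a).2 ∈ NJ d k
  shift : ∀ a, ∀ δ ∈ NJ d k, (δ, δ) ∈ L.P a

section SF
variable {α : Type} {r : α → α → Prop}

theorem SF_append {l1 l2 m1 m2 : List α} (h1 : List.SublistForall₂ r l1 m1)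
    (h2 : List.SublistForall₂ r l2 m2) : List.SublistForall₂ r (l1 ++ l2) (m1 ++ m2) := by
  induction h1 with
  | nil =>
    rename_i l
    induction l with
    | nil => exact h2
    | cons a l ih => exact List.SublistForall₂.cons_right ih
  | cons hab _ ih => exact List.SublistForall₂.cons hab ih
  | cons_right _ ih => exact List.SublistForall₂.cons_right ih

theorem SF_of_forall {l m : List α} (h : List.Forall₂ r l m) : List.SublistForall₂ r l m :=
  List.sublistForall₂_iff.2 ⟨m, h, List.Sublist.refl _⟩

theorem SF_right {l m : List α} (h : List.SublistForall₂ r l m) (m' : List α) :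
    List.SublistForall₂ r l (m ++ m') := by
  have := SF_append h (List.SublistForall₂.nil (R := r) (l := m'))
  simpa using this

theorem SF_left {l m : List α} (h : List.SublistForall₂ r l m) (m' : List α) :
    List.SublistForall₂ r l (m' ++ m) := by
  have := SF_append (List.SublistForall₂.nil (R := r) (l := m')) h
  simpa using this

theorem SF_cons_inv {a : α} {l l' : List α} (h : List.SublistForall₂ r (a :: l) l') :
    ∃ A b m, l' = A ++ b :: m ∧ r a b ∧ List.SublistForall₂ r l m := by
  generalize hl : a :: l = q at h
  induction h with
  | nil => cases hl
  | cons hab h2 _ => cases hl; exact ⟨[], _, _, rfl, hab, h2⟩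
  | cons_right _ ih =>
    obtain ⟨A, b, m, rfl, h1, h2⟩ := ih hl
    exact ⟨_ :: A, b, m, rfl, h1, h2⟩
end SF

section Star
variable {d : ℕ} (L : Sys d) (k : ℕ)

def IsRun : QV d → List L.Ω → QV d → Prop
  | x, [], y => x = y
  | x, a :: l, y => (L.v a).1 = x ∧ IsRun (L.v a).2 l y

def Rch (x y : QV d) : Prop := x ∈ NJ d k ∧ ∃ l, IsRun L x l y

variable {L k}

theorem IsRun.append {x y z : QV d} {l l' : List L.Ω} (h : IsRun L x l y) (h' : IsRun L y l' z) :
    IsRun L x (l ++ l') z := by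
  induction l generalizing x with
  | nil => cases h; exact h'
  | cons a l ih => exact ⟨h.1, ih h.2⟩

theorem IsRun.split {x z : QV d} {l l' : List L.Ω} (h : IsRun L x (l ++ l') z) :
    ∃ y, IsRun L x l y ∧ IsRun L y l' z := by
  induction l generalizing x with
  | nil => exact ⟨x, rfl, h⟩
  | cons a l ih =>
    obtain ⟨y, h1, h2⟩ := ih h.2
    exact ⟨y, ⟨h.1, h1⟩, h2⟩

variable (hL : Lab L k)
include hL

theorem IsRun.tgt {x y : QV d} {l : List L.Ω} (hx : x ∈ NJ d k) (h : IsRun L x l y) : y ∈ NJ d k := by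
  induction l generalizing x with
  | nil => cases h; exact hx
  | cons a l ih => exact ih (hL.supp a).2 h.2

theorem IsRun.shift {x y δ : QV d} {l : List L.Ω} (hδ : δ ∈ NJ d k) (h : IsRun L x l y) :
    ∃ l', List.Forall₂ L.le l l' ∧ IsRun L (x + δ) l' (y + δ) := by
  induction l generalizing x with
  | nil => cases h; exact ⟨[], List.Forall₂.nil, rfl⟩
  | cons a l ih =>
    obtain ⟨l', h1, h2⟩ := ih h.2
    obtain ⟨b, hb, hb'⟩ := hL.shift a δ hδ
    refine ⟨b :: l', List.Forall₂.cons hb h1, ?_, ?_⟩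
    · rw [hb', ← h.1]; rfl
    · rw [hb']; exact h2

theorem Rch.refl {x : QV d} (h : x ∈ NJ d k) : Rch L k x x := ⟨h, [], rfl⟩

theorem Rch.right {x y : QV d} (h : Rch L k x y) : y ∈ NJ d k := by
  obtain ⟨h1, l, h2⟩ := h
  exact h2.tgt hL h1

theorem Rch.trans {x y z : QV d} (h : Rch L k x y) (h' : Rch L k y z) : Rch L k x z := by
  obtain ⟨h1, l, h2⟩ := h
  obtain ⟨h1', l', h2'⟩ := h'
  exact ⟨h1, l ++ l', h2.append h2'⟩

theorem Rch.shift {x y δ : QV d} (h : Rch L k x y) (hδ : δ ∈ NJ d k) : Rch L k (x + δ) (y + δ) := by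
  obtain ⟨h1, l, h2⟩ := h
  obtain ⟨l', _, h3⟩ := h2.shift hL hδ
  exact ⟨add_mem h1 hδ, l', h3⟩

theorem Rch.label (a : L.Ω) : Rch L k (L.v a).1 (L.v a).2 := ⟨(hL.supp a).1, [a], rfl, rfl⟩

theorem star_amalg (l : List L.Ω) : ∀ {x y x' y' x'' y'' : QV d} {l' l'' : List L.Ω},
    x ∈ NJ d k → x' ∈ NJ d k → x'' ∈ NJ d k → IsRun L x l y → IsRun L x' l' y' → IsRun L x'' l'' y'' →
    x ≤ x' → x ≤ x'' → y ≤ y' → y ≤ y'' →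
    List.SublistForall₂ L.le l l' → List.SublistForall₂ L.le l l'' →
    ∃ m, IsRun L (x' + x'' - x) m (y' + y'' - y) ∧ List.SublistForall₂ L.le l' m ∧
      List.SublistForall₂ L.le l'' m := by
  induction l with
  | nil =>
    intro x y x' y' x'' y'' l' l'' hx hx' hx'' h h' h'' h1 h2 h3 h4 _ _
    cases h
    obtain ⟨m1, a1, b1⟩ := h'.shift hL (NJ.sub hx hx'' h2)
    obtain ⟨m2, a2, b2⟩ := h''.shift hL (NJ.sub hx (h'.tgt hL hx') h3)
    refine ⟨m1 ++ m2, ?_, SF_right (SF_of_forall a1) _, SF_left (SF_of_forall a2) _⟩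
    have e1 : x' + x'' - x = x' + (x'' - x) := by abel
    have e2 : y' + y'' - x = y'' + (y' - x) := by abel
    have e3 : x'' + (y' - x) = y' + (x'' - x) := by abel
    rw [e1, e2]
    rw [e3] at b2
    exact b1.append b2
  | cons a l ih =>
    intro x y x' y' x'' y'' l' l'' hx hx' hx'' h h' h'' h1 h2 h3 h4 s1 s2
    obtain ⟨A', b', m', rfl, hb', s1'⟩ := SF_cons_inv s1
    obtain ⟨A'', b'', m'', rfl, hb'', s2'⟩ := SF_cons_inv s2
    obtain ⟨z', r1, r2⟩ := h'.split
    obtain ⟨z'', r1', r2'⟩ := h''.split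
    obtain ⟨e, q1, q2, q3⟩ := L.amalg hb' hb''
    have hxa : (L.v a).1 = x := h.1
    have hz' : (L.v b').1 = z' := r2.1
    have hz'' : (L.v b'').1 = z'' := r2'.1
    obtain ⟨n1, a1, c1⟩ := r1.shift hL (NJ.sub hx hx'' h2)
    have hxz : x ≤ z' := by rw [← hxa, ← hz']; exact (L.mono hb').1
    obtain ⟨n2, a2, c2⟩ := r1'.shift hL (NJ.sub hx (r1.tgt hL hx') hxz)
    obtain ⟨n3, c3, d1, d2⟩ := ih (hL.supp a).2 (hL.supp b').2 (hL.supp b'').2 h.2 r2.2 r2'.2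
      (L.mono hb').2 (L.mono hb'').2 h3 h4 s1' s2'
    refine ⟨n1 ++ (n2 ++ e :: n3), ?_, ?_, ?_⟩
    · have e1 : x' + x'' - x = x' + (x'' - x) := by abel
      rw [e1]
      refine c1.append ?_
      have e2 : z' + (x'' - x) = x'' + (z' - x) := by abel
      rw [e2]
      refine c2.append ⟨?_, ?_⟩
      · rw [q3]
        simp only [Prod.fst_add, Prod.fst_sub]
        rw [hz', hz'', hxa]; abel
      · rw [q3]; exact c3
    · exact SF_append (SF_of_forall a1) (SF_left (List.SublistForall₂.cons q1 d1) _)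
    · refine SF_left (SF_append (SF_of_forall a2) (List.SublistForall₂.cons q2 d2)) _

omit hL in
theorem higman : WellQuasiOrdered (List.SublistForall₂ L.le) := by
  let _ : IsPreorder L.Ω L.le := { refl := L.refl, trans := fun _ _ _ => L.trans }
  have h := Set.PartiallyWellOrderedOn.partiallyWellOrderedOn_sublistForall₂ L.le
    (Set.partiallyWellOrderedOn_univ_iff.2 L.wqo)
  have e : {l : List L.Ω | ∀ x, x ∈ l → x ∈ (Set.univ : Set L.Ω)} = Set.univ := by ext; simp
  rw [e] at h
  exact Set.partiallyWellOrderedOn_univ_iff.1 h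

omit hL in
theorem SF_refl (l : List L.Ω) : List.SublistForall₂ L.le l l := by
  have : Std.Refl L.le := ⟨L.refl⟩
  exact Std.Refl.refl l

omit hL in
theorem SF_trans {l m n : List L.Ω} (h : List.SublistForall₂ L.le l m)
    (h' : List.SublistForall₂ L.le m n) : List.SublistForall₂ L.le l n := by
  have : IsTrans L.Ω L.le := ⟨fun _ _ _ => L.trans⟩
  exact IsTrans.trans _ _ _ h h'

def starSys : Sys d where
  Ω := {p : PairQ d × List L.Ω // p.1.1 ∈ NJ d k ∧ IsRun L p.1.1 p.2 p.1.2}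
  le := fun p q => p.1.1 ≤ q.1.1 ∧ List.SublistForall₂ L.le p.1.2 q.1.2
  v := fun p => p.1.1
  refl := fun a => ⟨le_rfl, SF_refl _⟩
  trans := fun h1 h2 => ⟨h1.1.trans h2.1, SF_trans h1.2 h2.2⟩
  nat := fun a => ⟨a.2.1.1, (a.2.2.tgt hL a.2.1).1⟩
  wqo := by
    intro f
    obtain ⟨φ, h1, h2⟩ := wqo_subseq SF_refl SF_trans higman (fun n => (f n).1.2)
    choose n1 hn1 using fun n => orth_qv (f n).2.1.1
    choose n2 hn2 using fun n => orth_qv ((f n).2.2.tgt hL (f n).2.1).1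
    obtain ⟨m, n, h3, h4⟩ := (wellQuasiOrdered_le (α := (Fin d → ℕ))).prod
      (wellQuasiOrdered_le (α := (Fin d → ℕ))) (fun n => (n1 (φ n), n2 (φ n)))
    refine ⟨φ m, φ n, h1 h3, ⟨?_, ?_⟩, h2 m n h3.le⟩
    · rw [hn1, hn1]; exact qv_le.2 h4.1
    · rw [hn2, hn2]; exact qv_le.2 h4.2
  mono := fun h => h.1
  amalg := by
    rintro ⟨⟨⟨x, y⟩, l⟩, hx, h⟩ ⟨⟨⟨x', y'⟩, l'⟩, hx', h'⟩ ⟨⟨⟨x'', y''⟩, l''⟩, hx'', h''⟩ ⟨⟨h1, h2⟩, h3⟩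
      ⟨⟨h1', h2'⟩, h3'⟩
    obtain ⟨m, c1, c2, c3⟩ := star_amalg hL l hx hx' hx'' h h' h'' h1 h1' h2 h2' h3 h3'
    dsimp only at *
    have hs : x' + x'' - x ∈ NJ d k := by
      have := add_mem hx' (NJ.sub hx hx'' h1')
      rwa [← add_sub_assoc] at this
    have ht : y' + y'' - y = y' + (y'' - y) := by abel
    refine ⟨⟨⟨(x' + x'' - x, y' + y'' - y), m⟩, hs, c1⟩, ⟨⟨?_, ?_⟩, c2⟩, ⟨⟨?_, ?_⟩, c3⟩, rfl⟩
    · dsimp only; rw [add_sub_assoc]; exact le_add_of_nonneg_right (sub_nonneg.2 h1')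
    · dsimp only; rw [add_sub_assoc]; exact le_add_of_nonneg_right (sub_nonneg.2 h2')
    · dsimp only; rw [add_comm x', add_sub_assoc]; exact le_add_of_nonneg_right (sub_nonneg.2 h1)
    · dsimp only; rw [add_comm y', add_sub_assoc]; exact le_add_of_nonneg_right (sub_nonneg.2 h2)

def loopM (c : QV d) : AddSubmonoid (PairQ d) where
  carrier := {p | p.1 ∈ NJ d k ∧ p.2 ∈ NJ d k ∧ (c ∈ NJ d k → Rch L k (c + p.1) (c + p.2))}
  zero_mem' := ⟨zero_mem _, zero_mem _, fun h => by simpa using Rch.refl hL h⟩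
  add_mem' := by
    rintro p q ⟨h1, h2, h3⟩ ⟨h4, h5, h6⟩
    refine ⟨add_mem h1 h4, add_mem h2 h5, fun h => ?_⟩
    have a := (h3 h).shift hL h4
    have b := (h6 h).shift hL h2
    have := a.trans hL (by convert b using 1; abel)
    convert this using 1
    · simp only [Prod.fst_add]; abel
    · simp only [Prod.snd_add]; abel

def PR : QV d → List L.Ω → AddSubmonoid (PairQ d)
  | q, [] => loopM hL q
  | q, a :: l => relComp (loopM hL q) (relComp (L.P a) (PR (L.v a).2 l))

theorem P_NJ {a : L.Ω} {p : PairQ d} (h : p ∈ L.P a) : p.1 ∈ NJ d k ∧ p.2 ∈ NJ d k := by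
  have h0 := Sys.P_nat h
  obtain ⟨b, hb, hb'⟩ := h
  have hm := L.mono hb
  have e : p = L.v b - L.v a := by rw [hb']; abel
  rw [e]
  exact ⟨NJ.sub (hL.supp a).1 (hL.supp b).1 hm.1, NJ.sub (hL.supp a).2 (hL.supp b).2 hm.2⟩

theorem PR_NJ (l : List L.Ω) (x : QV d) {p : PairQ d} (h : p ∈ PR hL x l) :
    p.1 ∈ NJ d k ∧ p.2 ∈ NJ d k := by
  induction l generalizing x p with
  | nil => exact ⟨h.1, h.2.1⟩
  | cons a l ih =>
    obtain ⟨y, h1, z, h2, h3⟩ := h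
    exact ⟨h1.1, (ih _ h3).2⟩

theorem PR_run (l : List L.Ω) {x y : QV d} (hx : x ∈ NJ d k) (h : IsRun L x l y) {p : PairQ d}
    (hp : p ∈ PR hL x l) : ∃ l', List.SublistForall₂ L.le l l' ∧ IsRun L (x + p.1) l' (y + p.2) := by
  induction l generalizing x p with
  | nil =>
    cases h
    obtain ⟨_, l', h⟩ := hp.2.2 hx
    exact ⟨l', List.SublistForall₂.nil, h⟩
  | cons a l ih =>
    obtain ⟨z, h1, w, ⟨b, hb, hb'⟩, h3⟩ := hp
    obtain ⟨_, l1, h4⟩ := h1.2.2 hx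
    obtain ⟨l', h5, h6⟩ := ih (hL.supp a).2 h.2 h3
    refine ⟨l1 ++ b :: l', SF_left (List.SublistForall₂.cons hb h5) _, h4.append ⟨?_, ?_⟩⟩
    · rw [hb']
      simp [h.1]
    · rw [hb']; exact h6

theorem run_PR (l : List L.Ω) {x y x' y' : QV d} {l' : List L.Ω} (hx : x ∈ NJ d k)
    (hx' : x' ∈ NJ d k) (h : IsRun L x l y) (h' : IsRun L x' l' y') (hxx : x ≤ x') (hyy : y ≤ y')
    (hl : List.SublistForall₂ L.le l l') : (x' - x, y' - y) ∈ PR hL x l := by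
  induction l generalizing x x' l' with
  | nil =>
    cases h
    exact ⟨NJ.sub hx hx' hxx, NJ.sub hx (h'.tgt hL hx') hyy, fun _ => ⟨by simpa using hx', l', by simpa using h'⟩⟩
  | cons a l ih =>
    obtain ⟨A, b, m, rfl, hb, hs⟩ := SF_cons_inv hl
    obtain ⟨z, r1, r2⟩ := h'.split
    have hz : (L.v b).1 = z := r2.1
    have ha : (L.v a).1 = x := h.1
    have hxz : x ≤ z := by rw [← ha, ← hz]; exact (L.mono hb).1
    refine ⟨z - x, ⟨NJ.sub hx hx' hxx, NJ.sub hx (r1.tgt hL hx') hxz, fun _ =>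
      ⟨by simpa using hx', A, by simpa using r1⟩⟩, (L.v b).2 - (L.v a).2, ?_, ?_⟩
    · refine ⟨b, hb, ?_⟩
      ext1
      · simp [hz, ha]
      · simp
    · exact ih (hL.supp a).2 (hL.supp b).2 h.2 r2.2 (L.mono hb).2 hs

theorem starSys_P (a : (starSys hL).Ω) : (starSys hL).P a = PR hL a.1.1.1 a.1.2 := by
  obtain ⟨⟨⟨x, y⟩, l⟩, hx, h⟩ := a
  dsimp only at *
  ext p
  constructor
  · rintro ⟨⟨⟨⟨x', y'⟩, l'⟩, hx', h'⟩, hle, hv⟩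
    have hv' : (x', y') = (x, y) + p := hv
    have e : p = (x' - x, y' - y) := by
      have : p = (x', y') - (x, y) := by rw [hv']; abel
      exact this
    rw [e]
    exact run_PR hL l hx hx' h h' hle.1.1 hle.1.2 hle.2
  · intro hp
    obtain ⟨l', h1, h2⟩ := PR_run hL l hx h hp
    have h3 := PR_NJ hL l x hp
    exact ⟨⟨⟨(x + p.1, y + p.2), l'⟩, add_mem hx h3.1, h2⟩,
      ⟨⟨le_add_of_nonneg_right (NJ.nonneg h3.1), le_add_of_nonneg_right (NJ.nonneg h3.2)⟩, h1⟩, rfl⟩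

theorem loopM_WD {c : QV d} (hc : c ∈ NJ d k) : WD (loopM hL c) := by
  let a : (starSys hL).Ω := ⟨⟨(c, c), []⟩, hc, rfl⟩
  have := Sys.wd a
  rw [starSys_P] at this
  exact this

theorem starSys_shift : ShiftC k (starSys hL) := by
  intro a δ h1 h2
  have hδ : δ ∈ NJ d k := ⟨h1, h2⟩
  rw [starSys_P]
  obtain ⟨⟨⟨x, y⟩, l⟩, hx, h⟩ := a
  dsimp only
  have h0 : ∀ c, (δ, δ) ∈ loopM hL c := fun c => ⟨hδ, hδ, fun hc => Rch.refl hL (add_mem hc hδ)⟩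
  clear hx h
  induction l generalizing x with
  | nil => exact h0 x
  | cons a l ih => exact ⟨δ, h0 x, δ, hL.shift a δ hδ, ih _⟩

/-! flattability -/
variable {V : PVAS d}

theorem run_word (hg : Good V k L) {l : List L.Ω} {x y : QV d} (h : IsRun L x l y)
    {x' : NVec d} (hx : x = qv x') :
    ∃ y' : NVec d, y = qv y' ∧ ∃ w : List V.E, (∀ e ∈ w, V.test e ≤ k) ∧ V.StepWord w x' y' := by
  induction l generalizing x x' with
  | nil => cases h; exact ⟨x', hx, [], by simp, rfl⟩
  | cons a l ih =>
    obtain ⟨A, hA⟩ := (hg a).2 0 (fun _ => 0) (fun i => zero_mem _)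
    obtain ⟨ws, h1, h2⟩ := hA 0 (zero_mem _)
    obtain ⟨x1, y1, e1, f1⟩ := h2 (L.v a) ⟨fun _ => 0, by simp⟩
    obtain ⟨w, h3, h4⟩ := flatw_word h1 f1
    have hxx : x' = x1 := qv_inj (by rw [← hx, ← h.1, e1])
    subst hxx
    obtain ⟨y', h5, w', h6, h7⟩ := ih h.2 (x' := y1) (by rw [e1])
    refine ⟨y', h5, w ++ w', fun e he => ?_, stepWord_append h4 h7⟩
    rcases List.mem_append.1 he with h | h
    · exact h3 e h
    · exact h6 e h

theorem iter_flat (hg : Good V k L) {c u w : QV d} (hc : c ∈ NJ d k) (hu : u ∈ NJ d k) (hw : w ∈ NJ d k)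
    (h : Rch L k (c + u) (c + w)) : ∃ W : List V.E, (∀ e ∈ W, V.test e ≤ k) ∧ ∀ n : ℕ, ∀ δ ∈ NJ d k,
      ∃ x y : NVec d, c + δ + n • u = qv x ∧ c + δ + n • w = qv y ∧
        Relation.ReflTransGen (V.StepWord W) x y := by
  obtain ⟨h1, l, hl⟩ := h
  obtain ⟨x0, hx0⟩ := orth_qv h1.1
  obtain ⟨y0, hy0, W, hW, hs⟩ := run_word hL hg hl hx0
  refine ⟨W, hW, fun n => ?_⟩
  induction n with
  | zero =>
    intro δ hδ
    obtain ⟨x, hx⟩ := orth_qv (add_mem hc hδ).1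
    exact ⟨x, x, by simpa using hx, by simpa using hx, Relation.ReflTransGen.refl⟩
  | succ n ih =>
    intro δ hδ
    obtain ⟨x, y, e1, e2, h2⟩ := ih (δ + w) (add_mem hδ hw)
    have hδ' : δ + n • u ∈ NJ d k := add_mem hδ (nsmul_mem hu n)
    obtain ⟨δ0, hδ0⟩ := orth_qv hδ'.1
    refine ⟨x0 + δ0, y, ?_, ?_, ?_⟩
    · rw [qv_add, ← hx0, ← hδ0, succ_nsmul]; abel
    · rw [← e2, succ_nsmul]; abel
    · refine Relation.ReflTransGen.head ?_ h2
      have hx : x = y0 + δ0 := qv_inj (by rw [qv_add, ← hy0, ← hδ0, ← e1]; abel)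
      rw [hx]
      refine stepWord_shift hW (fun i hi => ?_) hs
      have := hδ'.2 i hi
      rw [hδ0] at this
      simpa [qv] using this

theorem multi_flat (hg : Good V k L) {c : QV d} (hc : c ∈ NJ d k) (r : ℕ) (p : Fin r → PairQ d)
    (hp : ∀ i, p i ∈ loopM hL c) : ∃ ws : List (List V.E), (∀ w ∈ ws, ∀ e ∈ w, V.test e ≤ k) ∧
      ∀ κ : Fin r → ℕ, ∀ δ ∈ NJ d k, ∃ x y : NVec d, c + δ + ∑ i, κ i • (p i).1 = qv x ∧
        c + δ + ∑ i, κ i • (p i).2 = qv y ∧ flatw V ws x y := by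
  induction r with
  | zero =>
    refine ⟨[], by simp, fun κ δ hδ => ?_⟩
    obtain ⟨x, hx⟩ := orth_qv (add_mem hc hδ).1
    exact ⟨x, x, by simpa using hx, by simpa using hx, rfl⟩
  | succ r ih =>
    obtain ⟨ws, h1, h2⟩ := ih (fun i => p i.succ) (fun i => hp _)
    obtain ⟨W, hW, h3⟩ := iter_flat hL hg hc (hp 0).1 (hp 0).2.1 ((hp 0).2.2 hc)
    refine ⟨W :: ws, ?_, fun κ δ hδ => ?_⟩
    · intro w hw
      rcases List.mem_cons.1 hw with rfl | hw
      · exact hW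
      · exact h1 w hw
    · obtain ⟨x, y, e1, e2, f1⟩ := h2 (fun i => κ i.succ) (δ + κ 0 • (p 0).2)
        (add_mem hδ (nsmul_mem (hp 0).2.1 _))
      obtain ⟨x', y', e1', e2', f2⟩ := h3 (κ 0) (δ + ∑ i : Fin r, κ i.succ • (p i.succ).1)
        (add_mem hδ (sum_mem fun i _ => nsmul_mem (hp _).1 _))
      have hxy : y' = x := qv_inj (by rw [← e2', ← e1]; abel)
      subst hxy
      refine ⟨x', y, ?_, ?_, ⟨_, f2, f1⟩⟩
      · rw [← e1', Fin.sum_univ_succ]; abel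
      · rw [← e2, Fin.sum_univ_succ]; abel

theorem loopM_Fl (hg : Good V k L) {c : QV d} (hc : c ∈ NJ d k) : Fl V k (c, c) (loopM hL c) := by
  intro r p hp
  refine ⟨0, fun q hq => ?_⟩
  obtain ⟨ws, h1, h2⟩ := multi_flat hL hg hc (r + 1) (Fin.cons q p : Fin (r+1) → PairQ d)
    (fun i => by refine Fin.cases ?_ (fun i => ?_) i <;> simp [hq, hp])
  refine ⟨ws, h1, ?_⟩
  rintro z ⟨κ, rfl⟩
  obtain ⟨x, y, e1, e2, f⟩ := h2 (Fin.cons 1 κ : Fin (r+1) → ℕ) 0 (zero_mem _)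
  refine ⟨x, y, ?_, f⟩
  simp only [Fin.sum_univ_succ, Fin.cons_zero, Fin.cons_succ, one_smul, add_zero] at e1 e2
  rw [← e1, ← e2]
  ext1
  · simp [Prod.fst_sum]; abel
  · simp [Prod.snd_sum]; abel

theorem starSys_good (hg : Good V k L) (hh : ∀ c ∈ NJ d k, HH (loopM hL c)) :
    Good V k (starSys hL) := by
  intro a
  rw [starSys_P]
  obtain ⟨⟨⟨x, y⟩, l⟩, hx, h⟩ := a
  dsimp only at hx h
  change HH (PR hL x l) ∧ Fl V k (x, y) (PR hL x l)
  suffices H : (HH (PR hL x l) ∧ WD (PR hL x l)) ∧ Fl V k (x, y) (PR hL x l) from ⟨H.1.1, H.2⟩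
  induction l generalizing x with
  | nil => cases h; exact ⟨⟨hh _ hx, loopM_WD hL hx⟩, loopM_Fl hL hg hx⟩
  | cons a l ih =>
    obtain ⟨⟨i1, i2⟩, i3⟩ := ih _ (hL.supp a).2 h.2
    have j := (hg a).1.relComp i1 (Sys.wd a) i2
    refine ⟨(hh x hx).relComp j.1 (loopM_WD hL hx) j.2, ?_⟩
    refine (loopM_Fl hL hg hx).comp (Fl.comp (y := (L.v a).2) ?_ i3)
    have := (hg a).2
    have e : L.v a = (x, (L.v a).2) := Prod.ext h.1 rfl
    rw [← e]
    exact this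

theorem starSys_rel {x y : NVec d} : (starSys hL).rel x y ↔ Rch L k (qv x) (qv y) := by
  constructor
  · rintro ⟨⟨⟨⟨x', y'⟩, l⟩, hx, h⟩, hv⟩
    have hv' : (x', y') = (qv x, qv y) := hv
    cases hv'
    exact ⟨hx, l, h⟩
  · rintro ⟨hx, l, h⟩
    exact ⟨⟨⟨(qv x, qv y), l⟩, hx, h⟩, rfl⟩
end Star


theorem NJ_pw {d k : ℕ} {x : QV d} (h : ∀ i, ∃ a ∈ NJ d k, ∃ b ∈ NJ d k, b i ≤ a i ∧ x i = a i - b i) :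
    x ∈ NJ d k := by
  have h1 : ∀ i, ∃ n : ℕ, x i = n := by
    intro i
    obtain ⟨a, ⟨⟨n, hn⟩, _⟩, b, ⟨⟨m, hm⟩, _⟩, h1, h2⟩ := h i
    rw [hn, hm] at h1
    refine ⟨n i - m i, ?_⟩
    rw [h2, hn, hm, Nat.cast_sub (Nat.cast_le.1 h1)]
  choose n hn using h1
  refine ⟨⟨n, hn⟩, fun i hi => ?_⟩
  obtain ⟨a, ha, b, hb, h1, h2⟩ := h i
  rw [h2, ha.2 i hi, hb.2 i hi, sub_zero]

theorem max_supp {d : ℕ} {X : Set (QV d)} (h0 : 0 ∈ X) (hadd : ∀ x ∈ X, ∀ y ∈ X, x + y ∈ X)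
    (I : Finset (Fin d)) (hnn : ∀ x ∈ X, ∀ i ∈ I, 0 ≤ x i) :
    ∃ y ∈ X, ∀ i ∈ I, y i = 0 → ∀ x ∈ X, x i = 0 := by
  classical
  induction I using Finset.induction_on with
  | empty => exact ⟨0, h0, by simp⟩
  | insert a I ha ih =>
    obtain ⟨y, hy, h⟩ := ih (fun x hx i hi => hnn x hx i (Finset.mem_insert_of_mem hi))
    by_cases hx : ∃ x ∈ X, x a ≠ 0
    · obtain ⟨x, hx, hxa⟩ := hx
      refine ⟨y + x, hadd y hy x hx, fun i hi h1 w hw => ?_⟩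
      have h2 := hnn y hy i hi
      have h3 := hnn x hx i hi
      simp only [Pi.add_apply] at h1
      rcases Finset.mem_insert.1 hi with rfl | hi
      · exact absurd (by linarith) hxa
      · exact h i hi (by linarith) w hw
    · push Not at hx
      refine ⟨y, hy, fun i hi h1 w hw => ?_⟩
      rcases Finset.mem_insert.1 hi with rfl | hi
      · exact hx w hw
      · exact h i hi h1 w hw

section Off
variable {d k : ℕ} (I : Finset (Fin d))

def off (x : QV d) : QV d := fun i => if i ∈ I then 0 else x i

variable {I}
theorem off_in {x : QV d} {i} (h : i ∈ I) : off I x i = 0 := by simp [off, h]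
theorem off_out {x : QV d} {i} (h : i ∉ I) : off I x i = x i := by simp [off, h]

theorem off_mem {x : QV d} (h : x ∈ NJ d k) : off I x ∈ NJ d k := by
  refine NJ_pw fun i => ?_
  by_cases hi : i ∈ I
  · exact ⟨0, zero_mem _, 0, zero_mem _, le_rfl, by simp [off, hi]⟩
  · exact ⟨x, h, 0, zero_mem _, NJ.nonneg h i, by simp [off, hi]⟩

end Off

section StepOne
variable {d : ℕ} {L : Sys d} {k : ℕ} (hL : Lab L k) (hH : ∀ a, HH (L.P a))
include hL

theorem Rch.cast {x y x' y' : QV d} (h : Rch L k x y) (hx : x = x') (hy : y = y') : Rch L k x' y' := by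
  subst hx; subst hy; exact h

/-- shift so as to start at `x'` -/
theorem Rch.move {x y x' : QV d} (h : Rch L k x y) (hx : x' - x ∈ NJ d k) :
    Rch L k x' (y + (x' - x)) := (h.shift hL hx).cast hL (by abel) rfl

theorem loop_iter {I : Finset (Fin d)} {q z r : QV d} (h : Rch L k q (q + z)) (hz : ∀ i ∈ I, z i = 0)
    (hr : r ∈ NJ d k) (hqr : ∀ i ∈ I, q i ≤ r i) (m : ℕ) :
    Rch L k (r + m • off I q) (r + m • off I q + m • z) := by
  have hq := h.1
  have hqz := h.right hL
  have hoz : off I q + z ∈ NJ d k := by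
    have : off I q + z = off I (q + z) := by
      funext i
      by_cases hi : i ∈ I <;> simp [off, hi]
      exact hz i hi
    rw [this]; exact off_mem hqz
  induction m with
  | zero => simpa using Rch.refl hL hr
  | succ m ih =>
    have hδ : r + (m + 1) • off I q - q ∈ NJ d k := by
      refine NJ_pw fun i => ?_
      by_cases hi : i ∈ I
      · exact ⟨r, hr, q, hq, hqr i hi, by simp [off, hi]⟩
      · refine ⟨r + m • q, add_mem hr (nsmul_mem hq m), 0, zero_mem _,
          NJ.nonneg (add_mem hr (nsmul_mem hq m)) i, ?_⟩
        simp [off, hi]; ring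
    have h1 := h.move hL hδ
    have h2 := ih.shift hL hoz
    refine h1.trans hL (h2.cast hL ?_ ?_)
    · rw [succ_nsmul]; abel
    · rw [succ_nsmul, succ_nsmul]; abel

variable (k) in
def ZI (I : Finset (Fin d)) (s : QV d) (hs : s ∈ NJ d k) : AddSubmonoid (QV d) where
  carrier := {z | (∀ i ∈ I, z i = 0) ∧ ∃ q, (∀ i ∈ I, q i = s i) ∧ Rch L k q (q + z)}
  zero_mem' := ⟨fun i _ => rfl, s, fun i _ => rfl, by simpa using Rch.refl hL hs⟩
  add_mem' := by
    rintro z z' ⟨h1, q, hq, h2⟩ ⟨h1', q', hq', h2'⟩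
    refine ⟨fun i hi => by simp [h1 i hi, h1' i hi], q + off I q', fun i hi => by simp [off, hi, hq], ?_⟩
    have a := h2.shift hL (off_mem (I := I) h2'.1)
    have b := h2'.shift hL (off_mem (I := I) (h2.right hL))
    refine a.trans hL (b.cast hL ?_ ?_)
    · funext i
      by_cases hi : i ∈ I
      · simp [off, hi, hq i hi, hq' i hi, h1 i hi]
      · simp [off, hi]; ring
    · funext i
      by_cases hi : i ∈ I
      · simp [off, hi, hq i hi, hq' i hi, h1 i hi, h1' i hi]
      · simp [off, hi]; ring

omit hL in
variable (d) in
def zeroOn (I : Finset (Fin d)) : Submodule ℚ (QV d) where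
  carrier := {z | ∀ i ∈ I, z i = 0}
  zero_mem' := fun i _ => rfl
  add_mem' := fun h1 h2 i hi => by simp [h1 i hi, h2 i hi]
  smul_mem' := fun c x h i hi => by simp [h i hi]

omit hL in
def dispL (d : ℕ) : PairQ d →ₗ[ℚ] QV d := LinearMap.snd ℚ _ _ - LinearMap.fst ℚ _ _

/-- closed walks modulo `I` -/
def Wk (I : Finset (Fin d)) : QV d → List L.Ω → QV d → Prop
  | x, [], y => ∀ i ∈ I, x i = y i
  | x, a :: l, y => (∀ i ∈ I, (L.v a).1 i = x i) ∧ Wk I (L.v a).2 l y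

omit hL in
def dispW : List L.Ω → QV d
  | [] => 0
  | a :: l => dispL d (L.v a) + dispW l

omit hL in
theorem dispW_append (l l' : List L.Ω) : dispW (l ++ l') = dispW l + dispW l' := by
  induction l with
  | nil => simp [dispW]
  | cons a l ih => simp [dispW, ih, add_assoc]

theorem Wk.left {I : Finset (Fin d)} {x x' y : QV d} {l : List L.Ω} (h : Wk I x l y)
    (hx : ∀ i ∈ I, x i = x' i) : Wk I x' l y := by
  cases l with
  | nil => exact fun i hi => (hx i hi).symm.trans (h i hi)
  | cons a l => exact ⟨fun i hi => (h.1 i hi).trans (hx i hi), h.2⟩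

theorem Wk.split {I : Finset (Fin d)} {x z : QV d} {a : L.Ω} {l l' : List L.Ω}
    (h : Wk I x (l ++ a :: l') z) : Wk I x l (L.v a).1 ∧ Wk I (L.v a).1 (a :: l') z := by
  induction l generalizing x with
  | nil => exact ⟨fun i hi => (h.1 i hi).symm, fun i hi => rfl, h.2⟩
  | cons b l ih =>
    have := ih h.2
    exact ⟨⟨h.1, this.1⟩, this.2⟩

theorem Wk.append {I : Finset (Fin d)} {x y z : QV d} {l l' : List L.Ω}
    (h : Wk I x l y) (h' : Wk I y l' z) : Wk I x (l ++ l') z := by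
  induction l generalizing x with
  | nil => exact h'.left hL (fun i hi => (h i hi).symm)
  | cons b l ih => exact ⟨h.1, ih h.2⟩

theorem Wk.rch {I : Finset (Fin d)} {x y : QV d} (hx : x ∈ NJ d k) {l : List L.Ω} (h : Wk I x l y) :
    ∃ q, (∀ i ∈ I, q i = x i) ∧ Rch L k q (q + dispW l) ∧ ∀ i ∈ I, (q + dispW l) i = y i := by
  induction l generalizing x with
  | nil =>
    refine ⟨x, fun i _ => rfl, by simpa [dispW] using Rch.refl hL hx, fun i hi => ?_⟩
    simpa [dispW] using h i hi
  | cons a l ih =>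
    obtain ⟨q, h1, h2, h3⟩ := ih (hL.supp a).2 h.2
    have e1 := (Rch.label hL a).shift hL (off_mem (I := I) h2.1)
    have e2 := h2.shift hL (off_mem (I := I) (hL.supp a).2)
    refine ⟨(L.v a).1 + off I q, fun i hi => by simp [off, hi, h.1 i hi], e1.trans hL (e2.cast hL ?_ ?_), ?_⟩
    · funext i
      by_cases hi : i ∈ I
      · simp [off, hi, h1 i hi]
      · simp [off, hi]; ring
    · funext i
      by_cases hi : i ∈ I
      · simp [off, hi, h1 i hi, dispW, dispL]; ring
      · simp [off, hi, dispW, dispL]; ring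
    · intro i hi
      rw [← h3 i hi]
      simp [off, hi, h1 i hi, dispW, dispL]; ring

omit hL in
theorem not_nodup_split {α β : Type} (f : α → β) {l : List α} (h : ¬ (l.map f).Nodup) :
    ∃ A a B b C, l = A ++ a :: (B ++ b :: C) ∧ f a = f b := by
  induction l with
  | nil => simp at h
  | cons x l ih =>
    by_cases h1 : (l.map f).Nodup
    · have : f x ∈ l.map f := by
        by_contra h2
        exact h (List.nodup_cons.2 ⟨h2, h1⟩)
      obtain ⟨b, hb, hbx⟩ := List.mem_map.1 this
      obtain ⟨B, C, rfl⟩ := List.append_of_mem hb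
      exact ⟨[], x, B, b, C, rfl, hbx.symm⟩
    · obtain ⟨A, a, B, b, C, rfl, h2⟩ := ih h1
      exact ⟨x :: A, a, B, b, C, rfl, h2⟩

/-- every closed walk decomposes into closed walks without repeated label. -/
theorem closed_walk (I : Finset (Fin d)) (G : Finset L.Ω) {K : AddSubmonoid (QV d)}
    (Vis : QV d → Prop) (hV : ∀ a ∈ G, Vis (L.v a).1)
    (hK : ∀ l : List L.Ω, (∀ a ∈ l, a ∈ G) → l.Nodup → ∀ x, Vis x → Wk I x l x → dispW l ∈ K)
    (n : ℕ) : ∀ (l : List L.Ω), l.length ≤ n → (∀ a ∈ l, a ∈ G) → ∀ x, Vis x →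
      Wk I x l x → dispW l ∈ K := by
  induction n with
  | zero =>
    intro l hl h1 x hx h2
    have : l = [] := List.length_eq_zero_iff.1 (by omega)
    subst this
    exact zero_mem _
  | succ n ih =>
    intro l hl h1 x hx h2
    by_cases hn : l.Nodup
    · exact hK l h1 hn x hx h2
    · obtain ⟨A, a, B, b, C, rfl, rfl⟩ := not_nodup_split id (by simpa using hn)
      obtain ⟨w1, w2⟩ := h2.split hL
      rw [← List.cons_append] at w2
      have w4 := w2.split hL
      simp only [id] at *
      have k1 := ih (a :: B) (by simp at hl ⊢; omega) (fun c hc => h1 c (by simp at hc ⊢; tauto))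
        _ (hV a (h1 a (by simp))) w4.1
      have k2 := ih (A ++ a :: C) (by simp at hl ⊢; omega) (fun c hc => h1 c (by simp at hc ⊢; tauto))
        x hx (w1.append hL w4.2)
      have := K.add_mem k1 k2
      convert this using 1
      rw [dispW_append, dispW_append, ← List.cons_append, dispW_append]
      abel
end StepOne


theorem coneC_le {E : Type} [AddCommGroup E] [Module ℚ E] {P : AddSubmonoid E} {U : PointedCone ℚ E}
    (h : ∀ x ∈ P, x ∈ U) : coneC P ≤ U := by
  intro v hv
  obtain ⟨n, hn, h1⟩ := mem_coneC.1 hv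
  have := pc_smul (c := (n:ℚ)⁻¹) (by positivity) (h _ h1)
  rwa [inv_smul_smul₀ (by positivity)] at this

theorem exists_mul_ge {d : ℕ} (x y : QV d) : ∃ N : ℕ, ∀ i, 0 < x i → y i ≤ N * x i := by
  have : ∀ i, ∃ N : ℕ, 0 < x i → y i ≤ N * x i := by
    intro i
    by_cases h : 0 < x i
    · obtain ⟨N, hN⟩ := Archimedean.arch (y i) h
      exact ⟨N, fun _ => by simpa using hN⟩
    · exact ⟨0, fun h1 => absurd h1 h⟩
  choose N hN using this
  refine ⟨∑ i, N i, fun i hi => (hN i hi).trans ?_⟩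
  have : N i ≤ ∑ i, N i := Finset.single_le_sum (fun _ _ => Nat.zero_le _) (Finset.mem_univ i)
  have : (N i : ℚ) ≤ ((∑ i, N i : ℕ) : ℚ) := by exact_mod_cast this
  exact mul_le_mul_of_nonneg_right this hi.le

theorem nodup_fin {α : Type} (G : Finset α) : {l : List α | l.Nodup ∧ ∀ a ∈ l, a ∈ G}.Finite := by
  classical
  refine Set.Finite.subset (Set.finite_range (fun l : {l : List {a // a ∈ G} // l.Nodup} => l.1.map Subtype.val)) ?_
  rintro l ⟨h1, h2⟩
  lift l to List {a // a ∈ G} using h2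
  exact ⟨⟨l, List.Nodup.of_map _ h1⟩, rfl⟩

section StepOne
variable {d : ℕ} {L : Sys d} {k : ℕ} (hL : Lab L k)
include hL

theorem off_add_mem {I : Finset (Fin d)} {q z : QV d} (h : q + z ∈ NJ d k) (hz : ∀ i ∈ I, z i = 0) :
    off I q + z ∈ NJ d k := by
  have : off I q + z = off I (q + z) := by
    funext i
    by_cases hi : i ∈ I <;> simp [off, hi]
    exact hz i hi
  rw [this]; exact off_mem h

theorem insert_loop {I : Finset (Fin d)} {q r y q1 w : QV d} (h1 : Rch L k q r) (h2 : Rch L k r y)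
    (h3 : Rch L k q1 (q1 + w)) (hw : ∀ i ∈ I, w i = 0) (hq : ∀ i ∈ I, q1 i ≤ r i) (m : ℕ) :
    Rch L k (q + m • off I q1) (y + m • off I q1 + m • w) := by
  have a := h1.shift hL (nsmul_mem (off_mem (I := I) h3.1) m)
  have b := loop_iter hL h3 hw (h1.right hL) hq m
  have c := h2.shift hL (nsmul_mem (off_add_mem hL (h3.right hL) hw) m)
  refine (a.trans hL b).trans hL (c.cast hL ?_ ?_) <;> rw [smul_add, add_assoc]

variable (k) in
def XX (L : Sys d) (I : Finset (Fin d)) (s : QV d) (W : Submodule ℚ (QV d)) : Set (QV d) :=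
  {ξ | ∃ q z, (∀ i ∈ I, q i = s i) ∧ z ∈ W ∧ (∀ i ∈ I, z i = 0) ∧ Rch L k q (q + ξ) ∧
    Rch L k (q + ξ) (q + z) ∧ ∀ i ∈ I, 0 ≤ ξ i}

theorem XX_zero {I : Finset (Fin d)} {s : QV d} {W : Submodule ℚ (QV d)} (hs : s ∈ NJ d k) :
    0 ∈ XX k L I s W :=
  ⟨s, 0, fun _ _ => rfl, zero_mem _, fun _ _ => rfl, by simpa using Rch.refl hL hs,
    by simpa using Rch.refl hL hs, fun _ _ => le_rfl⟩

theorem XX_add {I : Finset (Fin d)} {s : QV d} {W : Submodule ℚ (QV d)} {x y : QV d}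
    (hx : x ∈ XX k L I s W) (hy : y ∈ XX k L I s W) : x + y ∈ XX k L I s W := by
  obtain ⟨q, z, h1, h2, h3, h4, h5, h6⟩ := hx
  obtain ⟨q', z', h1', h2', h3', h4', h5', h6'⟩ := hy
  have ho : off I q' ∈ NJ d k := off_mem h4'.1
  have hδ : q + x + off I q' - q' ∈ NJ d k := by
    refine NJ_pw fun i => ?_
    by_cases hi : i ∈ I
    · refine ⟨q + x, h5.1, q', h4'.1, ?_, by simp [off, hi]⟩
      have := h6 i hi
      simp [h1 i hi, h1' i hi, this]
    · exact ⟨q + x, h5.1, 0, zero_mem _, NJ.nonneg h5.1 i, by simp [off, hi]⟩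
  refine ⟨q + off I q', z + z', fun i hi => by simp [off, hi, h1], add_mem h2 h2',
    fun i hi => by simp [h3 i hi, h3' i hi], ?_, ?_, fun i hi => add_nonneg (h6 i hi) (h6' i hi)⟩
  · exact (h4.shift hL ho).trans hL ((h4'.shift hL hδ).cast hL (by abel) (by abel))
  · have e := h5.shift hL (off_add_mem hL (h5'.right hL) h3')
    refine ((h5'.shift hL hδ).cast hL (by abel) (by abel)).trans hL (e.cast hL rfl (by abel))

theorem pumped (I I' : Finset (Fin d)) (hI : I' ⊆ I) {s : QV d} (hs : s ∈ NJ d k) (W : Submodule ℚ (QV d))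
    {ξ : QV d} (hξ : ξ ∈ XX k L I s W) (hξ' : ∀ i ∈ I, i ∉ I' → 0 < ξ i)
    (ih : HF (coneC (ZI k hL I' s hs))) : FGcl (coneC (ZI k hL I s hs) ⊓ (W : PointedCone ℚ (QV d))) := by
  have hD := ih (W ⊓ zeroOn d I)
  rw [← coneC_infW] at hD ⊢
  refine hD.between (coneC_le fun z hz => subset_coneC ?_) (coneC_le fun z hz => dirC_le_cl _ ?_)
  · obtain ⟨⟨h0, q, h1, h2⟩, h3⟩ := hz
    exact ⟨⟨fun i hi => h0 i (hI hi), q, fun i hi => h1 i (hI hi), h2⟩, h3, h0⟩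
  · obtain ⟨⟨-, q', h1, h2⟩, h3, h4⟩ := hz
    change ∀ i ∈ I, z i = 0 at h4
    obtain ⟨N, hN⟩ := exists_mul_ge ξ q'
    have hX : N • ξ ∈ XX k L I s W := by
      clear hN
      induction N with
      | zero => simpa using XX_zero hL hs
      | succ n ih => rw [succ_nsmul]; exact XX_add hL ih hξ
    obtain ⟨q, z0, e1, e2, e3, e4, e5, e6⟩ := hX
    rw [mem_dirC]
    refine ⟨1, one_pos, z0, fun m => ⟨⟨fun i hi => by simp [e3 i hi, h4 i hi], q + m • off I q',
      fun i hi => by simp [off, hi, e1], ?_⟩, W.add_mem e2 (W.smul_mem _ h3)⟩⟩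
    have := insert_loop hL (I := I) e4 e5 h2 h4 (fun i hi => ?_) m
    · refine this.cast hL rfl ?_
      rw [mul_one, Nat.cast_smul_eq_nsmul]
      abel
    · by_cases hi' : i ∈ I'
      · have := e6 i hi
        rw [h1 i hi', Pi.add_apply, e1 i hi]
        linarith
      · have := hN i (hξ' i hi hi')
        have h7 := NJ.nonneg e4.1 i
        have h8 : (q + N • ξ) i = q i + N * ξ i := by simp
        rw [h8]
        change (0:ℚ) ≤ q i at h7
        linarith

theorem unpumped (hH : ∀ a, HH (L.P a)) (I : Finset (Fin d)) {s : QV d} (hs : s ∈ NJ d k) (W : Submodule ℚ (QV d))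
    (hX : ∀ ξ ∈ XX k L I s W, ∀ i ∈ I, ξ i = 0) :
    FGcl (coneC (ZI k hL I s hs) ⊓ (W : PointedCone ℚ (QV d))) := by
  classical
  let Vis : QV d → Prop := fun r => ∃ q z, (∀ i ∈ I, q i = s i) ∧ z ∈ W ∧ (∀ i ∈ I, z i = 0) ∧
    Rch L k q r ∧ Rch L k r (q + z)
  have visEq : ∀ ra rb, Vis ra → Vis rb → (∀ i ∈ I, ra i ≤ rb i) → ∀ i ∈ I, ra i = rb i := by
    rintro ra rb ⟨qa, za, a1, a2, a3, a4, a5⟩ ⟨qb, zb, b1, b2, b3, b4, b5⟩ hab i hi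
    have ora : off I ra ∈ NJ d k := off_mem a5.1
    have oqa : off I qa ∈ NJ d k := off_mem a4.1
    have oqz : off I qa + za ∈ NJ d k := off_add_mem hL (a5.right hL) a3
    have h0 : rb - ra + off I ra ∈ NJ d k := by
      refine NJ_pw fun i => ?_
      by_cases hi : i ∈ I
      · exact ⟨rb, b5.1, ra, a5.1, hab i hi, by simp [off, hi]⟩
      · exact ⟨rb, b5.1, 0, zero_mem _, NJ.nonneg b5.1 i, by simp [off, hi]⟩
    set δ := rb - ra + off I ra with hδ
    have key : qa + za + (δ + off I qa) - (qb + (off I ra + off I qa)) ∈ XX k L I s W := by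
      refine ⟨qb + (off I ra + off I qa), za + zb, fun i hi => by simp [off, hi, b1], add_mem a2 b2,
        fun i hi => by simp [a3 i hi, b3 i hi], ?_, ?_, fun i hi => ?_⟩
      · refine ((b4.shift hL (add_mem ora oqa)).trans hL ((a5.shift hL (add_mem h0 oqa)).cast hL ?_ rfl)).cast hL rfl ?_
        · rw [hδ]; abel
        · abel
      · have e1 := a4.shift hL (add_mem h0 oqz)
        have e2 := b5.shift hL (add_mem ora oqz)
        refine (e1.trans hL (e2.cast hL ?_ rfl)).cast hL ?_ ?_
        · rw [hδ]; abel
        · abel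
        · abel
      · have := hab i hi
        simp [hδ, off, hi, a1 i hi, b1 i hi, a3 i hi, this]
    have := hX _ key i hi
    simp [hδ, off, hi, a1 i hi, b1 i hi, a3 i hi] at this
    linarith
  let Occ : Set L.Ω := {a | ∃ q z, (∀ i ∈ I, q i = s i) ∧ z ∈ W ∧ (∀ i ∈ I, z i = 0) ∧
    Rch L k q (L.v a).1 ∧ Rch L k (L.v a).2 (q + z)}
  have occ1 : ∀ a ∈ Occ, Vis (L.v a).1 := fun a ⟨q, z, h1, h2, h3, h4, h5⟩ =>
    ⟨q, z, h1, h2, h3, h4, (Rch.label hL a).trans hL h5⟩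
  have occ2 : ∀ a ∈ Occ, Vis (L.v a).2 := fun a ⟨q, z, h1, h2, h3, h4, h5⟩ =>
    ⟨q, z, h1, h2, h3, h4.trans hL (Rch.label hL a), h5⟩
  obtain ⟨G, hG, hG'⟩ := wqo_basis L.refl L.trans L.wqo Occ
  let W2 : Submodule ℚ (PairQ d) := (zeroOn d I).prod (zeroOn d I)
  have diff : ∀ a ∈ Occ, ∀ b ∈ Occ, L.le a b → L.v b - L.v a ∈ infW (L.P a) W2 := by
    intro a ha b hb hab
    have h1 := Sys.sub_mem hab
    have h2 := P_NJ hL h1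
    refine ⟨h1, fun i hi => ?_, fun i hi => ?_⟩
    · have := visEq _ _ (occ1 a ha) (occ1 b hb) (fun i hi => sub_nonneg.1 (NJ.nonneg h2.1 i)) i hi
      exact sub_eq_zero.2 this.symm
    · have := visEq _ _ (occ2 a ha) (occ2 b hb) (fun i hi => sub_nonneg.1 (NJ.nonneg h2.2 i)) i hi
      exact sub_eq_zero.2 this.symm
  let Cyc : Set (QV d) := {w | ∃ l : List L.Ω, (l.Nodup ∧ ∀ a ∈ l, a ∈ G) ∧ (∃ x, Vis x ∧ Wk I x l x) ∧ dispW l = w}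
  have hCyc : Cyc.Finite := by
    refine ((nodup_fin G).image dispW).subset ?_
    rintro w ⟨l, h1, h2, h3⟩
    exact ⟨l, h1, h3⟩
  let Lp : PointedCone ℚ (QV d) := ⨆ a : G, PointedCone.map (dispL d) (coneC (infW (L.P a.1) W2))
  let C : PointedCone ℚ (QV d) := Submodule.span _ Cyc ⊔ Lp
  have hC : HF C := (HF_of_FG (Submodule.fg_span hCyc)).sup (HF_iSup fun a => ((hH a.1).infW W2).hfcone.map _)
  have hD := (hC.infW W).fgcl
  refine hD.between ?_ ?_
  · rw [← coneC_infW]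
    refine coneC_le fun z hz => ?_
    obtain ⟨⟨h0, q, h1, hq, l, hl⟩, h3⟩ := hz
    have hqz : Rch L k q (q + z) := ⟨hq, l, hl⟩
    refine ⟨?_, h3⟩
    have key : ∀ (l : List L.Ω) x y, IsRun L x l y → Rch L k q x → Rch L k y (q + z) →
        ∃ g : List L.Ω, (∀ a ∈ g, a ∈ G) ∧ Wk I x g y ∧ y - x - dispW g ∈ Lp := by
      intro l
      induction l with
      | nil =>
        intro x y h
        have : x = y := h
        subst this
        intro _ _
        exact ⟨[], by simp, fun _ _ => rfl, by simp [dispW]⟩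
      | cons a l ih =>
        intro x y h hx hy
        obtain ⟨rfl, h⟩ := h
        have hx2 := hx.trans hL (Rch.label hL a)
        obtain ⟨g, g1, g2, g3⟩ := ih _ _ h hx2 hy
        have ho : a ∈ Occ := ⟨q, z, h1, h3, h0, hx, (show Rch L k _ _ from ⟨hx2.right hL, l, h⟩).trans hL hy⟩
        obtain ⟨b, hb, hba⟩ := hG' a ho
        have hp := diff b (hG b hb) a ho hba
        refine ⟨b :: g, by simpa using ⟨hb, g1⟩, ⟨fun i hi => ?_, g2.left hL fun i hi => ?_⟩, ?_⟩
        · exact (sub_eq_zero.1 (hp.2.1 i hi)).symm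
        · exact (sub_eq_zero.1 (hp.2.2 i hi))
        · have : dispL d (L.v a - L.v b) ∈ Lp :=
            Submodule.mem_iSup_of_mem (⟨b, hb⟩ : G) ⟨_, subset_coneC hp, rfl⟩
          convert add_mem this g3 using 1
          simp [dispW, dispL]
          abel
    obtain ⟨g, g1, g2, g3⟩ := key l q (q + z) hl (Rch.refl hL hq) (Rch.refl hL (hqz.right hL))
    have hv : Vis q := ⟨q, z, h1, h3, h0, Rch.refl hL hq, hqz⟩
    have g4 := g2.append hL (l' := []) (z := q) (fun i hi => by simp [h0 i hi])
    rw [List.append_nil] at g4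
    have := closed_walk hL I G (K := C.toAddSubmonoid) Vis (fun a ha => occ1 a (hG a ha))
      (fun l h1 h2 x hx hw => Submodule.mem_sup_left (Submodule.subset_span ⟨l, ⟨h2, h1⟩, ⟨x, hx, hw⟩, rfl⟩))
      _ g le_rfl g1 q hv g4
    have h5 := add_mem (Submodule.mem_sup_right g3 : _ ∈ C) this
    simpa using h5
  · rw [← coneC_infW]
    refine le_trans ?_ (dirC_le_cl _)
    let A : AddSubmonoid (QV d) :=
      { carrier := {z | ∃ z0 ∈ infW (ZI k hL I s hs) W, ∀ m : ℕ, z0 + m • z ∈ ZI k hL I s hs}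
        zero_mem' := ⟨0, zero_mem _, fun m => by simpa using zero_mem _⟩
        add_mem' := by
          rintro z z' ⟨z0, h1, h2⟩ ⟨z0', h1', h2'⟩
          refine ⟨z0 + z0', add_mem h1 h1', fun m => ?_⟩
          convert add_mem (h2 m) (h2' m) using 1
          rw [smul_add]; abel }
    have hA : C ≤ coneC A := by
      refine sup_le (Submodule.span_le.2 ?_) (iSup_le fun a => ?_)
      · rintro w ⟨l, -, ⟨r, ⟨q, z0, h1, h2, h3, h4, h5⟩, hw⟩, rfl⟩
        refine subset_coneC ?_
        obtain ⟨q1, e1, e2, e3⟩ := hw.rch hL (h5.1)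
        have e4 : ∀ i ∈ I, dispW l i = 0 := fun i hi => by
          have := e3 i hi
          rw [Pi.add_apply, e1 i hi] at this
          linarith
        have hz0 : z0 ∈ ZI k hL I s hs := ⟨h3, q, h1, h4.trans hL h5⟩
        refine ⟨z0, ⟨hz0, h2⟩, fun m => ⟨fun i hi => by simp [h3 i hi, e4 i hi], q + m • off I q1,
          fun i hi => by simp [off, hi, h1], ?_⟩⟩
        exact (insert_loop hL h4 h5 e2 e4 (fun i hi => (e1 i hi).le) m).cast hL rfl (by abel)
      · rintro w ⟨p, hp, rfl⟩
        obtain ⟨n, hn, hp⟩ := mem_coneC.1 hp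
        refine coneC_of_smul hn ?_
        obtain ⟨q, z0, h1, h2, h3, h4, h5⟩ := hG a.1 a.2
        have hz0 : z0 ∈ ZI k hL I s hs := ⟨h3, q, h1, (h4.trans hL (Rch.label hL a.1)).trans hL h5⟩
        have e : (n:ℚ) • ((dispL d : PairQ d →ₗ[ℚ] QV d) p) = dispL d ((n:ℚ) • p) := by rw [map_smul]
        change (n:ℚ) • ((dispL d : PairQ d →ₗ[ℚ] QV d) p) ∈ A
        rw [e]
        generalize (n:ℚ) • p = p at hp
        refine ⟨z0, ⟨hz0, h2⟩, fun m => ⟨fun i hi => ?_, q + m • p.1, fun i hi => ?_, ?_⟩⟩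
        · have := hp.2.1 i hi
          have := hp.2.2 i hi
          simp_all [dispL]
        · have := hp.2.1 i hi
          simp_all
        · obtain ⟨b, hb, hvb⟩ := Sys.mem_P.1 (nsmul_mem hp.1 m)
          have hN := P_NJ hL (nsmul_mem hp.1 m)
          have f1 := h4.shift hL hN.1
          have f2 := h5.shift hL hN.2
          have f3 := Rch.label hL b
          rw [hvb] at f3
          refine ((f1.trans hL f3).trans hL f2).cast hL rfl ?_
          simp [dispL, smul_sub]
          ring
    intro z hz
    obtain ⟨h1, h2⟩ := hz
    obtain ⟨n, hn, z0, h3, h4⟩ := mem_coneC.1 (hA h1)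
    rw [mem_dirC]
    refine ⟨n, hn, z0, fun m => ⟨?_, W.add_mem h3.2 (W.smul_mem _ h2)⟩⟩
    have := h4 m
    rwa [← Nat.cast_smul_eq_nsmul ℚ, smul_smul, ← Nat.cast_mul] at this

theorem stepOne (hH : ∀ a, HH (L.P a)) (n : ℕ) : ∀ (I : Finset (Fin d)), I.card ≤ n → ∀ (s : QV d) (hs : s ∈ NJ d k),
    HF (coneC (ZI k hL I s hs)) := by
  classical
  induction n with
  | zero =>
    intro I hI s hs W
    have : I = ∅ := Finset.card_eq_zero.1 (by omega)
    subst this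
    exact unpumped hL hH _ hs W (by simp)
  | succ n ih =>
    intro I hI s hs W
    obtain ⟨ξ, h1, h2⟩ := max_supp (XX_zero hL hs) (fun x hx y hy => XX_add hL hx hy) I
      (fun x (hx : x ∈ XX k L I s W) => by obtain ⟨_, _, _, _, _, _, _, h⟩ := hx; exact h)
    by_cases h : ∀ i ∈ I, ξ i = 0
    · exact unpumped hL hH I hs W (fun x hx i hi => h2 i hi (h i hi) x hx)
    · push Not at h
      obtain ⟨j, hj, hj'⟩ := h
      refine pumped hL I (I.filter (fun i => ξ i = 0)) (Finset.filter_subset _ _) hs W h1 ?_ (ih _ ?_ s hs)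
      · intro i hi hi'
        have : ξ i ≠ 0 := fun h => hi' (by simp [hi, h])
        obtain ⟨_, _, _, _, _, _, _, h⟩ := h1
        exact lt_of_le_of_ne (h i hi) this.symm
      · have : I.filter (fun i => ξ i = 0) ⊂ I :=
          Finset.filter_ssubset.2 ⟨j, hj, hj'⟩
        have := Finset.card_lt_card this
        omega

end StepOne


/-- zero set of a vector -/
def zs {d : ℕ} (Y : QV d) : Finset (Fin d) := Finset.univ.filter (fun i => Y i = 0)

theorem mem_zs {d : ℕ} {Y : QV d} {i} : i ∈ zs Y ↔ Y i = 0 := by simp [zs]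

theorem fill {d k : ℕ} {Y x : QV d} (hY : Y ∈ NJ d k) (hx : x ∈ NJ d k) (h0 : ∀ i ∈ zs Y, x i = 0) :
    ∃ N : ℕ, N • Y - x ∈ NJ d k := by
  obtain ⟨N, hN⟩ := exists_mul_ge Y x
  refine ⟨N, NJ.sub hx (nsmul_mem hY N) fun i => ?_⟩
  have h1 : (N • Y) i = N * Y i := by simp
  rw [h1]
  by_cases h : Y i = 0
  · rw [h0 i (mem_zs.2 h), h]; simp
  · exact hN i (lt_of_le_of_ne (NJ.nonneg hY i) (Ne.symm h))

theorem fill_off {d k : ℕ} {Y x : QV d} (hY : Y ∈ NJ d k) (hx : x ∈ NJ d k) :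
    ∃ N : ℕ, N • Y - off (zs Y) x ∈ NJ d k :=
  fill hY (off_mem hx) fun i hi => off_in hi

theorem sub_eq_off {d : ℕ} {I : Finset (Fin d)} {x y : QV d} (h : ∀ i ∈ I, x i = y i) :
    x - y = off I x - off I y := by
  funext i
  by_cases hi : i ∈ I
  · simp [off, hi, h i hi]
  · simp [off, hi]

section StepTwo
variable {d : ℕ} {L : Sys d} {k : ℕ} (hL : Lab L k)
include hL

theorem lm_add {c x y x' y' a b : QV d} (h1 : (x, y) ∈ loopM hL c) (h2 : (x', y') ∈ loopM hL c)
    (ha : a = x + x') (hb : b = y + y') : (a, b) ∈ loopM hL c := by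
  subst ha; subst hb; exact add_mem h1 h2

theorem lm_cast {c x y a b : QV d} (h1 : (x, y) ∈ loopM hL c)
    (ha : a = x) (hb : b = y) : (a, b) ∈ loopM hL c := by
  subst ha; subst hb; exact h1

theorem lm_smul {c x y : QV d} (n : ℕ) (h1 : (x, y) ∈ loopM hL c) : (n • x, n • y) ∈ loopM hL c :=
  nsmul_mem h1 n

theorem lm_refl {c x : QV d} (h : x ∈ NJ d k) : (x, x) ∈ loopM hL c :=
  ⟨h, h, fun hc => Rch.refl hL (add_mem hc h)⟩

theorem lm_trans {c x y z : QV d} (h1 : (x, y) ∈ loopM hL c) (h2 : (y, z) ∈ loopM hL c) :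
    (x, z) ∈ loopM hL c :=
  ⟨h1.1, h2.2.1, fun hc => (h1.2.2 hc).trans hL (h2.2.2 hc)⟩

theorem lm_mk {c x y : QV d} (hx : x ∈ NJ d k) (hy : y ∈ NJ d k) (h : Rch L k (c + x) (c + y)) :
    (x, y) ∈ loopM hL c := ⟨hx, hy, fun _ => h⟩

variable {c : QV d} (hc : c ∈ NJ d k) (W W' : Submodule ℚ (PairQ d)) (hWW : W' ≤ W)

variable (c) in
def RR : AddSubmonoid (QV d) where
  carrier := {X | ∃ x y, (x, X) ∈ loopM hL c ∧ (X, y) ∈ loopM hL c ∧ (x, y) ∈ W}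
  zero_mem' := ⟨0, 0, zero_mem _, zero_mem _, zero_mem _⟩
  add_mem' := by
    rintro X X' ⟨x, y, h1, h2, h3⟩ ⟨x', y', h1', h2', h3'⟩
    exact ⟨x + x', y + y', add_mem h1 h1', add_mem h2 h2', add_mem h3 h3'⟩

/-- the asymptotic version -/
def RD (c : QV d) (W W' : Submodule ℚ (PairQ d)) (X : QV d) (q : (QV d × QV d) × (QV d × QV d × QV d)) : Prop :=
  q.1 ∈ W' ∧ (q.1.1 ∈ NJ d k ∧ q.1.2 ∈ NJ d k) ∧ X ∈ NJ d k ∧ (q.2.1, q.2.2.1) ∈ W ∧ ∀ t : ℕ,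
    (q.2.1 + t • q.1.1, q.2.2.2 + t • X) ∈ loopM hL c ∧ (q.2.2.2 + t • X, q.2.2.1 + t • q.1.2) ∈ loopM hL c

theorem RD_add {c : QV d} {W W' : Submodule ℚ (PairQ d)} {X X' q q'} (h : RD hL c W W' X q)
    (h' : RD hL c W W' X' q') : RD hL c W W' (X + X') (q + q') := by
  obtain ⟨h1, h2, h3, h4, h5⟩ := h
  obtain ⟨h1', h2', h3', h4', h5'⟩ := h'
  refine ⟨add_mem h1 h1', ⟨add_mem h2.1 h2'.1, add_mem h2.2 h2'.2⟩, add_mem h3 h3', add_mem h4 h4', fun t => ⟨?_, ?_⟩⟩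
  · exact lm_add hL (h5 t).1 (h5' t).1 (by simp only [Prod.fst_add, Prod.snd_add]; module)
      (by simp only [Prod.snd_add]; module)
  · exact lm_add hL (h5 t).2 (h5' t).2 (by simp only [Prod.snd_add]; module)
      (by simp only [Prod.fst_add, Prod.snd_add]; module)

theorem RD_zero {c : QV d} {W W' : Submodule ℚ (PairQ d)} : RD hL c W W' 0 0 :=
  ⟨zero_mem _, ⟨zero_mem _, zero_mem _⟩, zero_mem _, zero_mem _, fun t =>
    ⟨lm_cast hL (zero_mem (loopM hL c)) (by simp) (by simp), lm_cast hL (zero_mem (loopM hL c)) (by simp) (by simp)⟩⟩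

theorem RD_nsmul {c : QV d} {W W' : Submodule ℚ (PairQ d)} {X q} (h : RD hL c W W' X q) (n : ℕ) :
    RD hL c W W' (n • X) (n • q) := by
  induction n with
  | zero => simpa using RD_zero hL
  | succ n ih => rw [succ_nsmul, succ_nsmul]; exact RD_add hL ih h

variable (c) in
def FF (Y X : QV d) : AddSubmonoid (QV d × QV d) where
  carrier := {p | ∃ N B : ℕ, ∃ x ∈ NJ d k, ∃ y ∈ NJ d k, (x, y) ∈ W ∧ ∀ n : ℕ,
    (x + N • Y + n • (B • X), y + N • Y + p.1 + n • (B • X + p.2)) ∈ loopM hL c}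
  zero_mem' := ⟨0, 0, 0, zero_mem _, 0, zero_mem _, zero_mem _, fun n => lm_cast hL (zero_mem (loopM hL c)) (by simp) (by simp)⟩
  add_mem' := by
    rintro p p' ⟨N, B, x, hx, y, hy, h1, h2⟩ ⟨N', B', x', hx', y', hy', h1', h2'⟩
    refine ⟨N + N', B + B', x + x', add_mem hx hx', y + y', add_mem hy hy', add_mem h1 h1', fun n => ?_⟩
    exact lm_add hL (h2 n) (h2' n) (by module) (by simp only [Prod.fst_add, Prod.snd_add]; module)

def LinF (c : QV d) (W : Submodule ℚ (PairQ d)) (Y X : QV d) : AddSubmonoid (QV d) where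
  carrier := {w | (w, (0 : QV d)) ∈ FF hL c W Y X ∧ (-w, (0 : QV d)) ∈ FF hL c W Y X}
  zero_mem' := ⟨zero_mem _, by rw [neg_zero]; exact zero_mem _⟩
  add_mem' := by
    rintro a b ⟨h1, h2⟩ ⟨h1', h2'⟩
    refine ⟨by simpa using add_mem h1 h1', ?_⟩
    have := add_mem h2 h2'
    rw [neg_add]
    simpa using this

def AtF (c : QV d) (W : Submodule ℚ (PairQ d)) (Y X : QV d) : AddSubmonoid (QV d) where
  carrier := {z | ((0 : QV d), z) ∈ FF hL c W Y X}
  zero_mem' := zero_mem (FF hL c W Y X)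
  add_mem' := by
    intro a b h h1
    have := (FF hL c W Y X).add_mem h h1
    simpa using this

variable (c) in
omit hL in
def Vs (k : ℕ) (L : Sys d) (r : QV d) : Prop :=
  ∃ x ∈ NJ d k, ∃ y ∈ NJ d k, (x, y) ∈ W ∧ Rch L k (c + x) r ∧ Rch L k r (c + y)

variable (c) in
omit hL in
def Oc (k : ℕ) (L : Sys d) (a : L.Ω) : Prop :=
  ∃ x ∈ NJ d k, ∃ y ∈ NJ d k, (x, y) ∈ W ∧ Rch L k (c + x) (L.v a).1 ∧ Rch L k (L.v a).2 (c + y)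

variable {Y X : QV d} {W W'} (hY : Y ∈ RR hL c W) (hYm : ∀ i ∈ zs Y, ∀ X ∈ RR hL c W, X i = 0)
include hc hY hYm

theorem RR_NJ : Y ∈ NJ d k := by
  obtain ⟨x, y, h1, h2, h3⟩ := hY
  exact h2.1

theorem vs_eq {ra rb : QV d} (ha : Vs c W k L ra) (hb : Vs c W k L rb) (hab : ∀ i ∈ zs Y, ra i ≤ rb i) :
    ∀ i ∈ zs Y, ra i = rb i := by
  obtain ⟨xa, hxa, ya, hya, hwa, a1, a2⟩ := ha
  obtain ⟨xb, hxb, yb, hyb, hwb, b1, b2⟩ := hb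
  have hYN := RR_NJ hL hc hY hYm
  obtain ⟨N, hN⟩ := fill_off hYN a2.1
  have h0 : rb - ra + off (zs Y) ra ∈ NJ d k := by
    refine NJ_pw fun i => ?_
    by_cases hi : i ∈ zs Y
    · exact ⟨rb, b2.1, ra, a2.1, hab i hi, by simp [off, hi]⟩
    · exact ⟨rb, b2.1, 0, zero_mem _, NJ.nonneg b2.1 i, by simp [off, hi]⟩
  have hδ : rb - ra + N • Y ∈ NJ d k := by
    have := add_mem h0 hN
    convert this using 1; module
  set δ := rb - ra + N • Y with hδd
  obtain ⟨x, y, e1, e2, e3⟩ := hY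
  have key : xa + ya + δ ∈ RR hL c W := by
    refine ⟨xa + xb + N • x, ya + yb + N • y, ?_, ?_, ?_⟩
    · have f1 : (xa + xb + N • x, xa + xb + N • Y) ∈ loopM hL c :=
        lm_add hL (lm_refl hL (add_mem hxa hxb)) (lm_smul hL N e1) rfl rfl
      refine lm_trans hL f1 (lm_mk hL f1.2.1 (add_mem (add_mem hxa hya) hδ) ?_)
      have g1 := b1.shift hL (add_mem hxa (nsmul_mem hYN N))
      have g2 := a2.shift hL (add_mem hxa hδ)
      exact (g1.trans hL (g2.cast hL (by rw [hδd]; module) rfl)).cast hL (by module) (by module)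
    · have f1 : (ya + yb + N • Y, ya + yb + N • y) ∈ loopM hL c :=
        lm_add hL (lm_refl hL (add_mem hya hyb)) (lm_smul hL N e2) rfl rfl
      refine lm_trans hL (lm_mk hL (add_mem (add_mem hxa hya) hδ) f1.1 ?_) f1
      have g1 := a1.shift hL (add_mem hya hδ)
      have g2 := b2.shift hL (add_mem hya (nsmul_mem hYN N))
      exact (g1.trans hL (g2.cast hL (by rw [hδd]; module) rfl)).cast hL (by module) (by module)
    · have := add_mem (add_mem hwa hwb) (nsmul_mem e3 N)
      exact this
  intro i hi
  have h1 := hYm i hi _ key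
  have h2 := NJ.nonneg hxa i
  have h3 := NJ.nonneg hya i
  have h4 := NJ.nonneg hδ i
  have h5 : δ i = rb i - ra i := by simp [hδd, mem_zs.1 hi]
  have h6 := hab i hi
  simp only [Pi.add_apply, Pi.zero_apply, h5] at h1 h2 h3 h4
  linarith

theorem oc1 {a : L.Ω} (h : Oc c W k L a) : Vs c W k L (L.v a).1 := by
  obtain ⟨x, hx, y, hy, h1, h2, h3⟩ := h
  exact ⟨x, hx, y, hy, h1, h2, (Rch.label hL a).trans hL h3⟩

theorem oc2 {a : L.Ω} (h : Oc c W k L a) : Vs c W k L (L.v a).2 := by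
  obtain ⟨x, hx, y, hy, h1, h2, h3⟩ := h
  exact ⟨x, hx, y, hy, h1, h2.trans hL (Rch.label hL a), h3⟩

theorem oc_diff {a b : L.Ω} (ha : Oc c W k L a) (hb : Oc c W k L b) (hab : L.le a b) :
    (∀ i ∈ zs Y, (L.v b - L.v a).1 i = 0) ∧ (∀ i ∈ zs Y, (L.v b - L.v a).2 i = 0) ∧
    dispL d (L.v b - L.v a) ∈ LinF hL c W Y X := by
  have h2 := P_NJ hL (Sys.sub_mem hab)
  have z1 : ∀ i ∈ zs Y, (L.v b - L.v a).1 i = 0 := fun i hi => by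
    have := vs_eq hL hc hY hYm (oc1 hL hc hY hYm ha) (oc1 hL hc hY hYm hb) (fun i hi => sub_nonneg.1 (NJ.nonneg h2.1 i)) i hi
    exact sub_eq_zero.2 this.symm
  have z2 : ∀ i ∈ zs Y, (L.v b - L.v a).2 i = 0 := fun i hi => by
    have := vs_eq hL hc hY hYm (oc2 hL hc hY hYm ha) (oc2 hL hc hY hYm hb) (fun i hi => sub_nonneg.1 (NJ.nonneg h2.2 i)) i hi
    exact sub_eq_zero.2 this.symm
  refine ⟨z1, z2, ?_⟩
  have hYN := RR_NJ hL hc hY hYm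
  obtain ⟨N, hN⟩ := fill hYN h2.1 z1
  obtain ⟨N', hN'⟩ := fill hYN h2.2 z2
  have e1 : (L.v b).1 = (L.v a).1 + (L.v b - L.v a).1 := by simp
  have e2 : (L.v b).2 = (L.v a).2 + (L.v b - L.v a).2 := by simp
  have lb := Rch.label hL b
  rw [e1, e2] at lb
  obtain ⟨xa, hxa, ya, hya, hwa, a1, a2⟩ := ha
  obtain ⟨xb, hxb, yb, hyb, hwb, b1, b2⟩ := hb
  rw [e1] at b1
  rw [e2] at b2
  change dispL d _ ∈ _
  have e3 : dispL d (L.v b - L.v a) = (L.v b - L.v a).2 - (L.v b - L.v a).1 := rfl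
  rw [e3]
  generalize L.v b - L.v a = p at *
  constructor
  · refine ⟨N, 0, xa, hxa, ya, hya, hwa, fun n => ?_⟩
    refine lm_cast hL (x := xa + N • Y) (y := ya + p.2 + (N • Y - p.1)) (lm_mk hL (add_mem hxa (nsmul_mem hYN N))
      (add_mem (add_mem hya h2.2) hN) ?_) (by simp) (by simp; module)
    have := (((a1.shift hL h2.1).trans hL lb).trans hL (a2.shift hL h2.2)).shift hL hN
    exact this.cast hL (by module) (by module)
  · refine ⟨N', 0, xb, hxb, yb, hyb, hwb, fun n => ?_⟩
    refine lm_cast hL (x := xb + N' • Y) (y := yb + p.1 + (N' • Y - p.2)) (lm_mk hL (add_mem hxb (nsmul_mem hYN N'))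
      (add_mem (add_mem hyb h2.1) hN') ?_) (by simp) (by simp; module)
    have f1 := b1.shift hL (nsmul_mem hYN N')
    have f2 := (Rch.label hL a).shift hL (add_mem h2.1 (nsmul_mem hYN N'))
    have f3 := b2.shift hL (add_mem h2.1 hN')
    exact ((f1.trans hL (f2.cast hL (by module) rfl)).trans hL (f3.cast hL (by module) rfl)).cast hL
      (by module) (by module)

theorem atom_a (hX : X ∈ NJ d k) {r z : QV d} (hr : r ∈ NJ d k) (hv : Vs c W k L r) (hz : z ∈ ZI k hL (zs Y) r hr)
    (hz' : ∀ i ∈ zs X, z i = 0) : z ∈ AtF hL c W Y X := by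
  obtain ⟨h0, q, hq, h1⟩ := hz
  obtain ⟨x, hx, y, hy, hw, a1, a2⟩ := hv
  have hYN := RR_NJ hL hc hY hYm
  obtain ⟨N, hN⟩ := fill_off hYN h1.1
  obtain ⟨B, hB⟩ := fill_off hX h1.1
  have hδ : r + N • Y - q ∈ NJ d k := by
    have := sub_eq_off hq
    have h2 := add_mem hN (off_mem (I := zs Y) hr)
    convert h2 using 1
    have e : r + N • Y - q = N • Y - (q - r) := by module
    rw [e, this]; module
  have hT : B • X + z ∈ NJ d k := by
    have := sub_eq_off (I := zs X) (x := q + z) (y := q) (fun i hi => by simp [hz' i hi])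
    have h2 := add_mem hB (off_mem (I := zs X) (h1.right hL))
    convert h2 using 1
    have e : B • X + z = B • X + (q + z - q) := by module
    rw [e, this]; module
  have hBX := nsmul_mem hX B
  have hNY := nsmul_mem hYN N
  have hl : (B • X, B • X + z) ∈ loopM hL q :=
    lm_mk hL hBX hT ((h1.shift hL hBX).cast hL rfl (by module))
  refine ⟨N, B, x, hx, y, hy, hw, fun n => ?_⟩
  refine lm_mk hL (add_mem (add_mem hx hNY) (nsmul_mem hBX n)) ?_ ?_
  · simpa using add_mem (add_mem hy hNY) (nsmul_mem hT n)
  · have f1 := a1.shift hL (add_mem hNY (nsmul_mem hBX n))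
    have f2 := ((nsmul_mem hl n).2.2 h1.1).shift hL hδ
    have f3 := a2.shift hL (add_mem hNY (nsmul_mem hT n))
    simp only [Prod.smul_mk] at f2
    exact ((f1.trans hL (f2.cast hL (by module) rfl)).trans hL (f3.cast hL (by module) rfl)).cast hL
      (by module) (by module)

theorem atom_b (hX : X ∈ NJ d k) {a : L.Ω} (ha : Oc c W k L a) {p : PairQ d}
    (hp : p ∈ dirC (infW (L.P a) (((zeroOn d (zs Y)).prod (zeroOn d (zs Y))) ⊓
      (span ℚ (LinF hL c W Y X : Set (QV d))).comap (dispL d))))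
    (hp' : ∀ i ∈ zs X, p.1 i = 0) : dispL d p ∈ coneC (AtF hL c W Y X) := by
  obtain ⟨n, hn, p0, h0⟩ := mem_dirC.1 hp
  have hYN := RR_NJ hL hc hY hYm
  have hp0 := h0 0
  simp only [zero_mul, Nat.cast_zero, zero_smul, add_zero] at hp0
  obtain ⟨hp1, hp2, hp3⟩ := hp0
  have hpN := P_NJ hL hp1
  have hpn : (n • p).1 ∈ NJ d k := by
    refine NJ_pw fun i => ?_
    refine ⟨(p0 + ((1 * n : ℕ) : ℚ) • p).1, (P_NJ hL (h0 1).1).1, p0.1, hpN.1, ?_, by simp⟩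
    simp only [Prod.fst_add, Pi.add_apply, Prod.smul_fst, Pi.smul_apply, one_mul, smul_eq_mul]
    by_contra hcon
    push Not at hcon
    have h1 : (n:ℚ) * p.1 i < 0 := by linarith
    obtain ⟨t, ht⟩ := Archimedean.arch (p0.1 i + 1) (by linarith : (0:ℚ) < -((n:ℚ) * p.1 i))
    have h2 := NJ.nonneg (P_NJ hL (h0 t).1).1 i
    simp at h2 ht
    nlinarith
  obtain ⟨N, hN⟩ := fill hYN hpN.1 hp2.1
  obtain ⟨B, hB⟩ := fill hX hpn (fun i hi => by simp [hp' i hi])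
  obtain ⟨x, hx, y, hy, hw, a1, a2⟩ := ha
  have hF : (dispL d p0, dispL d (n • p)) ∈ FF hL c W Y X := by
    refine ⟨N, B, x, hx, y, hy, hw, fun t => ?_⟩
    obtain ⟨b, hb, hvb⟩ := Sys.mem_P.1 (h0 t).1
    have hPt := P_NJ hL (h0 t).1
    have e0 : p0 + ((t * n : ℕ) : ℚ) • p = p0 + t • (n • p) := by
      rw [smul_smul, Nat.cast_smul_eq_nsmul]
    rw [e0] at hPt hvb
    have lb := Rch.label hL b
    rw [hvb] at lb
    have hs := add_mem hN (nsmul_mem hB t)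
    have f := (((a1.shift hL hPt.1).trans hL lb).trans hL (a2.shift hL hPt.2)).shift hL hs
    refine lm_cast hL (lm_mk hL (add_mem (add_mem hx hPt.1) hs) (add_mem (add_mem hy hPt.2) hs)
      (f.cast hL (by module) (by module))) ?_ ?_
    · simp only [Prod.fst_add, Prod.smul_fst]; module
    · simp only [Prod.fst_add, Prod.smul_fst, Prod.snd_add, Prod.smul_snd, dispL, LinearMap.sub_apply, LinearMap.fst_apply, LinearMap.snd_apply]; module
  obtain ⟨m, hm, α, hα, β, hβ, he⟩ := span_mon (show dispL d p0 ∈ span ℚ (LinF hL c W Y X : Set (QV d)) from hp3)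
  have hF2 := add_mem (add_mem (nsmul_mem hF m) hα.2) hβ.1
  refine coneC_of_smul (n := m * n) (by positivity) ?_
  change ((0 : QV d), _) ∈ FF hL c W Y X
  convert hF2 using 1
  rw [Nat.cast_smul_eq_nsmul] at he
  refine Prod.ext ?_ ?_
  · simp only [Prod.fst_add, Prod.smul_fst, he]; module
  · simp only [Prod.snd_add, Prod.smul_snd, map_nsmul, add_zero]
    rw [Nat.cast_smul_eq_nsmul, smul_smul]

end StepTwo


theorem mem_clC_of_nat {E : Type} [AddCommGroup E] [Module ℚ E] {U : PointedCone ℚ E} {v m : E}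
    (h : ∀ R : ℕ, R • v + m ∈ U) : v ∈ clC U := by
  have hm : m ∈ U := by simpa using h 0
  rw [mem_clC]
  refine ⟨m, hm, fun ε hε => ?_⟩
  obtain ⟨R, hR⟩ := exists_nat_gt (1 / ε)
  have hRp : (0:ℚ) < R := lt_trans (by positivity) hR
  have h1 : (1:ℚ) / R ≤ ε := by
    rw [div_lt_iff₀ hε] at hR
    rw [div_le_iff₀ hRp]; linarith
  have h2 := add_mem (pc_smul (c := (1:ℚ) / R) (by positivity) (h R)) (pc_smul (sub_nonneg.2 h1) hm)
  convert h2 using 1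
  rw [← Nat.cast_smul_eq_nsmul ℚ, smul_add, smul_smul, one_div, inv_mul_cancel₀ hRp.ne']
  module

section StepTwo
variable {d : ℕ} {L : Sys d} {k : ℕ} (hL : Lab L k)
  {c : QV d} (hc : c ∈ NJ d k) {W W' : Submodule ℚ (PairQ d)}
include hL hc

theorem RD_mid {x y u u' r X : QV d} (hx : x ∈ NJ d k) (hy : y ∈ NJ d k) (hu : u ∈ NJ d k) (hu' : u' ∈ NJ d k)
    (hX : X ∈ NJ d k) (hw : (x, y) ∈ W) (hw' : (u, u') ∈ W')
    (pre : ∀ t : ℕ, Rch L k (c + (x + t • u)) (r + t • X))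
    (suf : ∀ t : ℕ, Rch L k (r + t • X) (c + (y + t • u'))) :
    RD hL c W W' X ((u, u'), (2 • x, 2 • y, x + y)) := by
  refine ⟨hw', ⟨hu, hu'⟩, hX, nsmul_mem hw 2, fun t => ⟨?_, ?_⟩⟩
  · refine lm_mk hL (add_mem (nsmul_mem hx 2) (nsmul_mem hu t)) (add_mem (add_mem hx hy) (nsmul_mem hX t)) ?_
    have f1 := (pre t).shift hL hx
    have f2 := (suf 0).shift hL (add_mem hx (nsmul_mem hX t))
    exact (f1.trans hL (f2.cast hL (by module) rfl)).cast hL (by module) (by module)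
  · refine lm_mk hL (add_mem (add_mem hx hy) (nsmul_mem hX t)) (add_mem (nsmul_mem hy 2) (nsmul_mem hu' t)) ?_
    have f1 := (pre 0).shift hL (add_mem hy (nsmul_mem hX t))
    have f2 := (suf t).shift hL hy
    exact (f1.trans hL (f2.cast hL (by module) rfl)).cast hL (by module) (by module)

theorem pump (hWW : W' ≤ W) {X Y u u' : QV d} {q} (hX : RD hL c W W' X q) (hY : Y ∈ RR hL c W)
    (hu : u ∈ NJ d k) (hu' : u' ∈ NJ d k) (hw' : (u, u') ∈ W') (hz : u' - u ∈ AtF hL c W Y X) :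
    (u, u') ∈ clC (dirC (infW (loopM hL c) W) ⊓ (W' : PointedCone ℚ (PairQ d))) := by
  obtain ⟨N, B, x, hx, y, hy, hw, hF⟩ := hz
  obtain ⟨xh, yh, y1, y2, y3⟩ := hY
  obtain ⟨q1, q2, q3, q4, q5⟩ := RD_nsmul hL hX B
  have hXN := hX.2.2.1
  set q' := B • q with hq'
  refine mem_clC_of_nat (m := q'.1) fun R => ⟨?_, ?_⟩
  swap
  · exact W'.add_mem (nsmul_mem hw' R) q1
  rw [SetLike.mem_coe, mem_dirC]
  refine ⟨1, one_pos, (q'.2.1, q'.2.2.1) + R • (x, y) + (R * N) • (xh, yh), fun t => ⟨?_, ?_⟩⟩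
  swap
  · exact W.add_mem (W.add_mem (W.add_mem q4 (nsmul_mem hw R)) (nsmul_mem y3 _))
      (W.smul_mem _ (hWW (W'.add_mem (nsmul_mem hw' R) q1)))
  have hBX : t • (B • X) ∈ NJ d k := nsmul_mem (nsmul_mem hXN B) t
  have hh : q'.2.2.2 ∈ NJ d k := by
    have := (q5 0).2.1
    simpa using this
  have hYN : Y ∈ NJ d k := y1.2.1
  have a1 : (x + N • Y + t • u, y + N • Y + t • u') ∈ loopM hL (c + t • (B • X)) := by
    refine lm_mk hL (add_mem (add_mem hx (nsmul_mem hYN N)) (nsmul_mem hu t))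
      (add_mem (add_mem hy (nsmul_mem hYN N)) (nsmul_mem hu' t)) ?_
    have := ((hF t).2.2 hc).shift hL (nsmul_mem hu t)
    exact this.cast hL (by module) (by module)
  have a2 := nsmul_mem a1 R
  have s1 := lm_add hL (lm_add hL (q5 t).1 (lm_smul hL (R * N) y1) rfl rfl)
    (lm_refl hL (add_mem (nsmul_mem hx R) (nsmul_mem hu (R * t)))) rfl rfl
  have s3 := lm_add hL (lm_add hL (q5 t).2 (lm_smul hL (R * N) y2) rfl rfl)
    (lm_refl hL (add_mem (nsmul_mem hy R) (nsmul_mem hu' (R * t)))) rfl rfl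
  have s2 := lm_mk hL s1.2.1 s3.1 (((a2.2.2 (add_mem hc hBX)).shift hL hh).cast hL
    (by simp only [Prod.smul_mk]; module) (by simp only [Prod.smul_mk]; module))
  refine lm_cast hL (lm_trans hL s1 (lm_trans hL s2 s3)) ?_ ?_
  · simp only [Prod.fst_add, Prod.smul_fst, mul_one, Nat.cast_smul_eq_nsmul]; module
  · simp only [Prod.snd_add, Prod.smul_snd, mul_one, Nat.cast_smul_eq_nsmul]; module

theorem dir_star {v : PairQ d} (hv : v ∈ dirC (infW (loopM hL c) W)) :
    ∃ x y, x ∈ NJ d k ∧ y ∈ NJ d k ∧ (x, y) ∈ W ∧ ∃ l, IsRun L (c + x) l (c + y) ∧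
      ∃ N : ℕ, 0 < N ∧ (N : ℚ) • v ∈ PR hL (c + x) l := by
  obtain ⟨n, hn, b, hb⟩ := mem_dirC.1 hv
  choose l hl using fun t => ((hb t).1.2.2 hc).2
  let ω : ℕ → (starSys hL).Ω := fun t => ⟨((c + (b + ((t * n : ℕ) : ℚ) • v).1, c + (b + ((t * n : ℕ) : ℚ) • v).2), l t),
    add_mem hc (hb t).1.1, hl t⟩
  obtain ⟨i, j, hij, hle⟩ := (starSys hL).wqo ω
  refine ⟨_, _, (hb i).1.1, (hb i).1.2.1, (hb i).2, l i, hl i, (j - i) * n, by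
    have : 0 < j - i := by omega
    positivity, ?_⟩
  have := Sys.sub_mem hle
  rw [starSys_P] at this
  change _ ∈ PR hL (c + (b + ((i * n : ℕ) : ℚ) • v).1) (l i) at this
  convert this using 1
  change _ = (c + (b + ((j * n : ℕ) : ℚ) • v).1, c + (b + ((j * n : ℕ) : ℚ) • v).2) -
    (c + (b + ((i * n : ℕ) : ℚ) • v).1, c + (b + ((i * n : ℕ) : ℚ) • v).2)
  have e : (((j - i) * n : ℕ) : ℚ) = ((j * n : ℕ) : ℚ) - ((i * n : ℕ) : ℚ) := by
    rw [Nat.sub_mul, Nat.cast_sub (Nat.mul_le_mul_right n hij.le)]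
  rw [e]
  refine Prod.ext ?_ ?_
  · simp only [Prod.fst_sub, Prod.fst_add, Prod.smul_fst]; module
  · simp only [Prod.snd_sub, Prod.snd_add, Prod.smul_snd]; module

theorem PR_rch {l : List L.Ω} {q e : QV d} (hq : q ∈ NJ d k) (h : IsRun L q l e) {u u' : QV d}
    (hp : (u, u') ∈ PR hL q l) (t : ℕ) : Rch L k (q + t • u) (e + t • u') := by
  have h1 := nsmul_mem hp t
  obtain ⟨l', -, h2⟩ := PR_run hL l hq h h1
  exact ⟨add_mem hq (PR_NJ hL l q h1).1, l', h2⟩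

end StepTwo


section StepTwo
variable {d : ℕ} {L : Sys d} {k : ℕ} (hL : Lab L k) {c : QV d} (hc : c ∈ NJ d k)
include hL hc

def repC (c : QV d) (G : Finset L.Ω) : Option G → QV d
  | none => c
  | some a => (L.v a.1).2

theorem repC_NJ (G : Finset L.Ω) (o : Option G) : repC c G o ∈ NJ d k := by
  cases o with
  | none => exact hc
  | some a => exact (hL.supp a.1).2

omit hL hc in
theorem exists_NJ_mul {x : QV d} (h1 : 0 ≤ x) (h2 : ∀ i : Fin d, (i:ℕ) < k → x i = 0) :
    ∃ n : ℕ, 0 < n ∧ n • x ∈ NJ d k := by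
  obtain ⟨n, hn, m, hm⟩ := common_den x h1
  refine ⟨n, hn, ⟨m, fun i => by rw [hm]; simp⟩, fun i hi => by simp [h2 i hi]⟩

theorem HH_loopM (hH : ∀ a, HH (L.P a)) : HH (loopM hL c) := by
  classical
  intro W W1
  let W' : Submodule ℚ (PairQ d) := W1 ⊓ W
  have hWW : W' ≤ W := inf_le_right
  have eU : dirC (infW (loopM hL c) W) ⊓ (W1 : PointedCone ℚ (PairQ d)) =
      dirC (infW (loopM hL c) W) ⊓ (W' : PointedCone ℚ (PairQ d)) := by
    apply le_antisymm
    · rintro v ⟨h1, h2⟩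
      exact ⟨h1, h2, dirC_mem_W h1⟩
    · rintro v ⟨h1, h2⟩
      exact ⟨h1, h2.1⟩
  rw [eU]
  obtain ⟨Y, hY, hYm'⟩ := max_supp (X := (RR hL c W : Set (QV d))) (zero_mem _) (fun x hx y hy => add_mem hx hy)
    Finset.univ (fun x hx i _ => by obtain ⟨_, _, h, _⟩ := hx; exact NJ.nonneg h.2.1 i)
  have hYm : ∀ i ∈ zs Y, ∀ X ∈ RR hL c W, X i = 0 := fun i hi => hYm' i (Finset.mem_univ _) (mem_zs.1 hi)
  obtain ⟨X, ⟨qh, hX⟩, hXm'⟩ := max_supp (X := {X | ∃ q, RD hL c W W' X q}) ⟨0, RD_zero hL⟩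
    (fun x ⟨q, hx⟩ y ⟨q', hy⟩ => ⟨q + q', RD_add hL hx hy⟩)
    Finset.univ (fun x ⟨q, hx⟩ i _ => NJ.nonneg hx.2.2.1 i)
  have hXm : ∀ i ∈ zs X, ∀ x q, RD hL c W W' x q → x i = 0 := fun i hi x q h =>
    hXm' i (Finset.mem_univ _) (mem_zs.1 hi) x ⟨q, h⟩
  have hXN := hX.2.2.1
  have hsub : ∀ i ∈ zs Y, i ∈ zs X := by
    intro i hi
    have h1 : ∀ t : ℕ, qh.2.2.2 + t • X ∈ RR hL c W := fun t =>
      ⟨_, _, (hX.2.2.2.2 t).1, (hX.2.2.2.2 t).2, W.add_mem hX.2.2.2.1 (nsmul_mem (hWW hX.1) t)⟩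
    have h2 := hYm i hi _ (h1 0)
    have h3 := hYm i hi _ (h1 1)
    simp at h2 h3
    rw [mem_zs]; linarith
  obtain ⟨G, hG, hG'⟩ := wqo_basis L.refl L.trans L.wqo {a | Oc c W k L a}
  let Wl : Submodule ℚ (PairQ d) := ((zeroOn d (zs Y)).prod (zeroOn d (zs Y))) ⊓
      (span ℚ (LinF hL c W Y X : Set (QV d))).comap (dispL d)
  let S1 : Option G → PointedCone ℚ (QV d) := fun o =>
    coneC (ZI k hL (zs Y) (repC c G o) (repC_NJ hL hc G o)) ⊓ (zeroOn d (zs X) : PointedCone ℚ (QV d))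
  let S2 : G → PointedCone ℚ (QV d) := fun a => PointedCone.map (dispL d) (dirC (infW (L.P a.1) Wl) ⊓
    ((zeroOn d (zs X)).prod (zeroOn d (zs X)) : Submodule ℚ (PairQ d)))
  let S : PointedCone ℚ (QV d) := (⨆ o, S1 o) ⊔ ⨆ a, S2 a
  have hS : HF S := (HF_iSup fun o => (stepOne hL hH _ _ le_rfl _ _).infW _).sup
    (HF_iSup fun a => ((hH a.1 Wl).infW _).map _)
  let J : Finset (Fin d) := Finset.univ.filter (fun i => (i:ℕ) < k)
  let D : PointedCone ℚ (PairQ d) := (Submodule.prod (PointedCone.positive ℚ (Fin d → ℚ)) (PointedCone.positive ℚ (Fin d → ℚ)) ⊓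
    ((W' ⊓ (zeroOn d J).prod (zeroOn d J) : Submodule ℚ (PairQ d)) : PointedCone ℚ (PairQ d))) ⊓ S.comap (dispL d)
  have hD : HF D := (((HF_of_FG FG_pos).prod (HF_of_FG FG_pos)).infW _).inf (hS.comap _)
  refine hD.fgcl.between ?_ ?_
  · rintro v ⟨hv, hvW⟩
    obtain ⟨x, y, hx, hy, hw, l, hl, N, hN, hp⟩ := dir_star hL hc hv
    suffices H : (N:ℚ) • v ∈ D by
      have := pc_smul (c := (N:ℚ)⁻¹) (by positivity) H
      rwa [inv_smul_smul₀ (by positivity)] at this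
    have hvW' : (N:ℚ) • v ∈ W' := W'.smul_mem _ hvW
    generalize (N:ℚ) • v = v' at hp hvW'
    obtain ⟨u0, u0'⟩ := v'
    have hpN := PR_NJ hL _ _ hp
    refine ⟨⟨⟨NJ.nonneg hpN.1, NJ.nonneg hpN.2⟩, hvW', fun i hi => hpN.1.2 i (by simpa [J] using hi),
      fun i hi => hpN.2.2 i (by simpa [J] using hi)⟩, ?_⟩
    change dispL d (u0, u0') ∈ S
    have e0 : dispL d (u0, u0') = u0' - u0 := rfl
    rw [e0]
    -- the loop part
    have loopPart : ∀ (q u u' : QV d) (o : Option G), q ∈ NJ d k → (∀ i ∈ zs Y, q i = repC c G o i) →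
        (∀ t : ℕ, Rch L k (c + (x + t • u0)) (q + t • u)) → (u, u') ∈ loopM hL q →
        (∀ t : ℕ, Rch L k (q + t • u') (c + (y + t • u0'))) → u' - u ∈ S := by
      intro q u u' o hq ho pre hlp suf
      have hlt : ∀ t : ℕ, Rch L k (q + t • u) (q + t • u') := fun t => (nsmul_mem hlp t).2.2 hq
      have r1 := RD_mid hL hc hx hy hpN.1 hpN.2 hlp.1 hw hvW' pre (fun t => (hlt t).trans hL (suf t))
      have r2 := RD_mid hL hc hx hy hpN.1 hpN.2 hlp.2.1 hw hvW' (fun t => (pre t).trans hL (hlt t)) suf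
      refine Submodule.mem_sup_left (Submodule.mem_iSup_of_mem o ⟨subset_coneC ⟨fun i hi => ?_, q + u, fun i hi => ?_, ?_⟩,
        fun i hi => ?_⟩)
      · have a : u i = 0 := hXm i (hsub i hi) _ _ r1
        have b : u' i = 0 := hXm i (hsub i hi) _ _ r2
        simp [a, b]
      · have a : u i = 0 := hXm i (hsub i hi) _ _ r1
        simp [a, ho i hi]
      · exact (hlp.2.2 hq).cast hL rfl (by abel)
      · have a : u i = 0 := hXm i hi _ _ r1
        have b : u' i = 0 := hXm i hi _ _ r2
        simp [a, b]
    have key : ∀ (l : List L.Ω) (q u : QV d) (o : Option G), q ∈ NJ d k → (∀ i ∈ zs Y, q i = repC c G o i) →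
        IsRun L q l (c + y) → (u, u0') ∈ PR hL q l →
        (∀ t : ℕ, Rch L k (c + (x + t • u0)) (q + t • u)) → u0' - u ∈ S := by
      intro l
      induction l with
      | nil =>
        intro q u o hq ho hr hp pre
        have hr' : q = c + y := hr
        refine loopPart q u u0' o hq ho pre hp fun t => ?_
        have := Rch.refl hL ((pre t).trans hL (PR_rch hL hc hq hr hp t) |>.right hL)
        exact this.cast hL (by rw [hr']) (by abel)
      | cons a l ih =>
        intro q u o hq ho hr hp pre
        obtain ⟨hqa, hr2⟩ := hr
        obtain ⟨y1, hp1, y2, hp2, hp3⟩ := hp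
        change (u, y1) ∈ loopM hL q at hp1
        change (y2, u0') ∈ PR hL (L.v a).2 l at hp3
        change (y1, y2) ∈ L.P a at hp2
        have ha2 := (hL.supp a).2
        have pre1 : ∀ t : ℕ, Rch L k (c + (x + t • u0)) (q + t • y1) := fun t =>
          (pre t).trans hL ((nsmul_mem hp1 t).2.2 hq)
        have suf2 : ∀ t : ℕ, Rch L k ((L.v a).2 + t • y2) (c + (y + t • u0')) := fun t =>
          (PR_rch hL hc ha2 hr2 hp3 t).cast hL rfl (by abel)
        have lab : ∀ t : ℕ, Rch L k (q + t • y1) ((L.v a).2 + t • y2) := fun t => by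
          obtain ⟨b, hb, hvb⟩ := Sys.mem_P.1 (nsmul_mem hp2 t)
          have := Rch.label hL b
          rw [hvb] at this
          rw [← hqa]; exact this
        have suf1 : ∀ t : ℕ, Rch L k (q + t • y1) (c + (y + t • u0')) := fun t => (lab t).trans hL (suf2 t)
        have pre2 : ∀ t : ℕ, Rch L k (c + (x + t • u0)) ((L.v a).2 + t • y2) := fun t => (pre1 t).trans hL (lab t)
        have hlp := loopPart q u y1 o hq ho pre hp1 suf1
        have occ : ∀ (t : ℕ) (b : L.Ω), L.v b = L.v a + t • (y1, y2) → Oc c W k L b := by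
          intro t b hvb
          refine ⟨x + t • u0, add_mem hx (nsmul_mem hpN.1 t), y + t • u0', add_mem hy (nsmul_mem hpN.2 t),
            W.add_mem hw (nsmul_mem (hWW hvW') t), ?_, ?_⟩
          · rw [hvb, Prod.fst_add, hqa]; exact pre1 t
          · rw [hvb]; exact suf2 t
        have occa : Oc c W k L a := occ 0 a (by simp)
        obtain ⟨b, hb, hba⟩ := hG' a occa
        have hdiff := oc_diff (X := X) hL hc hY hYm (hG b hb) occa hba
        have hrest := ih (L.v a).2 y2 (some ⟨b, hb⟩) ha2 (fun i hi => sub_eq_zero.1 (hdiff.2.1 i hi)) hr2 hp3 pre2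
        have hy12 := P_NJ hL hp2
        have r1 := RD_mid hL hc hx hy hpN.1 hpN.2 hy12.1 hw hvW' pre1 suf1
        have r2 := RD_mid hL hc hx hy hpN.1 hpN.2 hy12.2 hw hvW' pre2 suf2
        have hlab : y2 - y1 ∈ S := by
          refine Submodule.mem_sup_right (Submodule.mem_iSup_of_mem (⟨b, hb⟩ : G) ⟨(y1, y2), ⟨?_, ?_, ?_⟩, rfl⟩)
          · refine mem_dirC.2 ⟨1, one_pos, L.v a - L.v b, fun t => ?_⟩
            obtain ⟨b', hb', hvb'⟩ := Sys.mem_P.1 (nsmul_mem hp2 t)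
            have e : L.v a - L.v b + ((t * 1 : ℕ) : ℚ) • (y1, y2) = L.v b' - L.v b := by
              rw [hvb', mul_one, Nat.cast_smul_eq_nsmul]; abel
            rw [e]
            have hle := L.trans hba hb'
            have hd := oc_diff (X := X) hL hc hY hYm (hG b hb) (occ t b' hvb') hle
            exact ⟨Sys.sub_mem hle, ⟨hd.1, hd.2.1⟩, Submodule.subset_span hd.2.2⟩
          · exact fun i hi => hXm i hi _ _ r1
          · exact fun i hi => hXm i hi _ _ r2
        have := add_mem (add_mem hlp hlab) hrest
        convert this using 1
        abel
    refine key l (c + x) u0 none (add_mem hc hx) (fun i hi => ?_) hl hp (fun t => ?_)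
    · have : x i = 0 := hYm i hi x ⟨x, y, lm_refl hL hx, lm_mk hL hx hy ⟨add_mem hc hx, l, hl⟩, hw⟩
      simp [repC, this]
    · exact (Rch.refl hL (add_mem hc (add_mem hx (nsmul_mem hpN.1 t)))).cast hL rfl (by abel)
  · have hSA : S ≤ coneC (AtF hL c W Y X) := by
      refine sup_le (iSup_le fun o => ?_) (iSup_le fun a => ?_)
      · have hv : Vs c W k L (repC c G o) := by
          cases o with
          | none => exact ⟨0, zero_mem _, 0, zero_mem _, zero_mem _, by simpa [repC] using Rch.refl hL hc,
              by simpa [repC] using Rch.refl hL hc⟩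
          | some a => exact oc2 hL hc hY hYm (hG a.1 a.2)
        change coneC _ ⊓ (zeroOn d (zs X) : PointedCone ℚ (QV d)) ≤ _
        rw [← coneC_infW]
        refine coneC_le fun z hz => subset_coneC ?_
        exact atom_a hL hc hY hYm hXN _ hv hz.1 hz.2
      · rintro w ⟨p, ⟨h1, h2, h3⟩, rfl⟩
        exact atom_b hL hc hY hYm hXN (hG a.1 a.2) h1 h2
    rintro v ⟨⟨⟨v1, v2⟩, v3, v4, v5⟩, v6⟩
    obtain ⟨n1, hn1, a1⟩ := mem_coneC.1 (hSA v6)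
    obtain ⟨n2, hn2, a2⟩ := exists_NJ_mul (k := k) v1 (fun i hi => v4 i (by simpa [J] using hi))
    obtain ⟨n3, hn3, a3⟩ := exists_NJ_mul (k := k) v2 (fun i hi => v5 i (by simpa [J] using hi))
    rw [Nat.cast_smul_eq_nsmul] at a1
    have b1 : (n1 * n2 * n3) • v.1 ∈ NJ d k := by
      rw [show n1 * n2 * n3 = (n1 * n3) * n2 by ring, mul_smul]; exact nsmul_mem a2 _
    have b2 : (n1 * n2 * n3) • v.2 ∈ NJ d k := by
      rw [mul_smul]; exact nsmul_mem a3 _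
    have b3 : (n1 * n2 * n3) • v.2 - (n1 * n2 * n3) • v.1 ∈ AtF hL c W Y X := by
      rw [← smul_sub, show n1 * n2 * n3 = (n2 * n3) * n1 by ring, mul_smul]; exact nsmul_mem a1 _
    have := pump hL hc hWW hX hY b1 b2 (nsmul_mem v3 (n1 * n2 * n3)) b3
    have h2 := pc_smul (c := ((n1 * n2 * n3 : ℕ) : ℚ)⁻¹) (by positivity) this
    have e : ((n1 * n2 * n3) • v.1, (n1 * n2 * n3) • v.2) = ((n1 * n2 * n3 : ℕ) : ℚ) • v := by
      rw [Nat.cast_smul_eq_nsmul]; rfl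
    rw [e, inv_smul_smul₀ (by positivity)] at h2
    exact h2
end StepTwo


section Induct
variable {d : ℕ} (V : PVAS d)

def StepLt (k : ℕ) (x y : NVec d) : Prop := ∃ e, V.test e < k ∧ V.StepE e x y

def ZW (d k : ℕ) : Submodule ℚ (QV d) where
  carrier := {x | ∀ i : Fin d, (i:ℕ) < k → x i = 0}
  zero_mem' := fun i _ => rfl
  add_mem' := fun h1 h2 i hi => by simp [h1 i hi, h2 i hi]
  smul_mem' := fun c x h i hi => by simp [h i hi]

theorem qv_ZW {k : ℕ} {x : NVec d} : qv x ∈ ZW d k ↔ ∀ i : Fin d, (i:ℕ) < k → x i = 0 := by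
  constructor
  · intro h i hi
    have := h i hi
    simpa [qv] using this
  · intro h i hi
    simp [qv, h i hi]

theorem resSys_shift {k : ℕ} {S : Sys d} (W : Submodule ℚ (PairQ d)) (h : ShiftC k S)
    (hW : ∀ δ ∈ ZW d k, (δ, δ) ∈ W) : ShiftC k (resSys S W) := by
  intro a δ h1 h2
  rw [resSys_P]
  exact ⟨h _ δ h1 h2, hW δ h2⟩

variable {V}

theorem eqSys_good (k : ℕ) : Good V k (stepSys (d := d) 0 0) := by
  intro a
  refine ⟨stepSys_HH _ _ _, Fl_const [] (by simp) ?_ a⟩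
  rintro ⟨⟨x, y⟩, h1, h2⟩
  refine ⟨x, y, rfl, ?_⟩
  rw [flatw_nil]
  ext i
  have := h2 i
  simp at this
  omega

theorem eqSys_rel {x y : NVec d} : (stepSys (d := d) 0 0).rel x y ↔ x = y := by
  constructor
  · rintro ⟨⟨⟨x', y'⟩, h1, h2⟩, h⟩
    have h' : (qv x', qv y') = (qv x, qv y) := h
    rw [Prod.mk.injEq] at h'
    obtain rfl := qv_inj h'.1
    obtain rfl := qv_inj h'.2
    ext i
    have := h2 i
    simp at this
    omega
  · rintro rfl
    exact ⟨⟨(x, x), by simp, by simp⟩, rfl⟩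

theorem edgeSys_good (k : ℕ) (e : V.E) (h : V.test e ≤ k) : Good V k (stepSys (V.upd e) (V.test e)) := by
  intro a
  refine ⟨stepSys_HH _ _ _, Fl_const [[e]] (by simpa using h) ?_ a⟩
  rintro ⟨⟨x, y⟩, h1, h2⟩
  refine ⟨x, y, rfl, y, Relation.ReflTransGen.single ⟨y, ⟨h1, h2⟩, rfl⟩, rfl⟩

theorem edgeSys_rel (e : V.E) {x y : NVec d} :
    (stepSys (V.upd e) (V.test e)).rel x y ↔ V.StepE e x y := by
  constructor
  · rintro ⟨⟨⟨x', y'⟩, h1, h2⟩, h⟩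
    have h' : (qv x', qv y') = (qv x, qv y) := h
    rw [Prod.mk.injEq] at h'
    obtain rfl := qv_inj h'.1
    obtain rfl := qv_inj h'.2
    exact ⟨h1, h2⟩
  · rintro ⟨h1, h2⟩
    exact ⟨⟨(x, y), h1, h2⟩, rfl⟩

theorem run_sound {T : Sys d} {R : NVec d → NVec d → Prop} (hT : ∀ x y, T.rel x y → R x y) :
    ∀ (l : List T.Ω) {x y : NVec d}, IsRun T (qv x) l (qv y) → Relation.ReflTransGen R x y := by
  intro l
  induction l with
  | nil => intro x y h; rw [qv_inj h]
  | cons a l ih =>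
    intro x y h
    obtain ⟨z, hz⟩ := orth_qv (T.nat a).2
    have h2 := h.2
    rw [hz] at h2
    exact Relation.ReflTransGen.head (hT x z ⟨a, Prod.ext h.1 hz⟩) (ih h2)

theorem levelSys (k : ℕ) : ∃ S : Sys d, Good V k S ∧ ShiftC k S ∧
    ∀ x y, S.rel x y ↔ Relation.ReflTransGen (StepLt V k) x y := by
  induction k with
  | zero =>
    refine ⟨stepSys 0 0, eqSys_good 0, stepSys_shift _ _ _ le_rfl, fun x y => ?_⟩
    rw [eqSys_rel]
    constructor
    · rintro rfl; exact Relation.ReflTransGen.refl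
    · intro h
      induction h with
      | refl => rfl
      | tail _ h _ => obtain ⟨e, he, _⟩ := h; omega
  | succ k ih =>
    obtain ⟨S, hg, hs, hr⟩ := ih
    have := V.fintypeE
    let G : Sys d := unionSys (fun e : {e : V.E // V.test e = k} =>
      compSys (stepSys (V.upd e.1) (V.test e.1)) S)
    have Gg : Good V k G := unionSys_good fun e => compSys_good (edgeSys_good k _ e.2.le) hg
    have Gs : ShiftC k G := unionSys_shift fun e => compSys_shift (stepSys_shift _ _ _ e.2.le) hs
    have Gr : ∀ x y, G.rel x y ↔ ∃ e, V.test e = k ∧ ∃ z, V.StepE e x z ∧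
        Relation.ReflTransGen (StepLt V k) z y := by
      intro x y
      simp only [G, unionSys_rel, compSys_rel, edgeSys_rel, hr, Subtype.exists, exists_prop]
    let T : Sys d := resSys G ((ZW d k).prod (ZW d k))
    have Tg : Good V k T := resSys_good _ Gg
    have Ts : ShiftC k T := resSys_shift _ Gs fun δ h => ⟨h, h⟩
    have Tr : ∀ x y, T.rel x y ↔ G.rel x y ∧ qv x ∈ ZW d k ∧ qv y ∈ ZW d k := by
      intro x y
      exact resSys_rel
    have hL : Lab T k := ⟨fun a => ⟨⟨(T.nat a).1, a.2.1⟩, ⟨(T.nat a).2, a.2.2⟩⟩,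
      fun a δ h => Ts a δ h.1 h.2⟩
    have Qg : Good V k (starSys hL) :=
      starSys_good hL Tg fun c hc => HH_loopM hL hc fun a => (Tg a).1
    let S' : Sys d := resSys S (Submodule.prod ⊤ (ZW d k))
    let N : Sys d := compSys S' (compSys (starSys hL) G)
    have Ng : Good V k N := compSys_good (resSys_good _ hg) (compSys_good Qg Gg)
    have Ns : ShiftC k N := compSys_shift (resSys_shift _ hs fun δ h => ⟨trivial, h⟩)
      (compSys_shift (starSys_shift hL) Gs)
    have Nr : ∀ x y, N.rel x y ↔ ∃ u, (Relation.ReflTransGen (StepLt V k) x u ∧ qv u ∈ ZW d k) ∧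
        ∃ w, Rch T k (qv u) (qv w) ∧ G.rel w y := by
      intro x y
      simp only [N, compSys_rel, S', resSys_rel, hr, starSys_rel]
      simp
    refine ⟨unionSys (fun b : Bool => if b then S else N), ?_, ?_, fun x y => ?_⟩
    · exact (unionSys_good fun b => by cases b; exacts [Ng, hg]).mono (Nat.le_succ _)
    · exact (unionSys_shift fun b => by cases b; exacts [Ns, hs]).mono (Nat.le_succ _)
    · have e : (unionSys (fun b : Bool => if b then S else N)).rel x y ↔ S.rel x y ∨ N.rel x y := by
        rw [unionSys_rel]
        simp [or_comm]
      rw [e, hr, Nr]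
      have up : ∀ {x y}, Relation.ReflTransGen (StepLt V k) x y →
          Relation.ReflTransGen (StepLt V (k+1)) x y := fun h =>
        Relation.ReflTransGen.mono (p := StepLt V (k+1)) (fun a b ⟨e, h1, h2⟩ => ⟨e, by omega, h2⟩) _ _ h
      have gup : ∀ x y, G.rel x y → Relation.ReflTransGen (StepLt V (k+1)) x y := by
        intro x y h
        obtain ⟨e, h1, z, h2, h3⟩ := (Gr x y).1 h
        exact Relation.ReflTransGen.head ⟨e, by omega, h2⟩ (up h3)
      constructor
      · rintro (h | ⟨u, ⟨h1, _⟩, w, ⟨_, l, h3⟩, h4⟩)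
        · exact up h
        · refine (up h1).trans (Relation.ReflTransGen.trans ?_ (gup _ _ h4))
          have := run_sound (fun x y h => gup x y ((Tr x y).1 h).1) l h3
          rwa [Relation.reflTransGen_idem] at this
      · intro h
        clear e
        induction h using Relation.ReflTransGen.head_induction_on with
        | refl => exact Or.inl Relation.ReflTransGen.refl
        | head h1 hrest ih =>
          rename_i a c
          obtain ⟨e, he, hst⟩ := h1
          by_cases hk : V.test e < k
          · have hst' : StepLt V k a c := ⟨e, hk, hst⟩
            rcases ih with h | ⟨u, ⟨h1, h2⟩, w, h3, h4⟩
            · exact Or.inl (h.head hst')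
            · exact Or.inr ⟨u, ⟨h1.head hst', h2⟩, w, h3, h4⟩
          · have hk' : V.test e = k := by omega
            have ha : qv a ∈ ZW d k := qv_ZW.2 fun i hi => hst.1 i (by omega)
            right
            rcases ih with h | ⟨u, ⟨h1, h2⟩, w, h3, h4⟩
            · exact ⟨a, ⟨Relation.ReflTransGen.refl, ha⟩, a, Rch.refl hL ⟨qv_orth _, ha⟩,
                (Gr _ _).2 ⟨e, hk', c, hst, h⟩⟩
            · obtain ⟨b, hb⟩ := (Tr a u).2 ⟨(Gr _ _).2 ⟨e, hk', c, hst, h1⟩, ha, h2⟩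
              have := Rch.label hL b
              rw [hb] at this
              exact ⟨a, ⟨Relation.ReflTransGen.refl, ha⟩, w, this.trans hL h3, h4⟩

theorem reachSys : ∃ S : Sys d, Good V (d+1) S ∧ ∀ x y, S.rel x y ↔ V.Reach x y := by
  obtain ⟨S, h1, _, h2⟩ := levelSys (V := V) (d+1)
  refine ⟨S, h1, fun x y => ?_⟩
  rw [h2]
  have : StepLt V (d+1) = V.Step := by
    ext x y
    exact ⟨fun ⟨e, _, h⟩ => ⟨e, h⟩, fun ⟨e, h⟩ => ⟨e, by have := V.test_le e; omega, h⟩⟩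
  rw [this]; rfl
end Induct


section Final
variable {d : ℕ}

theorem castPQ_qv (p : PairN d) : castPQ p = (qv p.1, qv p.2) := rfl

theorem castPQ_inj {p q : PairN d} (h : castPQ p = castPQ q) : p = q := by
  rw [castPQ_qv, castPQ_qv, Prod.mk.injEq] at h
  exact Prod.ext (qv_inj h.1) (qv_inj h.2)

theorem castPQ_add (p q : PairN d) : castPQ (p + q) = castPQ p + castPQ q := by
  rw [castPQ_qv, Prod.fst_add, Prod.snd_add, qv_add, qv_add]; rfl

theorem castPQ_zero : castPQ (0 : PairN d) = 0 := by
  ext i <;> simp [castPQ]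

def castHom : PairN d →+ PairQ d := ⟨⟨castPQ, castPQ_zero⟩, castPQ_add⟩

theorem castPQ_nsmul (n : ℕ) (p : PairN d) : castPQ (n • p) = n • castPQ p := map_nsmul castHom n p

theorem castPQ_sum {ι : Type} (s : Finset ι) (f : ι → PairN d) :
    castPQ (∑ i ∈ s, f i) = ∑ i ∈ s, castPQ (f i) := map_sum castHom f s

theorem nat2_cast {p : PairQ d} (h : p ∈ nat2 d) : ∃ q : PairN d, p = castPQ q := by
  obtain ⟨x, hx⟩ := orth_qv h.1
  obtain ⟨y, hy⟩ := orth_qv h.2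
  exact ⟨(x, y), Prod.ext hx hy⟩

def Pn (U : Sys d) (a : U.Ω) : Set (PairN d) := {p | castPQ p ∈ U.P a}

variable {U : Sys d} (a : U.Ω)

theorem Pn_periodic : IsPeriodic (Pn U a) := by
  refine ⟨?_, fun p hp q hq => ?_⟩
  · change castPQ 0 ∈ U.P a
    rw [castPQ_zero]; exact zero_mem _
  · change castPQ (p + q) ∈ U.P a
    rw [castPQ_add]; exact add_mem hp hq

theorem Pn_dir : dirSet (Pn U a) = (dirC (U.P a) : Set (PairQ d)) := by
  ext v
  constructor
  · rintro ⟨n, hn, x, h⟩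
    refine ⟨n, hn, castPQ x, fun k => ?_⟩
    obtain ⟨p, hp, e⟩ := h k
    rw [← e]; exact hp
  · rintro ⟨n, hn, x, h⟩
    have h0 := h 0
    simp only [zero_mul, Nat.cast_zero, zero_smul, add_zero] at h0
    obtain ⟨x', rfl⟩ := nat2_cast (Sys.P_nat h0)
    refine ⟨n, hn, x', fun k => ?_⟩
    obtain ⟨p, hp⟩ := nat2_cast (Sys.P_nat (h k))
    refine ⟨p, ?_, hp.symm⟩
    change castPQ p ∈ U.P a
    rw [← hp]; exact h k

theorem Pn_smooth (h : HH (U.P a)) : IsSmooth (Pn U a) := by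
  refine ⟨⟨?_, ?_⟩, ?_⟩
  · rw [Pn_dir]
    exact ⟨zero_mem _, fun u hu v hv => add_mem hu hv, fun u hu l hl => pc_smul hl.le hu⟩
  · rw [Pn_dir]; exact h.hfdir.qdef
  · intro p hp
    obtain ⟨φ, h1, h2⟩ := Sys.wd a (fun m => castPQ (p m)) hp
    refine ⟨φ, h1, fun j k hjk t => ?_⟩
    have h3 := h2 j k hjk t
    obtain ⟨q, hq⟩ := nat2_cast (Sys.P_nat h3)
    refine ⟨q, ?_, hq.symm⟩
    change castPQ q ∈ U.P a
    rw [← hq]; exact h3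

theorem FlatRel_iUnion {V : PVAS d} {k : ℕ} {ι : Type} (R : ι → Set (PairQ d))
    (h : ∀ i, FlatRel V k (R i)) (s : Finset ι) : FlatRel V k {z | ∃ i ∈ s, z ∈ R i} := by
  classical
  induction s using Finset.induction_on with
  | empty => exact ⟨[], by simp, by simp⟩
  | insert j s _ ih =>
    obtain ⟨w1, a1, b1⟩ := h j
    obtain ⟨w2, a2, b2⟩ := ih
    refine ⟨w1 ++ w2, fun w hw => ?_, ?_⟩
    · rcases List.mem_append.1 hw with h | h
      · exact a1 w h
      · exact a2 w h
    · rintro z ⟨i, hi, hz⟩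
      rcases Finset.mem_insert.1 hi with rfl | hi
      · obtain ⟨x, y, e, f⟩ := b1 z hz
        exact ⟨x, y, e, flatw_append f (flatw_refl _ _)⟩
      · obtain ⟨x, y, e, f⟩ := b2 z ⟨i, hi, hz⟩
        exact ⟨x, y, e, flatw_append (flatw_refl _ _) f⟩

theorem amalg_finset {r : ℕ} (σ : Fin r → U.Ω) (hσ : ∀ i, U.le a (σ i)) (s : Finset (Fin r)) :
    ∃ e, U.le a e ∧ ∀ i ∈ s, U.le (σ i) e := by
  classical
  induction s using Finset.induction_on with
  | empty => exact ⟨a, U.refl a, by simp⟩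
  | insert j s _ ih =>
    obtain ⟨e, h1, h2⟩ := ih
    obtain ⟨e', h3, h4, _⟩ := U.amalg h1 (hσ j)
    refine ⟨e', U.trans h1 h3, fun i hi => ?_⟩
    rcases Finset.mem_insert.1 hi with rfl | hi
    · exact h4
    · exact U.trans (h2 i hi) h3

theorem Pn_flat {V : PVAS d} {k : ℕ} (hg : Good V k U) {b : PairN d} (hb : castPQ b = U.v a)
    {L : Set (PairN d)} (hL : IsLinSet L) (hLP : L ⊆ (b + ·) '' Pn U a) :
    ∃ p ∈ Pn U a, Flattable V ((p + ·) '' L) := by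
  classical
  obtain ⟨l, r, g, rfl⟩ := hL
  have mem : ∀ c : Fin r → ℕ, ∃ q ∈ U.P a, castPQ l + ∑ i, c i • castPQ (g i) = U.v a + q := by
    intro c
    obtain ⟨q, hq, e⟩ := hLP ⟨c, rfl⟩
    refine ⟨castPQ q, hq, ?_⟩
    rw [← hb, ← castPQ_add]
    change b + q = _ at e
    rw [e, castPQ_add, castPQ_sum]
    simp only [castPQ_nsmul]
  have per : ∀ i, ∃ (σ : U.Ω) (n : ℕ), U.le a σ ∧ 0 < n ∧ n • castPQ (g i) ∈ U.P σ := by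
    intro i
    have h1 : ∀ t : ℕ, ∃ τ, U.le a τ ∧ U.v τ = castPQ l + t • castPQ (g i) := by
      intro t
      obtain ⟨q, ⟨τ, hτ, e'⟩, e⟩ := mem (Pi.single i t)
      refine ⟨τ, hτ, ?_⟩
      rw [e', ← e]
      congr 1
      rw [Finset.sum_eq_single i]
      · simp
      · intro j _ hj; simp [Pi.single_eq_of_ne hj]
      · simp
    choose τ hτ eτ using h1
    obtain ⟨m, n, hmn, hle⟩ := U.wqo τ
    refine ⟨τ m, n - m, hτ m, by omega, ?_⟩
    have := Sys.sub_mem hle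
    rw [eτ, eτ] at this
    convert this using 1
    obtain ⟨s, rfl⟩ := Nat.exists_eq_add_of_lt hmn
    rw [show m + s + 1 - m = s + 1 by omega, show m + s + 1 = m + (s + 1) by omega, add_nsmul _ m (s + 1)]
    abel
  choose σ N hσ hN hp using per
  obtain ⟨e, he, hse⟩ := amalg_finset a σ hσ Finset.univ
  obtain ⟨A, hA⟩ := (hg e).2 r (fun i => N i • castPQ (g i))
    (fun i => Sys.P_le (hse i (Finset.mem_univ _)) (hp i))
  have hps : U.v e - U.v a + A • ∑ i, N i • castPQ (g i) ∈ U.P a :=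
    Sys.P_shift he (nsmul_mem (sum_mem fun i _ => Sys.P_le (hse i (Finset.mem_univ _)) (hp i)) _)
  obtain ⟨p', hp'⟩ := nat2_cast (Sys.P_nat hps)
  rw [hp'] at hps
  refine ⟨p', hps, ?_⟩
  choose q hq eq using mem
  obtain ⟨ws, _, hws⟩ := FlatRel_iUnion (ι := ∀ i, Fin (N i)) _ (fun ρ => hA (q fun i => (ρ i : ℕ))
    (Sys.P_le he (hq _))) Finset.univ
  refine ⟨ws, ?_⟩
  rintro _ ⟨_, ⟨c, rfl⟩, rfl⟩
  obtain ⟨x, y, e1, e2⟩ := hws (castPQ (p' + (l + ∑ i, c i • g i)))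
    ⟨fun i => ⟨c i % N i, Nat.mod_lt _ (hN i)⟩, Finset.mem_univ _, fun i => c i / N i, by
      have h1 := eq (fun i => c i % N i)
      have h2 : ∑ i, c i • castPQ (g i) = ∑ i, (c i % N i) • castPQ (g i) +
          ∑ i, (c i / N i) • N i • castPQ (g i) := by
        rw [← Finset.sum_add_distrib]
        refine Finset.sum_congr rfl fun i _ => ?_
        rw [← mul_smul, ← add_smul, mul_comm, Nat.mod_add_div]
      rw [castPQ_add, castPQ_add, castPQ_sum, ← hp']
      simp only [castPQ_nsmul]
      rw [h2, ← add_assoc (castPQ l), h1]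
      abel⟩
  rw [castPQ_qv, Prod.mk.injEq] at e1
  change flatw V ws (p' + (l + ∑ i, c i • g i)).1 (p' + (l + ∑ i, c i • g i)).2
  rw [qv_inj e1.1, qv_inj e1.2]
  exact e2

end Final

theorem main_aux {d : ℕ} (V : PVAS d)
    (S : Set (PairN d)) (hS : IsSemilinSet S) :
    ∃ (n : ℕ) (b : Fin n → PairN d) (P : Fin n → Set (PairN d)),
      (∀ i, IsPeriodic (P i) ∧ IsSmooth (P i)) ∧
      {p : PairN d | V.Reach p.1 p.2} ∩ S = ⋃ i, (b i + ·) '' P i ∧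
      ∀ i, ∀ L : Set (PairN d), IsLinSet L → L ⊆ (b i + ·) '' P i →
        ∃ p ∈ P i, Flattable V ((p + ·) '' L) := by
  obtain ⟨n, Ls, hLs, rfl⟩ := hS
  choose β r g hβ using hLs
  obtain ⟨R, hRg, hRr⟩ := reachSys (V := V)
  let U : Sys d := unionSys fun i => linSys R (castPQ (β i)) (fun j => castPQ (g i j))
  have hU : Good V (d+1) U := unionSys_good fun i => linSys_good _ _ hRg
  have hUr : ∀ p : PairN d, (∃ a, U.v a = castPQ p) ↔ V.Reach p.1 p.2 ∧ p ∈ ⋃ i, Ls i := by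
    intro p
    change U.rel p.1 p.2 ↔ _
    simp only [U, unionSys_rel, linSys_rel, hRr, Set.mem_iUnion]
    have key : ∀ i, p ∈ Ls i ↔ ∃ c : Fin (r i) → ℕ,
        (qv p.1, qv p.2) = castPQ (β i) + ∑ j, c j • castPQ (g i j) := by
      intro i
      rw [hβ i]
      refine exists_congr fun c => ?_
      have e : castPQ (β i) + ∑ j, c j • castPQ (g i j) = castPQ (β i + ∑ j, c j • g i j) := by
        rw [castPQ_add, castPQ_sum]
        simp only [castPQ_nsmul]
      rw [e, ← castPQ_qv]
      exact ⟨fun h => by rw [h], castPQ_inj⟩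
    simp only [key]
    exact ⟨fun ⟨i, h1, h2⟩ => ⟨h1, i, h2⟩, fun ⟨h1, i, h2⟩ => ⟨i, h1, h2⟩⟩
  obtain ⟨F, _, hF⟩ := wqo_basis U.refl U.trans U.wqo Set.univ
  have hb : ∀ a, ∃ b : PairN d, castPQ b = U.v a := fun a => by
    obtain ⟨b, h⟩ := nat2_cast (U.nat a)
    exact ⟨b, h.symm⟩
  choose b hb using hb
  let f : Fin F.card → U.Ω := fun i => (F.equivFin.symm i).1
  refine ⟨F.card, fun i => b (f i), fun i => Pn U (f i),
    fun i => ⟨Pn_periodic _, Pn_smooth _ (hU _).1⟩, ?_, fun i L hL hLP => Pn_flat _ hU (hb _) hL hLP⟩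
  ext p
  have : p ∈ {p : PairN d | V.Reach p.1 p.2} ∩ ⋃ i, Ls i ↔ _ := (hUr p).symm
  rw [this, Set.mem_iUnion]
  constructor
  · rintro ⟨a, ha⟩
    obtain ⟨a0, h0, h1⟩ := hF a trivial
    refine ⟨F.equivFin ⟨a0, h0⟩, ?_⟩
    have e : f (F.equivFin ⟨a0, h0⟩) = a0 := by simp [f]
    simp only [e]
    have h2 := Sys.sub_mem h1
    obtain ⟨q, hq⟩ := nat2_cast (Sys.P_nat h2)
    refine ⟨q, ?_, ?_⟩
    · change castPQ q ∈ U.P a0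
      rw [← hq]; exact h2
    · apply castPQ_inj
      rw [castPQ_add, ← hq, hb, ha]
      abel
  · rintro ⟨i, q, ⟨c, hc, hc'⟩, rfl⟩
    refine ⟨c, ?_⟩
    rw [castPQ_add, hb, hc']

/-- For a PVAS `V` and a semilinear relation `S`, the intersection of
the reachability relation with `S` is a finite union of relations `b_i + P_i`, with
each `P_i` a smooth periodic relation such that every linear relation `L ⊆ b_i + P_i`
admits `p ∈ P_i` with `p + L` flattable with respect to `V`. -/
theorem pvas_reach_inter_semilinear_decomposition {d : ℕ} (V : PVAS d)
    (S : Set (PairN d)) (hS : IsSemilinSet S) :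
    ∃ (n : ℕ) (b : Fin n → PairN d) (P : Fin n → Set (PairN d)),
      (∀ i, IsPeriodic (P i) ∧ IsSmooth (P i)) ∧
      {p : PairN d | V.Reach p.1 p.2} ∩ S = ⋃ i, (b i + ·) '' P i ∧
      ∀ i, ∀ L : Set (PairN d), IsLinSet L → L ⊆ (b i + ·) '' P i →
        ∃ p ∈ P i, Flattable V ((p + ·) '' L) := by
  exact main_aux V S hS
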